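/- Balayage (interior smoothness of s-harmonic functions): let u : ℝⁿ → ℝ be bounded and measurable, let x_c ∈ ℝⁿ and R > 0, and suppose that for every x in the open ball B_R(x_c) the value (−Δ)^s u(x) exists and equals 0. Then u is infinitely differentiable on B_{R/2}(x_c). -/

import Mathlib

open MeasureTheory Metric Set Filter

/-- `fracLapEq n s u x g` : the integral fractional Laplacian `(−Δ)^s u(x)` exists
(as a principal value) and equals `g`, i.e. the limit as `ε → 0⁺` of
`C_{n,s} ∫_{|y−x|>ε} (u(x) − u(y)) / |x−y|^{n+2s} dy` exists and equals `g`,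
where `C_{n,s} = 2^{2s} s Γ(s+n/2) / (π^{n/2} Γ(1−s))`. -/
def fracLapEq (n : ℕ) (s : ℝ) (u : EuclideanSpace ℝ (Fin n) → ℝ)
    (x : EuclideanSpace ℝ (Fin n)) (g : ℝ) : Prop :=
  Tendsto (fun ε : ℝ =>
      (2 ^ (2 * s) * s * Real.Gamma (s + n / 2) /
          (Real.pi ^ ((n : ℝ) / 2) * Real.Gamma (1 - s))) *
        ∫ y in {y : EuclideanSpace ℝ (Fin n) | ε < dist y x},
          (u x - u y) / dist x y ^ ((n : ℝ) + 2 * s))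
    (nhdsWithin 0 (Ioi 0)) (nhds g)

/-!
Write `L = (-Δ)^s`. A principal value carries no a priori regularity, so the equation `L u = 0` is
first upgraded to its weak form, and smoothness is then read off from the heat semigroup `P_t`.

* *Continuity.* Where `L u` exists and vanishes, the averages of `u` over dyadic annuli around `x`
  converge to `u x` with error `O(r^(2s))`, with a constant depending on `x`. By Baire's theorem the
  constant is uniform on a relatively open part of every closed set; touching `u` there by scaled
  bumps shows that no point of discontinuity can remain.
* *Weak equation.* For continuous `u` the inf-convolutions converge to `u`, touch it from below at
  nearby points and are semiconcave. They therefore inherit an approximate pointwise inequality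
  that, unlike the principal value of `u`, may be integrated by parts. Applied to `±u` in the limit
  this gives `∫ u * L φ = 0` for nonnegative test functions `φ`.
* *Smoothness.* The kernel `|z|^(-d-2s)` is a mixture of Gaussians, so `L P_t u` is, up to a
  constant, the Marchaud derivative of order `s` of `t ↦ P_t u`. Inverting this derivative expresses
  `u x` through `∫₀^∞ v^(-s) / (1 + v) * P_(1+v) u x dv` and `∫₀¹ t^(s-1) * L P_t u x dt`. In the
  second integral, the part of the heat kernel near the origin is an admissible test function and
  drops out by the weak equation, while the derivatives of the remaining part are bounded uniformly
  in `t ∈ (0, 1]`. Both integrals are thus smooth in `x`.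
-/

namespace FracHarmonic

open Module (finrank)
open scoped Topology

section Kernel

variable {E : Type*} [NormedAddCommGroup E] [InnerProductSpace ℝ E] {s r : ℝ}

/-- The kernel `|z|^(-d-2s)` of the fractional Laplacian, `d` being the dimension of `E`; at
`z = 0` it takes the junk value `0`. -/
noncomputable def fracKernel (s : ℝ) (z : E) : ℝ := ‖z‖ ^ (-(finrank ℝ E + 2 * s))

/-- The kernel of the fractional Laplacian restricted to `|z| > r`. -/
noncomputable def truncKernel (s r : ℝ) : E → ℝ := {z | r < ‖z‖}.indicator (fracKernel s)

/-- The kernel of the fractional Laplacian restricted to the annulus `r < |z| ≤ R`. -/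
noncomputable def annKernel (s r R : ℝ) : E → ℝ := truncKernel s r - truncKernel s R

lemma fracKernel_nonneg (z : E) : 0 ≤ fracKernel s z := Real.rpow_nonneg (norm_nonneg _) _

lemma fracKernel_pos {z : E} (hz : z ≠ 0) : 0 < fracKernel s z :=
  Real.rpow_pos_of_pos (norm_pos_iff.2 hz) _

lemma fracKernel_neg (z : E) : fracKernel s (-z) = fracKernel s z := by simp [fracKernel]

lemma truncKernel_of_lt {z : E} (hz : r < ‖z‖) : truncKernel s r z = fracKernel s z := by
  simp [truncKernel, hz]

lemma truncKernel_of_le {z : E} (hz : ‖z‖ ≤ r) : truncKernel s r z = 0 := by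
  simp [truncKernel, hz]

lemma truncKernel_nonneg (z : E) : 0 ≤ truncKernel s r z :=
  indicator_nonneg (fun z _ => fracKernel_nonneg z) z

lemma truncKernel_neg (z : E) : truncKernel s r (-z) = truncKernel s r z := by
  simp [truncKernel, indicator, fracKernel_neg]

lemma truncKernel_le_fracKernel (z : E) : truncKernel s r z ≤ fracKernel s z :=
  indicator_le_self' (fun z _ => fracKernel_nonneg z) z

lemma abs_truncKernel_le_fracKernel (z : E) : |truncKernel s r z| ≤ fracKernel s z :=
  (abs_of_nonneg (truncKernel_nonneg z)).trans_le (truncKernel_le_fracKernel z)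

lemma annKernel_of_mem {R : ℝ} {z : E} (hr : r < ‖z‖) (hR : ‖z‖ ≤ R) :
    annKernel s r R z = fracKernel s z := by
  simp [annKernel, truncKernel_of_lt hr, truncKernel_of_le hR]

lemma annKernel_of_notMem {R : ℝ} (hrR : r ≤ R) {z : E} (hz : ¬(r < ‖z‖ ∧ ‖z‖ ≤ R)) :
    annKernel s r R z = 0 := by
  rcases le_or_gt ‖z‖ r with h | h
  · simp [annKernel, truncKernel_of_le h, truncKernel_of_le (h.trans hrR)]
  · have hR : R < ‖z‖ := not_le.1 fun h' => hz ⟨h, h'⟩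
    simp [annKernel, truncKernel_of_lt h, truncKernel_of_lt hR]

lemma annKernel_nonneg {R : ℝ} (hrR : r ≤ R) (z : E) : 0 ≤ annKernel s r R z := by
  by_cases hz : r < ‖z‖ ∧ ‖z‖ ≤ R
  · simpa [annKernel_of_mem hz.1 hz.2] using fracKernel_nonneg z
  · exact (annKernel_of_notMem hrR hz).ge

lemma annKernel_neg {R : ℝ} (z : E) : annKernel s r R (-z) = annKernel s r R z := by
  simp [annKernel, truncKernel_neg]

lemma annKernel_le_fracKernel {R : ℝ} (z : E) : annKernel s r R z ≤ fracKernel s z :=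
  (sub_le_self _ (truncKernel_nonneg z)).trans (truncKernel_le_fracKernel z)

lemma abs_annKernel_le_fracKernel {R : ℝ} (hrR : r ≤ R) (z : E) :
    |annKernel s r R z| ≤ fracKernel s z :=
  (abs_of_nonneg (annKernel_nonneg hrR z)).trans_le (annKernel_le_fracKernel z)

lemma truncKernel_zero (hs : 0 < s) : (truncKernel s 0 : E → ℝ) = fracKernel s := by
  refine indicator_eq_self.2 fun z hz => norm_pos_iff.2 ?_
  rintro rfl
  have hexp : -((finrank ℝ E : ℝ) + 2 * s) ≠ 0 := neg_ne_zero.2 (by positivity)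
  exact hz (by rw [fracKernel, norm_zero, Real.zero_rpow hexp])

lemma fracKernel_smul (hr : 0 < r) (z : E) :
    fracKernel s (r • z) = r ^ (-(finrank ℝ E + 2 * s)) * fracKernel s z := by
  rw [fracKernel, norm_smul, Real.norm_of_nonneg hr.le, Real.mul_rpow hr.le (norm_nonneg _),
    fracKernel]

lemma fracKernel_le_of_mul_norm_le (hs : 0 < s) {c : ℝ} (hc : 0 < c) {z w : E} (hz : z ≠ 0)
    (h : c * ‖z‖ ≤ ‖w‖) : fracKernel s w ≤ c ^ (-(finrank ℝ E + 2 * s)) * fracKernel s z := by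
  have hexp : -((finrank ℝ E : ℝ) + 2 * s) ≤ 0 := by
    linarith [(finrank ℝ E).cast_nonneg (α := ℝ)]
  simpa [fracKernel, Real.mul_rpow hc.le (norm_nonneg z)] using
    Real.rpow_le_rpow_of_nonpos (mul_pos hc (norm_pos_iff.2 hz)) h hexp

lemma annKernel_le_annKernel_add (hs : 0 < s) {d L : ℝ} (hd : 0 < d) (hL : 10 * d ≤ L)
    {q : E} (hq : ‖q‖ ≤ 2 * d) (z : E) :
    annKernel s (4 * d) (2 * (4 * d)) z ≤
      (2 / 3) ^ (-(finrank ℝ E + 2 * s)) * annKernel s (2 * d) L (q + z) := by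
  by_cases hz : 4 * d < ‖z‖ ∧ ‖z‖ ≤ 2 * (4 * d)
  · have hlower : ‖z‖ ≤ ‖q + z‖ + ‖q‖ := by simpa using norm_sub_le (q + z) q
    have hupper := norm_add_le q z
    rw [annKernel_of_mem hz.1 hz.2, annKernel_of_mem (by linarith) (by linarith)]
    exact fracKernel_le_of_mul_norm_le hs (by norm_num) (norm_pos_iff.1 (by linarith)) (by linarith)
  · rw [annKernel_of_notMem (by linarith) hz]
    exact mul_nonneg (by positivity) (annKernel_nonneg (by linarith) _)

variable [MeasurableSpace E] [BorelSpace E]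

lemma measurable_fracKernel : Measurable (fracKernel s : E → ℝ) := by
  unfold fracKernel; fun_prop

lemma measurable_truncKernel : Measurable (truncKernel s r : E → ℝ) :=
  measurable_fracKernel.indicator (measurableSet_lt measurable_const measurable_norm)

lemma measurable_annKernel {R : ℝ} : Measurable (annKernel s r R : E → ℝ) :=
  measurable_truncKernel.sub measurable_truncKernel

variable [FiniteDimensional ℝ E]

lemma integral_comp_inv_smul_mul_fracKernel (hr : 0 < r) (f : E → ℝ) :
    ∫ z, f (r⁻¹ • z) * fracKernel s z = r ^ (-(2 * s)) * ∫ z, f z * fracKernel s z := by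
  have hker (z : E) : f (r⁻¹ • z) * fracKernel s z
      = r ^ (-(finrank ℝ E + 2 * s)) * (f (r⁻¹ • z) * fracKernel s (r⁻¹ • z)) := by
    conv_lhs => rw [← smul_inv_smul₀ hr.ne' z, fracKernel_smul hr, smul_inv_smul₀ hr.ne']
    ring
  simp_rw [hker]
  rw [integral_const_mul, Measure.integral_comp_inv_smul_of_nonneg volume
    (fun z => f z * fracKernel s z) hr.le, smul_eq_mul, ← mul_assoc, ← Real.rpow_natCast,
    ← Real.rpow_add hr]
  congr 2
  ring

variable (E) in
/-- The mass of the kernel of the fractional Laplacian outside the unit ball. -/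
noncomputable def tailMass (s : ℝ) : ℝ := ∫ z : E, truncKernel s 1 z

variable (E) in
/-- The integral of `min 1 |z|²` against the kernel of the fractional Laplacian. -/
noncomputable def levyMass (s : ℝ) : ℝ := ∫ z : E, min 1 (‖z‖ ^ 2) * fracKernel s z

lemma integral_truncKernel (hr : 0 < r) :
    ∫ z : E, truncKernel s r z = tailMass E s * r ^ (-(2 * s)) := by
  have hind (ρ : ℝ) (z : E) :
      truncKernel s ρ z = {z : E | ρ < ‖z‖}.indicator 1 z * fracKernel s z := by
    simp [truncKernel, indicator]
  have hscale (z : E) : {z : E | r < ‖z‖}.indicator (1 : E → ℝ) z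
      = {z : E | 1 < ‖z‖}.indicator 1 (r⁻¹ • z) := by
    simp [indicator, norm_smul, abs_of_pos hr, lt_inv_mul_iff₀ hr]
  simp_rw [tailMass, hind]
  rw [mul_comm, ← integral_comp_inv_smul_mul_fracKernel hr]
  simp_rw [hscale]

lemma integral_min_norm_sq_div_mul_fracKernel (hr : 0 < r) :
    ∫ z : E, min 1 (‖z‖ ^ 2 / r ^ 2) * fracKernel s z = levyMass E s * r ^ (-(2 * s)) := by
  rw [levyMass, mul_comm, ← integral_comp_inv_smul_mul_fracKernel hr]
  simp [norm_smul, mul_pow, div_eq_inv_mul]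

lemma levyMass_nonneg : 0 ≤ levyMass E s :=
  integral_nonneg fun z => mul_nonneg (by positivity) (fracKernel_nonneg z)

variable [Nontrivial E]

lemma integrable_truncKernel (hs : 0 < s) (hr : 0 < r) : Integrable (truncKernel s r : E → ℝ) := by
  suffices h : Integrable fun z : E =>
      (Ioi r).indicator (fun t : ℝ => t ^ (-(finrank ℝ E + 2 * s))) ‖z‖ from
    h.congr (ae_of_all _ fun z => by simp [truncKernel, fracKernel, indicator])
  have hpow := (integrable_indicator_iff measurableSet_Ioi).2
    (integrableOn_Ioi_rpow_of_lt (show -1 - 2 * s < -1 by linarith) hr)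
  refine (integrable_fun_norm_addHaar volume).2
    (hpow.integrableOn.congr_fun (fun t (ht : 0 < t) => ?_) measurableSet_Ioi)
  by_cases htr : r < t
  · simp only [indicator, mem_Ioi, htr, if_true, smul_eq_mul]
    rw [← Real.rpow_natCast, ← Real.rpow_add ht, Nat.cast_pred Module.finrank_pos]
    ring_nf
  · simp [indicator, htr]

lemma integrable_annKernel (hs : 0 < s) (hr : 0 < r) {R : ℝ} (hR : 0 < R) :
    Integrable (annKernel s r R : E → ℝ) :=
  (integrable_truncKernel hs hr).sub (integrable_truncKernel hs hR)

lemma integrableOn_ball_norm_sq_mul_fracKernel (hs : s < 1) :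
    IntegrableOn (fun z : E => ‖z‖ ^ 2 * fracKernel s z) (ball 0 r) := by
  refine (integrableOn_fun_norm_addHaar volume
    (f := fun t : ℝ => t ^ 2 * t ^ (-(finrank ℝ E + 2 * s)))).2 ?_
  have hpow : IntegrableOn (fun t : ℝ => t ^ (1 - 2 * s)) (Ioo 0 r) := by
    rcases le_or_gt r 0 with h | h
    · simp [Ioo_eq_empty (not_lt.2 h)]
    · exact (intervalIntegral.integrableOn_Ioo_rpow_iff h).2 (by linarith)
  refine hpow.congr_fun (fun t ht => ?_) measurableSet_Ioo
  simp only [smul_eq_mul]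
  rw [← Real.rpow_natCast, ← Real.rpow_natCast, ← Real.rpow_add ht.1, ← Real.rpow_add ht.1,
    Nat.cast_pred Module.finrank_pos]
  push_cast
  ring_nf

lemma integrable_min_norm_sq_mul_fracKernel (hs0 : 0 < s) (hs1 : s < 1) :
    Integrable fun z : E => min 1 (‖z‖ ^ 2) * fracKernel s z := by
  have hnear := (integrable_indicator_iff (measurableSet_ball (x := (0 : E)) (ε := 2))).2
    (integrableOn_ball_norm_sq_mul_fracKernel hs1)
  refine (hnear.add (integrable_truncKernel hs0 one_pos)).mono'
    (by have := measurable_fracKernel (E := E) (s := s); fun_prop) (ae_of_all _ fun z => ?_)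
  have hk := fracKernel_nonneg (s := s) z
  rw [Real.norm_of_nonneg (mul_nonneg (by positivity) hk)]
  rcases le_or_gt ‖z‖ 1 with h | h
  · have hz : z ∈ ball (0 : E) 2 := by simpa using h.trans_lt one_lt_two
    simp only [Pi.add_apply, indicator_of_mem hz, truncKernel_of_le h, add_zero]
    exact mul_le_mul_of_nonneg_right (min_le_right _ _) hk
  · rw [Pi.add_apply, truncKernel_of_lt h]
    have := indicator_nonneg (s := ball (0 : E) 2)
      (fun w _ => mul_nonneg (sq_nonneg ‖w‖) (fracKernel_nonneg (s := s) w)) z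
    linarith [mul_le_mul_of_nonneg_right (min_le_left 1 (‖z‖ ^ 2)) hk]

lemma integrable_min_norm_sq_div_mul_fracKernel (hs0 : 0 < s) (hs1 : s < 1) (hr : 0 < r) :
    Integrable fun z : E => min 1 (‖z‖ ^ 2 / r ^ 2) * fracKernel s z := by
  refine (((integrable_min_norm_sq_mul_fracKernel (E := E) hs0 hs1).comp_smul
    (inv_ne_zero hr.ne')).const_mul (r ^ (-(finrank ℝ E + 2 * s)))).congr (ae_of_all _ fun z => ?_)
  dsimp only
  rw [mul_left_comm, ← fracKernel_smul hr, smul_inv_smul₀ hr.ne', norm_smul, mul_pow, norm_inv,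
    Real.norm_of_nonneg hr.le, inv_pow, ← div_eq_inv_mul]

lemma integral_annKernel (hs : 0 < s) (hr : 0 < r) {R : ℝ} (hR : 0 < R) :
    ∫ z : E, annKernel s r R z = tailMass E s * (r ^ (-(2 * s)) - R ^ (-(2 * s))) := by
  simp_rw [annKernel, Pi.sub_apply]
  rw [integral_sub (integrable_truncKernel hs hr) (integrable_truncKernel hs hR),
    integral_truncKernel hr, integral_truncKernel hR, mul_sub]

lemma tailMass_pos (hs : 0 < s) : 0 < tailMass E s := by
  refine (integral_pos_iff_support_of_nonneg truncKernel_nonneg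
    (integrable_truncKernel hs one_pos)).2 ?_
  have hsupp : {z : E | 1 < ‖z‖} ⊆ Function.support (truncKernel s 1) := fun z (hz : 1 < ‖z‖) =>
    (truncKernel_of_lt hz).trans_ne (fracKernel_pos (norm_pos_iff.1 (by linarith))).ne'
  exact ((isOpen_lt continuous_const continuous_norm).measure_pos volume
    (NormedSpace.exists_lt_norm ℝ E 1)).trans_le (measure_mono hsupp)

end Kernel

section SecondDifference

variable {E F : Type*} [NormedAddCommGroup E] [NormedAddCommGroup F] [NormedSpace ℝ F]

/-- Minus one half of the symmetric second difference of `f` at `x` in the direction `z`; the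
sign and factor are those with which it enters the fractional Laplacian. -/
noncomputable def secondDiff (f : E → F) (x z : E) : F :=
  f x - (1 / 2 : ℝ) • (f (x + z) + f (x - z))

lemma norm_secondDiff_le_of_norm_le {f : E → F} {C : ℝ} (hC : ∀ x, ‖f x‖ ≤ C) (x z : E) :
    ‖secondDiff f x z‖ ≤ 2 * C := by
  have hhalf : ‖(1 / 2 : ℝ) • (f (x + z) + f (x - z))‖ ≤ C := by
    rw [norm_smul, Real.norm_of_nonneg (by norm_num)]
    linarith [norm_add_le (f (x + z)) (f (x - z)), hC (x + z), hC (x - z)]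
  rw [secondDiff]
  linarith [norm_sub_le (f x) ((1 / 2 : ℝ) • (f (x + z) + f (x - z))), hC x]

variable [NormedSpace ℝ E]

lemma secondDiff_comp_smul_sub (f : E → F) (c : ℝ) (a x z : E) :
    secondDiff (fun y => f (c • (y - a))) x z = secondDiff f (c • (x - a)) (c • z) := by
  simp only [secondDiff, ← smul_add, ← smul_sub, add_sub_right_comm, sub_right_comm]

lemma norm_secondDiff_le_of_norm_iteratedFDeriv_two_le {f : E → F} (hf : ContDiff ℝ 2 f)
    {x z : E} {B : ℝ} (hB : ∀ y ∈ closedBall x ‖z‖, ‖iteratedFDeriv ℝ 2 f y‖ ≤ B) :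
    ‖secondDiff f x z‖ ≤ B * ‖z‖ ^ 2 := by
  have hx : x ∈ closedBall x ‖z‖ := mem_closedBall_self (norm_nonneg z)
  have hB0 : 0 ≤ B := (norm_nonneg _).trans (hB x hx)
  have hf' : ContDiff ℝ 1 (fderiv ℝ f) := hf.fderiv_right (by norm_num)
  have hfderiv : ∀ y ∈ closedBall x ‖z‖, ‖fderiv ℝ f y - fderiv ℝ f x‖ ≤ B * ‖z‖ := by
    intro y hy
    refine ((convex_closedBall x ‖z‖).norm_image_sub_le_of_norm_fderiv_le
      (fun w _ => hf'.differentiable one_ne_zero w) (fun w hw => ?_) hx hy).trans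
      (mul_le_mul_of_nonneg_left (mem_closedBall_iff_norm.1 hy) hB0)
    rw [← norm_iteratedFDeriv_one, norm_iteratedFDeriv_fderiv]
    exact hB w hw
  have htaylor : ∀ w : E, ‖w‖ = ‖z‖ → ‖f (x + w) - f x - fderiv ℝ f x w‖ ≤ B * ‖z‖ ^ 2 := by
    intro w hw
    have := (convex_closedBall x ‖z‖).norm_image_sub_le_of_norm_fderiv_le' (𝕜 := ℝ) (f := f)
      (fun y _ => hf.differentiable two_ne_zero y) hfderiv hx
      (show x + w ∈ closedBall x ‖z‖ by simp [hw])
    simpa [hw, sq, mul_assoc] using this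
  have hsplit : secondDiff f x z = -((1 / 2 : ℝ) • ((f (x + z) - f x - fderiv ℝ f x z) +
      (f (x + -z) - f x - fderiv ℝ f x (-z)))) := by
    rw [secondDiff, map_neg, sub_eq_add_neg x z]
    module
  rw [hsplit, norm_neg, norm_smul, Real.norm_of_nonneg (by norm_num)]
  linarith [norm_add_le (f (x + z) - f x - fderiv ℝ f x z) (f (x + -z) - f x - fderiv ℝ f x (-z)),
    htaylor z rfl, htaylor (-z) (norm_neg z)]

lemma norm_secondDiff_le_mul_min {f : E → F} {C B : ℝ} (hf : ContDiff ℝ 2 f)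
    (hC : ∀ x, ‖f x‖ ≤ C) (hB : ∀ x, ‖iteratedFDeriv ℝ 2 f x‖ ≤ B) (x z : E) :
    ‖secondDiff f x z‖ ≤ max (2 * C) B * min 1 (‖z‖ ^ 2) := by
  rw [mul_min_of_nonneg _ _ (le_max_of_le_right ((norm_nonneg _).trans (hB 0))), mul_one]
  exact le_min ((norm_secondDiff_le_of_norm_le hC x z).trans (le_max_left _ _))
    ((norm_secondDiff_le_of_norm_iteratedFDeriv_two_le hf fun y _ => hB y).trans (by
      gcongr; exact le_max_right _ _))

lemma exists_norm_secondDiff_le_min {f : E → F} (hf : ContDiff ℝ 2 f)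
    (hsupp : HasCompactSupport f) :
    ∃ C, 0 ≤ C ∧ ∀ x z, ‖secondDiff f x z‖ ≤ C * min 1 (‖z‖ ^ 2) := by
  obtain ⟨C, hC⟩ := hsupp.exists_bound_of_continuous hf.continuous
  obtain ⟨B, hB⟩ := (hsupp.iteratedFDeriv (𝕜 := ℝ) 2).exists_bound_of_continuous
    (hf.continuous_iteratedFDeriv le_rfl)
  exact ⟨max (2 * C) B, le_max_of_le_right ((norm_nonneg _).trans (hB 0)),
    norm_secondDiff_le_mul_min hf hC hB⟩

end SecondDifference

section Operators

variable {E : Type*} [NormedAddCommGroup E] [InnerProductSpace ℝ E] [FiniteDimensional ℝ E]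
  [MeasurableSpace E] [BorelSpace E] {κ κ' u v : E → ℝ} {M M' : ℝ}

/-- The correlation `x ↦ ∫ v (x + z) κ(z) dz` of `v` with the kernel `κ`. -/
noncomputable def shiftIntegral (κ v : E → ℝ) (x : E) : ℝ := ∫ z, v (x + z) * κ z

/-- The jump operator `x ↦ ∫ (v x - v (x + z)) κ(z) dz`; for `κ = truncKernel s ε` it is, up to
the normalising constant, the truncated integral whose limit at `ε → 0⁺` is `(-Δ)^s v (x)`. -/
noncomputable def jumpOp (κ v : E → ℝ) (x : E) : ℝ := ∫ z, (v x - v (x + z)) * κ z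

/-- The jump operator of an even kernel in symmetrised form; unlike `jumpOp` it also converges
absolutely for the singular kernel `fracKernel s` and smooth `v`, where it is a multiple of
`(-Δ)^s v`. -/
noncomputable def symmOp (κ v : E → ℝ) (x : E) : ℝ := ∫ z, secondDiff v x z * κ z

lemma integrable_comp_add_mul (hκ : Integrable κ) (hv : Measurable v) (hM : ∀ x, |v x| ≤ M)
    (x : E) : Integrable fun z => v (x + z) * κ z :=
  hκ.bdd_mul (hv.comp (measurable_const_add x)).aestronglyMeasurable (ae_of_all _ fun _ => hM _)

lemma integrable_jump_mul (hκ : Integrable κ) (hv : Measurable v) (hM : ∀ x, |v x| ≤ M) (x : E) :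
    Integrable fun z => (v x - v (x + z)) * κ z := by
  simpa only [sub_mul] using! (hκ.const_mul (v x)).sub (integrable_comp_add_mul hκ hv hM x)

lemma shiftIntegral_eq_integral_mul_comp_sub (x : E) :
    shiftIntegral κ v x = ∫ y, v y * κ (y - x) := by
  rw [shiftIntegral, ← integral_add_left_eq_self (fun y => v y * κ (y - x)) x]
  simp

lemma integrable_mul_comp_sub (hκ : Integrable κ) (hv : Measurable v) (hM : ∀ x, |v x| ≤ M)
    (x : E) : Integrable fun y => v y * κ (y - x) :=
  (hκ.comp_sub_right x).bdd_mul hv.aestronglyMeasurable (ae_of_all _ hM)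

lemma secondDiff_shiftIntegral (hκ : Integrable κ) (hv : Measurable v) (hM : ∀ x, |v x| ≤ M)
    (x z : E) : secondDiff (shiftIntegral κ v) x z = ∫ y, v y * secondDiff κ (y - x) z := by
  have hint := integrable_mul_comp_sub hκ hv hM
  simp only [secondDiff, shiftIntegral_eq_integral_mul_comp_sub, smul_eq_mul]
  rw [← integral_add (hint _) (hint _), ← integral_const_mul,
    ← integral_sub (hint _) (((hint _).fun_add (hint _)).const_mul _)]
  refine integral_congr_ae (ae_of_all _ fun y => ?_)
  simp only [sub_add_eq_sub_sub, sub_sub_eq_add_sub, sub_add_eq_add_sub]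
  ring

lemma continuous_shiftIntegral (hκ : Integrable κ) (hv : Measurable v) (hM : ∀ x, |v x| ≤ M) :
    Continuous (shiftIntegral κ v) := by
  let τ (x : E) : C(E, E) := ⟨fun y => y - x, by fun_prop⟩
  have hτ : Continuous τ :=
    ContinuousMap.continuous_of_continuous_uncurry _ (by
      simp only [Function.uncurry_def]; exact continuous_snd.sub continuous_fst)
  have hmp (x : E) : MeasurePreserving (τ x) := measurePreserving_sub_right volume x
  let T (x : E) : Lp ℝ 1 volume := Lp.compMeasurePreserving (τ x) (hmp x) hκ.toL1
  have hT : Continuous T :=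
    (continuous_const (y := hκ.toL1)).compMeasurePreservingLp hτ hmp ENNReal.one_ne_top
  have hv' : MemLp v ⊤ := memLp_top_of_bound hv.aestronglyMeasurable M (ae_of_all _ hM)
  have hpair : shiftIntegral κ v
      = fun x => (ContinuousLinearMap.mul ℝ ℝ).lpPairing volume ⊤ 1 hv'.toLp (T x) := by
    ext x
    rw [shiftIntegral_eq_integral_mul_comp_sub, ContinuousLinearMap.lpPairing_eq_integral]
    refine integral_congr_ae ?_
    filter_upwards [hv'.coeFn_toLp, Lp.coeFn_compMeasurePreserving hκ.toL1 (hmp x),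
      (hmp x).quasiMeasurePreserving.ae_eq_comp hκ.coeFn_toL1] with y hvy hTy hκy
    rw [ContinuousLinearMap.mul_apply', hvy, hTy, hκy]
    rfl
  rw [hpair]
  fun_prop

lemma jumpOp_eq (hκ : Integrable κ) (hv : Measurable v) (hM : ∀ x, |v x| ≤ M) (x : E) :
    jumpOp κ v x = v x * (∫ z, κ z) - shiftIntegral κ v x := by
  rw [jumpOp, shiftIntegral, ← integral_const_mul,
    ← integral_sub (hκ.const_mul _) (integrable_comp_add_mul hκ hv hM x)]
  simp_rw [sub_mul]

lemma continuousOn_jumpOp (hκ : Integrable κ) (hv : Measurable v) (hM : ∀ x, |v x| ≤ M)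
    {K : Set E} (hK : ContinuousOn v K) : ContinuousOn (jumpOp κ v) K :=
  ((hK.mul continuousOn_const).sub (continuous_shiftIntegral hκ hv hM).continuousOn).congr
    fun x _ => jumpOp_eq hκ hv hM x

lemma jumpOp_neg (x : E) : jumpOp κ (-v) x = -jumpOp κ v x := by
  simp_rw [jumpOp, ← integral_neg, Pi.neg_apply]
  congr 1 with z
  ring

lemma jumpOp_sub (hκ : Integrable κ) (hu : Measurable u) (hM : ∀ x, |u x| ≤ M)
    (hv : Measurable v) (hM' : ∀ x, |v x| ≤ M') (x : E) :
    jumpOp κ (u - v) x = jumpOp κ u x - jumpOp κ v x := by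
  rw [jumpOp, jumpOp, jumpOp, ← integral_sub (integrable_jump_mul hκ hu hM x)
    (integrable_jump_mul hκ hv hM' x)]
  congr 1 with z
  simp only [Pi.sub_apply]
  ring

lemma jumpOp_sub_kernel (hκ : Integrable κ) (hκ' : Integrable κ') (hv : Measurable v)
    (hM : ∀ x, |v x| ≤ M) (x : E) : jumpOp (κ - κ') v x = jumpOp κ v x - jumpOp κ' v x := by
  simp_rw [jumpOp, Pi.sub_apply, mul_sub]
  exact integral_sub (integrable_jump_mul hκ hv hM x) (integrable_jump_mul hκ' hv hM x)

lemma jumpOp_eq_symmOp (hκ : Integrable κ) (heven : ∀ z, κ (-z) = κ z)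
    (hv : Measurable v) (hM : ∀ x, |v x| ≤ M) (x : E) :
    jumpOp κ v x = symmOp κ v x := by
  have hint := integrable_jump_mul hκ hv hM x
  have hreflect : jumpOp κ v x = ∫ z, (v x - v (x - z)) * κ z := by
    rw [jumpOp, ← integral_neg_eq_self]
    simp [heven, sub_eq_add_neg]
  have hint' : Integrable fun z => (v x - v (x - z)) * κ z := by
    simpa [heven, sub_eq_add_neg] using! hint.comp_neg
  have hhalf := integral_add (hint.const_mul (1 / 2)) (hint'.const_mul (1 / 2))
  rw [integral_const_mul, integral_const_mul, ← hreflect, ← jumpOp.eq_def] at hhalf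
  rw [show jumpOp κ v x = 1 / 2 * jumpOp κ v x + 1 / 2 * jumpOp κ v x by ring, ← hhalf]
  refine integral_congr_ae (ae_of_all _ fun z => ?_)
  simp only [secondDiff, smul_eq_mul]
  ring

end Operators

section Averages

variable {E : Type*} [NormedAddCommGroup E] [InnerProductSpace ℝ E] [FiniteDimensional ℝ E]
  [MeasurableSpace E] [BorelSpace E] {s r M : ℝ} {u : E → ℝ} {x : E}

/-- `(-Δ)^s u` exists at `x` as a principal value and vanishes there. -/
def IsFracHarmonicAt (s : ℝ) (u : E → ℝ) (x : E) : Prop :=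
  Tendsto (fun ε => jumpOp (truncKernel s ε) u x) (𝓝[>] 0) (𝓝 0)

lemma IsFracHarmonicAt.neg (h : IsFracHarmonicAt s u x) : IsFracHarmonicAt s (-u) x := by
  simpa only [IsFracHarmonicAt, jumpOp_neg, neg_zero] using Tendsto.neg h

/-- The average of `u (x + z)` over the dyadic annulus `r < |z| ≤ 2r`, weighted by the kernel of
the fractional Laplacian. -/
noncomputable def annAverage (s : ℝ) (u : E → ℝ) (r : ℝ) (x : E) : ℝ :=
  shiftIntegral (annKernel s r (2 * r)) u x / ∫ z : E, annKernel s r (2 * r) z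

lemma annAverage_neg : annAverage s (-u) r x = -annAverage s u r x := by
  simp [annAverage, shiftIntegral, integral_neg, neg_div]

variable (E) in
/-- The mass of the kernel of the fractional Laplacian in the annulus `1 < |z| ≤ 2`. -/
noncomputable def dyadicMass (s : ℝ) : ℝ := tailMass E s * (1 - 2 ^ (-(2 * s)))

variable [Nontrivial E]

lemma dyadicMass_pos (hs : 0 < s) : 0 < dyadicMass E s :=
  mul_pos (tailMass_pos hs)
    (sub_pos.2 (Real.rpow_lt_one_of_one_lt_of_neg one_lt_two (by linarith)))

lemma integral_annKernel_two_mul (hs : 0 < s) (hr : 0 < r) :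
    ∫ z : E, annKernel s r (2 * r) z = dyadicMass E s * r ^ (-(2 * s)) := by
  rw [integral_annKernel hs hr (by positivity), Real.mul_rpow zero_le_two hr.le, dyadicMass]
  ring

lemma continuous_annAverage (hs : 0 < s) (hr : 0 < r) (hu : Measurable u) (hM : ∀ x, |u x| ≤ M) :
    Continuous (annAverage s u r) :=
  (continuous_shiftIntegral (integrable_annKernel hs hr (by positivity)) hu hM).div_const _

lemma sub_annAverage_eq (hs : 0 < s) (hr : 0 < r) (hu : Measurable u) (hM : ∀ x, |u x| ≤ M)
    (x : E) : u x - annAverage s u r x =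
      (jumpOp (truncKernel s r) u x - jumpOp (truncKernel s (2 * r)) u x) /
        dyadicMass E s * r ^ (2 * s) := by
  have h2r : 0 < 2 * r := by positivity
  have hD := (dyadicMass_pos (E := E) hs).ne'
  have hpow := (Real.rpow_pos_of_pos hr (2 * s)).ne'
  rw [annAverage, ← jumpOp_sub_kernel (integrable_truncKernel hs hr)
    (integrable_truncKernel hs h2r) hu hM, ← annKernel,
    jumpOp_eq (integrable_annKernel hs hr h2r) hu hM, integral_annKernel_two_mul hs hr,
    Real.rpow_neg hr.le]
  field_simp

lemma IsFracHarmonicAt.eventually_abs_sub_annAverage_le (h : IsFracHarmonicAt s u x) (hs : 0 < s)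
    (hu : Measurable u) (hM : ∀ x, |u x| ≤ M) :
    ∀ᶠ r in 𝓝[>] (0 : ℝ), |u x - annAverage s u r x| ≤ r ^ (2 * s) := by
  have hdouble : Tendsto (fun r : ℝ => 2 * r) (𝓝[>] 0) (𝓝[>] 0) := by
    refine tendsto_nhdsWithin_iff.2 ⟨?_, eventually_mem_nhdsWithin.mono fun r (hr : 0 < r) => ?_⟩
    · exact (Continuous.tendsto' (by fun_prop) 0 0 (mul_zero 2)).mono_left nhdsWithin_le_nhds
    · exact mul_pos two_pos hr
  have hlim := ((h.sub (h.comp hdouble)).div_const (dyadicMass E s)).abs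
  simp only [sub_zero, zero_div, abs_zero, Function.comp_apply] at hlim
  filter_upwards [hlim.eventually_lt_const one_pos, self_mem_nhdsWithin] with r hlt (hr : 0 < r)
  rw [sub_annAverage_eq hs hr hu hM, abs_mul, abs_of_pos (Real.rpow_pos_of_pos hr _)]
  exact mul_le_of_le_one_left (Real.rpow_nonneg hr.le _) hlt.le

end Averages

section Touching

variable {E : Type*} [NormedAddCommGroup E] [InnerProductSpace ℝ E] [FiniteDimensional ℝ E]
  [MeasurableSpace E] [BorelSpace E] [Nontrivial E] {s M M' N B a d L : ℝ} {u w φ : E → ℝ} {y : E}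

lemma jumpOp_truncKernel_le_of_min (hs : 0 < s) (hw : Measurable w) (hM : ∀ x, |w x| ≤ M)
    (hnear : ∀ z, ‖z‖ ≤ L → w y ≤ w (y + z)) (hfar : ∀ z, w y - N ≤ w (y + z))
    (ha : 0 < a) (haL : a ≤ L) {ε : ℝ} (hε : 0 < ε) (hεa : ε ≤ a) :
    jumpOp (truncKernel s ε) w y ≤
      jumpOp (annKernel s a L) w y + N * (tailMass E s * L ^ (-(2 * s))) := by
  have hL : 0 < L := ha.trans_le haL
  have hann := integrable_jump_mul (integrable_annKernel hs ha hL) hw hM y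
  have htail := (integrable_truncKernel (E := E) hs hL).const_mul N
  rw [← integral_truncKernel hL, jumpOp, jumpOp, ← integral_const_mul, ← integral_add hann htail]
  refine integral_mono (integrable_jump_mul (integrable_truncKernel hs hε) hw hM y)
    (hann.add htail) fun z => ?_
  have hk := fracKernel_nonneg (s := s) z
  dsimp only [Pi.add_apply]
  rcases lt_or_ge L ‖z‖ with hz | hz
  · rw [annKernel_of_notMem haL (by simp [hz]), truncKernel_of_lt hz,
      truncKernel_of_lt ((hεa.trans haL).trans_lt hz)]
    nlinarith [mul_nonneg (sub_nonneg.2 (hfar z)) hk]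
  · rw [truncKernel_of_le hz]
    rcases lt_or_ge a ‖z‖ with haz | haz
    · simp [annKernel_of_mem haz hz, truncKernel_of_lt (hεa.trans_lt haz)]
    · rw [annKernel_of_notMem haL (by simp [haz])]
      nlinarith [mul_nonneg (sub_nonneg.2 (hnear z hz)) (truncKernel_nonneg (s := s) (r := ε) z)]

lemma IsFracHarmonicAt.neg_le_jumpOp_annKernel_sub (h : IsFracHarmonicAt s u y) (hs : 0 < s)
    (hu : Measurable u) (hM : ∀ x, |u x| ≤ M) (hφ : Measurable φ) (hM' : ∀ x, |φ x| ≤ M')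
    (hφB : ∀ ε > 0, jumpOp (truncKernel s ε) φ y ≤ B)
    (hnear : ∀ z, ‖z‖ ≤ L → (u - φ) y ≤ (u - φ) (y + z))
    (hfar : ∀ z, (u - φ) y - N ≤ (u - φ) (y + z)) (ha : 0 < a) (haL : a ≤ L) :
    -(B + N * (tailMass E s * L ^ (-(2 * s)))) ≤ jumpOp (annKernel s a L) (u - φ) y := by
  have hbdd : ∀ x, |(u - φ) x| ≤ M + M' := fun x => (abs_sub _ _).trans (add_le_add (hM x) (hM' x))
  have hlim : Tendsto (fun ε => jumpOp (truncKernel s ε) u y -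
      (B + N * (tailMass E s * L ^ (-(2 * s))))) (𝓝[>] 0)
      (𝓝 (0 - (B + N * (tailMass E s * L ^ (-(2 * s)))))) := h.sub_const _
  rw [zero_sub] at hlim
  refine le_of_tendsto hlim ?_
  filter_upwards [Ioc_mem_nhdsGT ha] with ε hε
  have := jumpOp_truncKernel_le_of_min hs (hu.sub hφ) hbdd hnear hfar ha haL hε.1 hε.2
  rw [jumpOp_sub (integrable_truncKernel hs hε.1) hu hM hφ hM'] at this
  linarith [hφB ε hε.1]

lemma mul_jumpOp_annKernel_le_of_min (hs : 0 < s) (hw : Measurable w) (hM : ∀ x, |w x| ≤ M)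
    (hnear : ∀ z, ‖z‖ ≤ L → w y ≤ w (y + z)) (hd : 0 < d) (hL : 10 * d ≤ L) {q : E}
    (hq : ‖q‖ ≤ 2 * d) :
    (2 / 3) ^ (-(finrank ℝ E + 2 * s)) * jumpOp (annKernel s (2 * d) L) w y ≤
      ∫ z, (w y - w (y + q + z)) * annKernel s (4 * d) (2 * (4 * d)) z := by
  have hann := integrable_annKernel (E := E) hs (r := 2 * d) (R := L) (by positivity) (by linarith)
  have hann' := integrable_annKernel (E := E) hs (r := 4 * d) (R := 2 * (4 * d)) (by positivity)
    (by positivity)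
  rw [jumpOp, ← integral_add_left_eq_self (fun z => (w y - w (y + z)) * _) q,
    ← integral_const_mul]
  refine integral_mono (((integrable_jump_mul hann hw hM y).comp_add_left q).const_mul _)
    ?_ fun z => ?_
  · simpa only [sub_mul] using!
      (hann'.const_mul (w y)).sub (integrable_comp_add_mul hann' hw hM (y + q))
  · have hker := annKernel_le_annKernel_add hs hd hL hq z
    simp only [add_assoc]
    by_cases hz : 2 * d < ‖q + z‖ ∧ ‖q + z‖ ≤ L
    · nlinarith [mul_nonneg (sub_nonneg.2 (hnear _ hz.2)) (sub_nonneg.2 hker)]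
    · have hzero := annKernel_of_notMem (s := s) (by linarith) hz
      have hzero' : annKernel s (4 * d) (2 * (4 * d)) z = 0 :=
        le_antisymm (by simpa [hzero] using hker) (annKernel_nonneg (by linarith) z)
      simp [hzero, hzero']

lemma IsFracHarmonicAt.annAverage_le (h : IsFracHarmonicAt s u y) (hs : 0 < s)
    (hu : Measurable u) (hM : ∀ x, |u x| ≤ M) (hφ : Measurable φ) (hM' : ∀ x, |φ x| ≤ M')
    (hφB : ∀ ε > 0, jumpOp (truncKernel s ε) φ y ≤ B)
    (hnear : ∀ z, ‖z‖ ≤ L → (u - φ) y ≤ (u - φ) (y + z))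
    (hfar : ∀ z, (u - φ) y - N ≤ (u - φ) (y + z)) (hd : 0 < d) (hL : 10 * d ≤ L) {p : E}
    (hp : ‖p - y‖ ≤ 2 * d) {osc : ℝ} (hosc : ∀ x, φ x - φ y ≤ osc) :
    annAverage s u (4 * d) p ≤ u y + osc + (2 / 3) ^ (-(finrank ℝ E + 2 * s)) *
      (B + N * (tailMass E s * L ^ (-(2 * s)))) / (dyadicMass E s * (4 * d) ^ (-(2 * s))) := by
  have h4d : 0 < 4 * d := by positivity
  have hκ := integrable_annKernel (E := E) hs h4d (R := 2 * (4 * d)) (by positivity)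
  have hbdd : ∀ x, |(u - φ) x| ≤ M + M' := fun x => (abs_sub _ _).trans (add_le_add (hM x) (hM' x))
  have htouch := mul_le_mul_of_nonneg_left
    (h.neg_le_jumpOp_annKernel_sub hs hu hM hφ hM' hφB hnear hfar (by positivity : 0 < 2 * d)
      (by linarith)) (by positivity : (0 : ℝ) ≤ (2 / 3) ^ (-(finrank ℝ E + 2 * s)))
  have htransfer := mul_jumpOp_annKernel_le_of_min hs (hu.sub hφ) hbdd hnear hd hL hp
  rw [add_sub_cancel] at htransfer
  have hshift : (∫ z, ((u - φ) y - (u - φ) (p + z)) * annKernel s (4 * d) (2 * (4 * d)) z) ≤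
      (u y + osc) * (∫ z : E, annKernel s (4 * d) (2 * (4 * d)) z) -
        shiftIntegral (annKernel s (4 * d) (2 * (4 * d))) u p := by
    rw [shiftIntegral, ← integral_const_mul,
      ← integral_sub (hκ.const_mul _) (integrable_comp_add_mul hκ hu hM p)]
    refine integral_mono ?_
      ((hκ.const_mul _).sub (integrable_comp_add_mul hκ hu hM p)) fun z => ?_
    · simpa only [sub_mul] using!
        (hκ.const_mul ((u - φ) y)).sub (integrable_comp_add_mul hκ (hu.sub hφ) hbdd p)
    · simp only [Pi.sub_apply, ← sub_mul]
      exact mul_le_mul_of_nonneg_right (by linarith [hosc (p + z)])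
        (annKernel_nonneg (by linarith) z)
  have hmass := mul_pos (dyadicMass_pos (E := E) hs) (Real.rpow_pos_of_pos h4d (-(2 * s)))
  rw [integral_annKernel_two_mul hs h4d] at hshift
  rw [annAverage, integral_annKernel_two_mul hs h4d, div_le_iff₀ hmass, add_mul _ _ (_ * _),
    div_mul_cancel₀ _ hmass.ne']
  linarith

end Touching

section Continuity

variable {E : Type*} [NormedAddCommGroup E] [InnerProductSpace ℝ E] [FiniteDimensional ℝ E]
  {s M m C d L ε δ ρ : ℝ} {u φ : E → ℝ} {y z : E} {S : Set E} (ψ : ContDiffBump (0 : E))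

lemma abs_secondDiff_mul_bump_le (hC : ∀ x z, ‖secondDiff ψ x z‖ ≤ C * min 1 (‖z‖ ^ 2))
    (hδ : 0 ≤ δ) (hd : 0 < d) (a z : E) :
    |secondDiff (fun x => δ * ψ (d⁻¹ • (x - a))) y z| ≤ δ * C * min 1 (‖z‖ ^ 2 / d ^ 2) := by
  have hscale := hC (d⁻¹ • (y - a)) (d⁻¹ • z)
  rw [← secondDiff_comp_smul_sub, norm_smul, mul_pow, norm_inv, Real.norm_of_nonneg hd.le,
    inv_pow, ← div_eq_inv_mul, Real.norm_eq_abs] at hscale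
  have hpull : secondDiff (fun x => δ * ψ (d⁻¹ • (x - a))) y z =
      δ * secondDiff (fun x => ψ (d⁻¹ • (x - a))) y z := by
    simp only [secondDiff, smul_eq_mul]
    ring
  rw [hpull, abs_mul, abs_of_nonneg hδ, mul_assoc]
  exact mul_le_mul_of_nonneg_left hscale hδ

lemma exists_bump_touching_point (hψ : ψ.rOut ≤ 1 / 2) (hd : 0 < d)
    (hδ : 0 ≤ δ) (hu : ContinuousOn u (closedBall y (d / 2)))
    (hlow : ∀ x ∈ S, m - δ ≤ u x) (hy : u y ≤ m + δ) :
    ∃ y' ∈ closedBall y (d / 2), u y' ≤ u y ∧ ∀ x ∈ S,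
      u y' - 2 * δ * ψ (d⁻¹ • (y' - y)) ≤ u x - 2 * δ * ψ (d⁻¹ • (x - y)) := by
  have hψc := ψ.continuous
  obtain ⟨y', hy', hmin⟩ := (isCompact_closedBall y (d / 2)).exists_isMinOn
    (f := fun x => u x - 2 * δ * ψ (d⁻¹ • (x - y))) ⟨y, mem_closedBall_self (by positivity)⟩
    (hu.sub (by fun_prop))
  have hcenter := isMinOn_iff.1 hmin y (mem_closedBall_self (by positivity))
  rw [sub_self, smul_zero, ψ.one_of_mem_closedBall (mem_closedBall_self ψ.rIn_pos.le)] at hcenter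
  refine ⟨y', hy', ?_, fun x hx => ?_⟩
  · nlinarith [ψ.le_one (x := d⁻¹ • (y' - y))]
  · by_cases hxy : x ∈ closedBall y (d / 2)
    · exact isMinOn_iff.1 hmin x hxy
    · have hfar : ψ.rOut ≤ dist (d⁻¹ • (x - y)) 0 := by
        rw [mem_closedBall, not_le, dist_eq_norm] at hxy
        rw [dist_zero_right, norm_smul, norm_inv, Real.norm_of_nonneg hd.le, inv_mul_eq_div]
        exact hψ.trans ((le_div_iff₀ hd).2 (by linarith))
      rw [ψ.zero_of_le_dist hfar]
      linarith [hlow x hx]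

variable [MeasurableSpace E] [BorelSpace E] [Nontrivial E]

lemma jumpOp_truncKernel_le_of_abs_secondDiff_le (hs0 : 0 < s) (hs1 : s < 1) (hφ : Measurable φ)
    (hM : ∀ x, |φ x| ≤ M) (hd : 0 < d)
    (hC : ∀ z, |secondDiff φ y z| ≤ C * min 1 (‖z‖ ^ 2 / d ^ 2)) (hε : 0 < ε) :
    jumpOp (truncKernel s ε) φ y ≤ C * (levyMass E s * d ^ (-(2 * s))) := by
  rw [jumpOp_eq_symmOp (integrable_truncKernel hs0 hε) truncKernel_neg hφ hM,
    ← integral_min_norm_sq_div_mul_fracKernel hd, ← integral_const_mul]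
  have hbound (z : E) : |secondDiff φ y z * truncKernel s ε z| ≤
      C * (min 1 (‖z‖ ^ 2 / d ^ 2) * fracKernel s z) := by
    rw [abs_mul, abs_of_nonneg (truncKernel_nonneg z), ← mul_assoc]
    exact mul_le_mul (hC z) (truncKernel_le_fracKernel z) (truncKernel_nonneg z)
      ((abs_nonneg _).trans (hC z))
  have hint := (integrable_min_norm_sq_div_mul_fracKernel (E := E) hs0 hs1 hd).const_mul C
  have hmeas : AEStronglyMeasurable fun z => secondDiff φ y z * truncKernel s ε z := by
    refine AEStronglyMeasurable.mul ?_ (integrable_truncKernel hs0 hε).aestronglyMeasurable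
    unfold secondDiff
    fun_prop
  exact integral_mono (hint.mono' hmeas (ae_of_all _ hbound)) hint
    fun z => (le_abs_self _).trans (hbound z)

lemma IsFracHarmonicAt.annAverage_le_of_bump_touching (hy : IsFracHarmonicAt s u y)
    (hs0 : 0 < s) (hs1 : s < 1) (hu : Measurable u) (hM : ∀ x, |u x| ≤ M)
    (hC : ∀ x z, ‖secondDiff ψ x z‖ ≤ C * min 1 (‖z‖ ^ 2)) {a p : E} (hd : 0 < d)
    (hL : 10 * d ≤ L) (hδ : 0 ≤ δ) (hp : ‖p - y‖ ≤ 2 * d)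
    (hmin : ∀ x ∈ closedBall y L, u y - δ * ψ (d⁻¹ • (y - a)) ≤ u x - δ * ψ (d⁻¹ • (x - a))) :
    annAverage s u (4 * d) p ≤ u y + δ + (2 / 3) ^ (-(finrank ℝ E + 2 * s)) *
      (δ * C * (levyMass E s * d ^ (-(2 * s))) +
        (2 * M + δ) * (tailMass E s * L ^ (-(2 * s)))) /
        (dyadicMass E s * (4 * d) ^ (-(2 * s))) := by
  set φ : E → ℝ := fun x => δ * ψ (d⁻¹ • (x - a))
  have hφ0 (x : E) : 0 ≤ φ x := mul_nonneg hδ ψ.nonneg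
  have hφδ (x : E) : φ x ≤ δ := mul_le_of_le_one_right hδ ψ.le_one
  have hφabs (x : E) : |φ x| ≤ δ := (abs_of_nonneg (hφ0 x)).trans_le (hφδ x)
  have hφm : Measurable φ := by
    have := ψ.continuous
    exact (by fun_prop : Continuous φ).measurable
  refine hy.annAverage_le hs0 hu hM hφm hφabs
    (fun ε hε => jumpOp_truncKernel_le_of_abs_secondDiff_le hs0 hs1 hφm hφabs hd
      (abs_secondDiff_mul_bump_le ψ hC hδ hd a) hε)
    (fun z hz => hmin (y + z) (by simpa using hz)) (fun z => ?_) hd hL hp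
    (fun x => by linarith [hφ0 y, hφδ x])
  simp only [Pi.sub_apply]
  linarith [hφ0 y, hφδ (y + z), (abs_le.1 (hM y)).2, (abs_le.1 (hM (y + z))).1]

lemma exists_annAverage_le_of_bump_touching (hs0 : 0 < s) (hs1 : s < 1) (hM0 : 0 ≤ M) :
    ∃ A, 0 ≤ A ∧ ∀ u : E → ℝ, Measurable u → (∀ x, |u x| ≤ M) → ∀ (a y p : E) (d L δ : ℝ),
      0 < d → 10 * d ≤ L → 0 ≤ δ → δ ≤ 1 → ‖p - y‖ ≤ 2 * d → IsFracHarmonicAt s u y →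
      (∀ x ∈ closedBall y L, u y - δ * ψ (d⁻¹ • (y - a)) ≤ u x - δ * ψ (d⁻¹ • (x - a))) →
      annAverage s u (4 * d) p ≤ u y + A * (δ + (d / L) ^ (2 * s)) := by
  obtain ⟨C, hC0, hC⟩ := exists_norm_secondDiff_le_min (ψ.contDiff (n := 2)) ψ.hasCompactSupport
  set γ : ℝ := (2 / 3) ^ (-(finrank ℝ E + 2 * s)) * 4 ^ (2 * s) / dyadicMass E s with hγ
  have hγ0 : 0 ≤ γ := div_nonneg (by positivity) (dyadicMass_pos hs0).le
  have hΛ := levyMass_nonneg (E := E) (s := s)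
  have hK := (tailMass_pos (E := E) hs0).le
  refine ⟨1 + γ * (C * levyMass E s) + γ * ((2 * M + 1) * tailMass E s), by positivity, ?_⟩
  intro u hu hM a y p d L δ hd hL hδ0 hδ1 hp hy hmin
  have hL0 : 0 < L := by linarith
  have hd2s := (Real.rpow_pos_of_pos hd (2 * s)).ne'
  have havg := hy.annAverage_le_of_bump_touching ψ hs0 hs1 hu hM hC hd hL hδ0 hp hmin
  have hscale : (2 / 3) ^ (-(finrank ℝ E + 2 * s)) *
      (δ * C * (levyMass E s * d ^ (-(2 * s))) +
        (2 * M + δ) * (tailMass E s * L ^ (-(2 * s)))) / (dyadicMass E s * (4 * d) ^ (-(2 * s))) =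
      γ * (C * levyMass E s) * δ + γ * ((2 * M + δ) * tailMass E s) * (d / L) ^ (2 * s) := by
    have hD := (dyadicMass_pos (E := E) hs0).ne'
    rw [hγ, Real.mul_rpow (by norm_num) hd.le, Real.rpow_neg zero_le_four,
      Real.rpow_neg hd.le, Real.rpow_neg hL0.le, Real.div_rpow hd.le hL0.le]
    field_simp
  have hfar : γ * ((2 * M + δ) * tailMass E s) * (d / L) ^ (2 * s) ≤
      γ * ((2 * M + 1) * tailMass E s) * (d / L) ^ (2 * s) := by gcongr
  have hcross₁ : 0 ≤ (1 + γ * (C * levyMass E s)) * (d / L) ^ (2 * s) := by positivity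
  have hcross₂ : 0 ≤ γ * ((2 * M + 1) * tailMass E s) * δ := by positivity
  linarith

lemma exists_annAverage_le_infDist (hs0 : 0 < s) (hs1 : s < 1) (hM0 : 0 ≤ M) :
    ∃ A, 0 ≤ A ∧ ∀ u : E → ℝ, Measurable u → (∀ x, |u x| ≤ M) → ∀ (S : Set E) (y : E) (L m δ : ℝ),
      S.Nonempty → 0 < infDist y S → 10 * infDist y S ≤ L → 0 ≤ δ → δ ≤ 1 / 2 →
      (∀ x ∈ closedBall y (2 * L), x ∉ S → ContinuousAt u x) →
      (∀ x ∈ closedBall y (2 * L), IsFracHarmonicAt s u x) →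
      (∀ x ∈ closedBall y (2 * L), m - δ ≤ u x) → u y ≤ m + δ →
      ∃ p ∈ S, dist y p ≤ 2 * infDist y S ∧
        annAverage s u (4 * infDist y S) p ≤ u y + A * (2 * δ + (infDist y S / L) ^ (2 * s)) := by
  let ψ : ContDiffBump (0 : E) := ⟨1 / 4, 1 / 2, by norm_num, by norm_num⟩
  obtain ⟨A, hA0, hA⟩ := exists_annAverage_le_of_bump_touching ψ hs0 hs1 hM0
  refine ⟨A, hA0, fun u hu hM S y L m δ hS hd hL hδ0 hδ1 hoff hharm hlow hy => ?_⟩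
  set d := infDist y S
  have hhalf : closedBall y (d / 2) ⊆ closedBall y (2 * L) :=
    closedBall_subset_closedBall (by linarith)
  have hcont : ContinuousOn u (closedBall y (d / 2)) := fun x hx =>
    (hoff x (hhalf hx) fun hxS => by
      linarith [infDist_le_dist_of_mem (x := y) hxS, mem_closedBall'.1 hx]).continuousWithinAt
  obtain ⟨p, hpS, hp⟩ := (infDist_lt_iff hS).1 (by linarith : d < 3 / 2 * d)
  obtain ⟨y', hy', huy', hmin⟩ := exists_bump_touching_point ψ le_rfl hd hδ0 hcont hlow hy
  have hpy' : ‖p - y'‖ ≤ 2 * d := by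
    rw [← dist_eq_norm]
    linarith [dist_triangle_left p y' y, mem_closedBall'.1 hy']
  refine ⟨p, hpS, by linarith, ?_⟩
  have havg := hA u hu hM y y' p d L (2 * δ) hd hL (by positivity) (by linarith) hpy'
    (hharm y' (hhalf hy')) fun x hx => hmin x (closedBall_subset_closedBall' ?_ hx)
  · linarith
  · linarith [mem_closedBall.1 hy']

lemma continuousWithinAt_of_abs_sub_annAverage_le (hs : 0 < s) (hu : Measurable u)
    (hM : ∀ x, |u x| ≤ M) (hz : z ∈ S) {r₀ : ℝ} (hr₀ : 0 < r₀)
    (hS : ∀ᶠ x in 𝓝[S] z, ∀ r ∈ Ioo 0 r₀, |u x - annAverage s u r x| ≤ r ^ (2 * s)) :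
    ContinuousWithinAt u S z := by
  refine continuousWithinAt_of_locally_uniform_approx_of_continuousWithinAt hz fun U hU => ?_
  obtain ⟨ε, hε, hεU⟩ := mem_uniformity_dist.1 hU
  have hsmall : ∀ᶠ r : ℝ in 𝓝[>] 0, r ^ (2 * s) < ε :=
    ((Real.continuousAt_rpow_const 0 (2 * s) (.inr (by positivity))).tendsto.mono_left
      nhdsWithin_le_nhds).eventually_lt_const (by simpa [hs.ne'] using hε)
  obtain ⟨r, hrε, hr⟩ := (hsmall.and (Ioo_mem_nhdsGT hr₀)).exists
  exact ⟨_, hS, annAverage s u r, (continuous_annAverage hs hr.1 hu hM).continuousWithinAt,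
    fun x hx => hεU (lt_of_le_of_lt (hx r hr) hrε)⟩

lemma eventually_scale_lt (hs : 0 < s) {r₀ : ℝ} (hr₀ : 0 < r₀) (hL : 0 < L) (hδ : 0 < δ) :
    ∀ᶠ d : ℝ in 𝓝 0, 10 * d < L ∧ 4 * d < r₀ ∧ (d / L) ^ (2 * s) < δ ∧ (4 * d) ^ (2 * s) < δ := by
  have hlt {f : ℝ → ℝ} (hf : Continuous f) {c : ℝ} (h0 : f 0 < c) : ∀ᶠ d in 𝓝 0, f d < c :=
    (hf.tendsto 0).eventually_lt_const h0
  have h2s : 0 ≤ 2 * s := by positivity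
  refine (hlt (by fun_prop) (by simpa)).and ((hlt (by fun_prop) (by simpa)).and
    ((hlt (.rpow_const (by fun_prop) fun _ => .inr h2s) ?_).and
      (hlt (.rpow_const (by fun_prop) fun _ => .inr h2s) ?_)))
  all_goals simpa [hs.ne'] using hδ

lemma exists_le_liminf_add_mul (hs0 : 0 < s) (hs1 : s < 1)
    (hu : Measurable u) (hM : ∀ x, |u x| ≤ M) (hSc : IsClosed S) (hz : z ∈ S) {r₀ : ℝ}
    (hr₀ : 0 < r₀)
    (hS : ∀ᶠ x in 𝓝 z, x ∈ S → ∀ r ∈ Ioo 0 r₀, |u x - annAverage s u r x| ≤ r ^ (2 * s))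
    (hoff : ∀ᶠ x in 𝓝 z, x ∉ S → ContinuousAt u x)
    (hharm : ∀ᶠ x in 𝓝 z, IsFracHarmonicAt s u x) :
    ∃ A, ∀ δ ∈ Ioo (0 : ℝ) (1 / 2), u z ≤ liminf u (𝓝 z) + A * δ := by
  have hbelow : (𝓝 z).IsBoundedUnder (· ≥ ·) u :=
    isBoundedUnder_of ⟨-M, fun x => (abs_le.1 (hM x)).1⟩
  have habove : (𝓝 z).IsBoundedUnder (· ≤ ·) u :=
    isBoundedUnder_of ⟨M, fun x => (abs_le.1 (hM x)).2⟩
  set m := liminf u (𝓝 z)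
  obtain ⟨A, hA0, hA⟩ := exists_annAverage_le_infDist (E := E) hs0 hs1 ((abs_nonneg _).trans (hM z))
  refine ⟨3 + 3 * A, fun δ ⟨hδ0, hδ1⟩ => ?_⟩
  have hcont : Tendsto u (𝓝[S] z) (𝓝 (u z)) := continuousWithinAt_of_abs_sub_annAverage_le hs0
    hu hM hz hr₀ (eventually_nhdsWithin_iff.2 hS)
  have hnearS := eventually_nhdsWithin_iff.1 (hcont.eventually_const_lt (sub_lt_self _ hδ0))
  have hlow := eventually_lt_of_lt_liminf (sub_lt_self m hδ0) hbelow
  obtain ⟨ρ, hρ, hball⟩ := eventually_nhds_iff_ball.1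
    (hS.and (hoff.and (hharm.and (hnearS.and hlow))))
  have hL : 0 < ρ / 4 := by positivity
  obtain ⟨η, hη, hsmall⟩ := eventually_nhds_iff_ball.1 (eventually_scale_lt hs0 hr₀ hL hδ0)
  obtain ⟨y, huy, hyz⟩ := ((frequently_lt_of_liminf_lt habove.isCoboundedUnder_ge
    (lt_add_of_pos_right m hδ0)).and_eventually
      (ball_mem_nhds z (show 0 < min η (ρ / 4) by positivity))).exists
  rw [lt_min_iff] at hyz
  by_cases hyS : y ∈ S
  · have := (hball y (mem_ball.2 (by linarith))).2.2.2.1 hyS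
    nlinarith
  have hd : 0 < infDist y S := (hSc.notMem_iff_infDist_pos ⟨z, hz⟩).1 hyS
  have hdz : infDist y S ≤ dist y z := infDist_le_dist_of_mem hz
  obtain ⟨hdL, hdr, hratio, hpow⟩ := hsmall (infDist y S)
    (by rw [mem_ball_zero_iff, Real.norm_of_nonneg hd.le]; linarith)
  have hsub (x) (hx : x ∈ closedBall y (2 * (ρ / 4))) : x ∈ ball z ρ :=
    mem_ball.2 (by linarith [dist_triangle x y z, mem_closedBall.1 hx])
  obtain ⟨p, hpS, hp, havg⟩ := hA u hu hM S y (ρ / 4) m δ ⟨z, hz⟩ hd hdL.le hδ0.le hδ1.le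
    (fun x hx => (hball x (hsub x hx)).2.1) (fun x hx => (hball x (hsub x hx)).2.2.1)
    (fun x hx => (hball x (hsub x hx)).2.2.2.2.le) huy.le
  obtain ⟨hpavg, -, -, hpz, -⟩ := hball p (hsub p (mem_closedBall'.2 (by linarith)))
  linarith [hpz hpS, le_abs_self (u p - annAverage s u (4 * infDist y S) p),
    hpavg hpS (4 * infDist y S) ⟨by positivity, hdr⟩, mul_le_mul_of_nonneg_left hratio.le hA0]

lemma lowerSemicontinuousAt_of_abs_sub_annAverage_le (hs0 : 0 < s) (hs1 : s < 1)
    (hu : Measurable u) (hM : ∀ x, |u x| ≤ M) (hSc : IsClosed S) (hz : z ∈ S) {r₀ : ℝ}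
    (hr₀ : 0 < r₀)
    (hS : ∀ᶠ x in 𝓝 z, x ∈ S → ∀ r ∈ Ioo 0 r₀, |u x - annAverage s u r x| ≤ r ^ (2 * s))
    (hoff : ∀ᶠ x in 𝓝 z, x ∉ S → ContinuousAt u x)
    (hharm : ∀ᶠ x in 𝓝 z, IsFracHarmonicAt s u x) : LowerSemicontinuousAt u z := by
  obtain ⟨A, hA⟩ := exists_le_liminf_add_mul hs0 hs1 hu hM hSc hz hr₀ hS hoff hharm
  have hlim : Tendsto (fun δ : ℝ => liminf u (𝓝 z) + A * δ) (𝓝[>] 0) (𝓝 (liminf u (𝓝 z))) :=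
    (Continuous.tendsto' (by fun_prop) 0 _ (by simp)).mono_left nhdsWithin_le_nhds
  have hle := ge_of_tendsto hlim (mem_of_superset (Ioo_mem_nhdsGT (by norm_num)) hA)
  exact fun c hc => eventually_lt_of_lt_liminf (hc.trans_le hle)
    (isBoundedUnder_of ⟨-M, fun x => (abs_le.1 (hM x)).1⟩)

lemma continuousAt_of_abs_sub_annAverage_le (hs0 : 0 < s) (hs1 : s < 1)
    (hu : Measurable u) (hM : ∀ x, |u x| ≤ M) (hSc : IsClosed S) (hz : z ∈ S) {r₀ : ℝ}
    (hr₀ : 0 < r₀)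
    (hS : ∀ᶠ x in 𝓝 z, x ∈ S → ∀ r ∈ Ioo 0 r₀, |u x - annAverage s u r x| ≤ r ^ (2 * s))
    (hoff : ∀ᶠ x in 𝓝 z, x ∉ S → ContinuousAt u x)
    (hharm : ∀ᶠ x in 𝓝 z, IsFracHarmonicAt s u x) : ContinuousAt u z := by
  have hneg : LowerSemicontinuousAt (-u) z :=
    lowerSemicontinuousAt_of_abs_sub_annAverage_le hs0 hs1 hu.neg (by simpa using hM) hSc hz hr₀
      (by simpa only [annAverage_neg, Pi.neg_apply, neg_sub_neg, abs_sub_comm] using hS)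
      (hoff.mono fun x hx hxS => (hx hxS).neg) (hharm.mono fun x hx => hx.neg)
  refine continuousAt_iff_lower_upperSemicontinuousAt.2
    ⟨lowerSemicontinuousAt_of_abs_sub_annAverage_le hs0 hs1 hu hM hSc hz hr₀ hS hoff hharm, ?_⟩
  exact fun c hc => (hneg (-c) (neg_lt_neg hc)).mono fun x hx => neg_lt_neg_iff.1 hx

/-- The points at which the averages of `u` at all scales below `r₀` are mutually consistent at
the rate of a harmonic function. Unlike the condition `|u x - annAverage s u r x| ≤ r ^ (2 * s)`,
this is closed in `x` whatever the regularity of `u`. -/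
def averageConsistentSet (s : ℝ) (u : E → ℝ) (r₀ : ℝ) : Set E :=
  {x | ∀ r ∈ Ioo 0 r₀, ∀ r' ∈ Ioo 0 r₀,
    |annAverage s u r x - annAverage s u r' x| ≤ r ^ (2 * s) + r' ^ (2 * s)}

lemma isClosed_averageConsistentSet (hs : 0 < s) (hu : Measurable u) (hM : ∀ x, |u x| ≤ M)
    (r₀ : ℝ) : IsClosed (averageConsistentSet s u r₀) := by
  simp only [averageConsistentSet, ofPred_forall]
  exact isClosed_iInter fun r => isClosed_iInter fun hr => isClosed_iInter fun r' =>
    isClosed_iInter fun hr' => isClosed_le ((continuous_annAverage hs hr.1 hu hM).sub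
      (continuous_annAverage hs hr'.1 hu hM)).abs continuous_const

lemma IsFracHarmonicAt.exists_mem_averageConsistentSet (h : IsFracHarmonicAt s u z) (hs : 0 < s)
    (hu : Measurable u) (hM : ∀ x, |u x| ≤ M) :
    ∃ j : ℕ, z ∈ averageConsistentSet s u (1 / (j + 1)) := by
  obtain ⟨δ, hδ, hsub⟩ :=
    mem_nhdsGT_iff_exists_Ioo_subset.1 (h.eventually_abs_sub_annAverage_le hs hu hM)
  obtain ⟨j, hj⟩ := exists_nat_one_div_lt (show 0 < δ from hδ)
  refine ⟨j, fun r hr r' hr' => ?_⟩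
  rw [abs_sub_comm]
  refine (abs_sub_le _ (u z) _).trans (add_comm (r ^ (2 * s)) _ ▸ add_le_add ?_ ?_)
  · rw [abs_sub_comm]
    exact hsub ⟨hr'.1, hr'.2.trans hj⟩
  · exact hsub ⟨hr.1, hr.2.trans hj⟩

lemma IsFracHarmonicAt.abs_sub_annAverage_le (h : IsFracHarmonicAt s u z) (hs : 0 < s)
    (hu : Measurable u) (hM : ∀ x, |u x| ≤ M) {r₀ r : ℝ}
    (hz : z ∈ averageConsistentSet s u r₀) (hr : r ∈ Ioo 0 r₀) :
    |u z - annAverage s u r z| ≤ r ^ (2 * s) := by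
  have hpow : Tendsto (fun r' : ℝ => r' ^ (2 * s)) (𝓝[>] 0) (𝓝 0) :=
    (Continuous.tendsto' (Real.continuous_rpow_const (by positivity)) 0 0
      (Real.zero_rpow (by positivity))).mono_left nhdsWithin_le_nhds
  have hlim : Tendsto (fun r' => r' ^ (2 * s) + (r ^ (2 * s) + r' ^ (2 * s))) (𝓝[>] 0)
      (𝓝 (0 + (r ^ (2 * s) + 0))) := hpow.add (hpow.const_add _)
  rw [zero_add, add_zero] at hlim
  refine ge_of_tendsto hlim ?_
  filter_upwards [h.eventually_abs_sub_annAverage_le hs hu hM, Ioo_mem_nhdsGT (hr.1.trans hr.2)]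
    with r' hr'u hr'
  refine (abs_sub_le _ (annAverage s u r' z) _).trans (add_le_add hr'u ?_)
  rw [abs_sub_comm]
  exact hz r hr r' hr'

theorem continuousOn_of_isFracHarmonicAt (hs0 : 0 < s) (hs1 : s < 1) (hu : Measurable u)
    (hM : ∀ x, |u x| ≤ M) {Ω : Set E} (hΩ : IsOpen Ω) (hharm : ∀ x ∈ Ω, IsFracHarmonicAt s u x) :
    ContinuousOn u Ω := by
  set S : Set E := (interior {x | ContinuousAt u x})ᶜ
  have hSc : IsClosed S := isOpen_interior.isClosed_compl
  have hoff (x : E) (hx : x ∉ S) : ContinuousAt u x := interior_subset (notMem_compl_iff.1 hx)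
  suffices hempty : S ∩ Ω = ∅ from fun x hx =>
    (hoff x fun hxS => hempty.le ⟨hxS, hx⟩).continuousWithinAt
  by_contra hne
  have : Nonempty ↥(S ∩ Ω) := (nonempty_iff_ne_empty.2 hne).to_subtype
  have : LocallyCompactSpace ↥(S ∩ Ω) :=
    (hSc.isLocallyClosed.inter hΩ.isLocallyClosed).locallyCompactSpace
  obtain ⟨j, z, hzint⟩ := nonempty_interior_of_iUnion_of_closed
    (f := fun j : ℕ => ((↑) : ↥(S ∩ Ω) → E) ⁻¹' averageConsistentSet s u (1 / (j + 1)))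
    (fun j => (isClosed_averageConsistentSet hs0 hu hM _).preimage continuous_subtype_val)
    (eq_univ_of_forall fun x => mem_iUnion.2
      ((hharm x x.2.2).exists_mem_averageConsistentSet hs0 hu hM))
  obtain ⟨U, hU, hUsub⟩ := (mem_nhds_subtype _ _ _).1 (mem_interior_iff_mem_nhds.1 hzint)
  refine z.2.1 (mem_interior_iff_mem_nhds.2 ?_)
  filter_upwards [eventually_eventually_nhds.2 (eventually_mem_set.2 hU),
    hΩ.eventually_mem z.2.2] with x hxU hxΩ
  by_cases hxS : x ∈ S
  · refine continuousAt_of_abs_sub_annAverage_le hs0 hs1 hu hM hSc hxS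
      (r₀ := 1 / (j + 1)) (by positivity) ?_ (.of_forall hoff) ?_
    · filter_upwards [hxU, hΩ.eventually_mem hxΩ] with y hyU hyΩ hyS r hr
      exact (hharm y hyΩ).abs_sub_annAverage_le hs0 hu hM (hUsub (a := ⟨y, hyS, hyΩ⟩) hyU) hr
    · exact (hΩ.eventually_mem hxΩ).mono hharm
  · exact hoff x hxS

end Continuity

section InfConvolution

variable {E : Type*} [NormedAddCommGroup E] {u : E → ℝ} {K : Set E} {M N : ℝ} {x y z : E}

/-- The inf-convolution of `u` over `K` with the penalty `N |x - y|²`, capped at `M` to make it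
globally bounded. It touches `u` from below at a nearby point and is semiconcave. -/
noncomputable def infConv (u : E → ℝ) (K : Set E) (M N : ℝ) (x : E) : ℝ :=
  min M (sInf ((fun y => u y + N * ‖x - y‖ ^ 2) '' K))

lemma infConv_le (hM : ∀ x, |u x| ≤ M) (hN : 0 ≤ N) (hy : y ∈ K) :
    infConv u K M N x ≤ u y + N * ‖x - y‖ ^ 2 := by
  refine (min_le_right _ _).trans (csInf_le ⟨-M, ?_⟩ (mem_image_of_mem _ hy))
  rintro _ ⟨y, -, rfl⟩
  exact le_add_of_le_of_nonneg (abs_le.1 (hM y)).1 (by positivity)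

lemma abs_infConv_le (hM : ∀ x, |u x| ≤ M) (hN : 0 ≤ N) (x : E) : |infConv u K M N x| ≤ M := by
  have hM0 : 0 ≤ M := (abs_nonneg _).trans (hM x)
  rcases K.eq_empty_or_nonempty with rfl | hK
  · simp [infConv, hM0]
  refine abs_le.2 ⟨le_min ?_ (le_csInf (hK.image _) ?_), min_le_left _ _⟩
  · linarith
  · rintro _ ⟨y, -, rfl⟩
    exact le_add_of_le_of_nonneg (abs_le.1 (hM y)).1 (by positivity)

lemma exists_infConv_eq (hK : IsCompact K) (hu : ContinuousOn u K) (hM : ∀ x, |u x| ≤ M)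
    (hN : 0 ≤ N) (hx : x ∈ K) : ∃ y ∈ K, infConv u K M N x = u y + N * ‖x - y‖ ^ 2 := by
  obtain ⟨y, hy, hmin⟩ := hK.exists_sInf_image_eq ⟨x, hx⟩
    (f := fun y => u y + N * ‖x - y‖ ^ 2) (hu.add (by fun_prop))
  refine ⟨y, hy, ?_⟩
  have hle : sInf ((fun y => u y + N * ‖x - y‖ ^ 2) '' K) ≤ u x := by
    refine csInf_le ⟨-M, ?_⟩ ⟨x, hx, by simp⟩
    rintro _ ⟨y, -, rfl⟩
    exact le_add_of_le_of_nonneg (abs_le.1 (hM y)).1 (by positivity)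
  rw [infConv, min_eq_right (hle.trans (abs_le.1 (hM x)).2), hmin]

lemma continuous_infConv (hK : IsCompact K) (hu : ContinuousOn u K) :
    Continuous (infConv u K M N) := by
  have := isCompact_iff_compactSpace.1 hK
  have hcont : Continuous fun p : E × K => u p.2 + N * ‖p.1 - p.2‖ ^ 2 :=
    (hu.domRestrict.comp continuous_snd).add (by fun_prop)
  have himage (x : E) : (fun y => u y + N * ‖x - y‖ ^ 2) '' K
      = (fun y : K => u y + N * ‖x - y‖ ^ 2) '' univ := by ext; simp
  unfold infConv
  simp only [himage]
  exact continuous_const.min (isCompact_univ.continuous_sInf hcont)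

lemma sub_le_infConv_sub_infConv (hM : ∀ x, |u x| ≤ M) (hN : 0 ≤ N)
    (hy : infConv u K M N x = u y + N * ‖x - y‖ ^ 2) (hyz : y + z ∈ K) :
    u y - u (y + z) ≤ infConv u K M N x - infConv u K M N (x + z) := by
  have := infConv_le hM hN hyz (x := x + z)
  rw [add_sub_add_right_eq_sub] at this
  linarith

/- The squared norm has constant second differences, so an infimum of its translates is
semiconcave. -/
lemma neg_mul_norm_sq_le_secondDiff_infConv [InnerProductSpace ℝ E] (hM : ∀ x, |u x| ≤ M)
    (hN : 0 ≤ N) (hyK : y ∈ K) (hy : infConv u K M N x = u y + N * ‖x - y‖ ^ 2) :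
    -(N * ‖z‖ ^ 2) ≤ secondDiff (infConv u K M N) x z := by
  have hpar := parallelogram_law_with_norm ℝ (x - y) z
  rw [sub_add_eq_add_sub, sub_right_comm] at hpar
  have hadd := infConv_le hM hN hyK (x := x + z)
  have hsub := infConv_le hM hN hyK (x := x - z)
  simp only [secondDiff, hy, smul_eq_mul]
  nlinarith

lemma exists_infConv_approx (hK : IsCompact K) (hu : ContinuousOn u K) (hM : ∀ x, |u x| ≤ M)
    {G : E → ℝ} (hG : ContinuousOn G K) {σ η : ℝ} (hσ : 0 < σ) (hη : 0 < η) :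
    ∃ N, 0 ≤ N ∧ ∀ x ∈ K, ∃ y ∈ K, ‖x - y‖ < σ ∧ infConv u K M N x = u y + N * ‖x - y‖ ^ 2 ∧
      |u x - infConv u K M N x| ≤ η ∧ |G x - G y| ≤ η := by
  obtain ⟨δu, hδu, hucu⟩ := Metric.uniformContinuousOn_iff.1
    (hK.uniformContinuousOn_of_continuous hu) η hη
  obtain ⟨δG, hδG, hucG⟩ := Metric.uniformContinuousOn_iff.1
    (hK.uniformContinuousOn_of_continuous hG) η hη
  obtain ⟨δ, hδ, hδlt⟩ := exists_between (lt_min hσ (lt_min hδu hδG))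
  have hM0 : 0 ≤ M := (abs_nonneg _).trans (hM 0)
  set N := (2 * M + 1) / δ ^ 2 with hN
  have hN0 : 0 ≤ N := by positivity
  refine ⟨N, hN0, fun x hx => ?_⟩
  obtain ⟨y, hyK, hy⟩ := exists_infConv_eq hK hu hM hN0 hx
  have hle : infConv u K M N x ≤ u x := by simpa using infConv_le hM hN0 hx (x := x)
  have hpen : N * ‖x - y‖ ^ 2 ≤ u x - u y := by linarith
  have hdist : ‖x - y‖ < δ := by
    refine lt_of_pow_lt_pow_left₀ 2 hδ.le (lt_of_mul_lt_mul_left ?_ hN0)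
    rw [hN, div_mul_cancel₀ _ (by positivity), ← hN]
    linarith [hpen, abs_le.1 (hM x), abs_le.1 (hM y)]
  rw [← dist_eq_norm] at hdist
  have hlt := lt_min_iff.1 (hdist.trans hδlt)
  have huxy := hucu x hx y hyK (lt_min_iff.1 hlt.2).1
  have hpen0 : 0 ≤ N * ‖x - y‖ ^ 2 := by positivity
  refine ⟨y, hyK, by rw [← dist_eq_norm]; exact hlt.1, hy, abs_le.2 ⟨by linarith, ?_⟩,
    (hucG x hx y hyK (lt_min_iff.1 hlt.2).2).le⟩
  linarith [le_abs_self (u x - u y), Real.dist_eq (u x) (u y)]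

end InfConvolution

section Duality

variable {E : Type*} [NormedAddCommGroup E] [InnerProductSpace ℝ E] [FiniteDimensional ℝ E]
  [MeasurableSpace E] [BorelSpace E] {s : ℝ} {κ v φ : E → ℝ} {M M' : ℝ}

lemma integrable_mul_mul_comp_sub (hκ : Integrable κ) (hφ : Integrable φ) (hv : Measurable v)
    (hM : ∀ x, |v x| ≤ M) :
    Integrable (fun p : E × E => φ p.1 * (v p.2 * κ (p.2 - p.1))) (volume.prod volume) := by
  have hshear : Integrable (fun p : E × E => φ p.1 * κ (p.2 - p.1)) (volume.prod volume) :=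
    (measurePreserving_prod_sub volume volume).integrable_comp_of_integrable (hφ.mul_prod hκ)
  refine (hshear.bdd_mul (hv.comp measurable_snd).aestronglyMeasurable
    (ae_of_all _ fun p => hM p.2)).congr (ae_of_all _ fun p => ?_)
  simp only [Function.comp_apply]
  ring

lemma integral_mul_mul_comp_sub (heven : ∀ z, κ (-z) = κ z) (y : E) :
    ∫ x, φ x * (v y * κ (y - x)) = v y * shiftIntegral κ φ y := by
  rw [shiftIntegral_eq_integral_mul_comp_sub, ← integral_const_mul]
  refine integral_congr_ae (ae_of_all _ fun x => ?_)
  dsimp only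
  rw [← heven (y - x), neg_sub]
  ring

lemma integral_mul_shiftIntegral_comm (hκ : Integrable κ) (heven : ∀ z, κ (-z) = κ z)
    (hφ : Integrable φ) (hv : Measurable v) (hM : ∀ x, |v x| ≤ M) :
    ∫ x, φ x * shiftIntegral κ v x = ∫ y, v y * shiftIntegral κ φ y := by
  simp_rw [← integral_mul_mul_comp_sub (v := v) heven, shiftIntegral_eq_integral_mul_comp_sub,
    ← integral_const_mul]
  exact integral_integral_swap (integrable_mul_mul_comp_sub hκ hφ hv hM)

lemma integrable_mul_shiftIntegral (hκ : Integrable κ) (hφ : Integrable φ) (hv : Measurable v)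
    (hM : ∀ x, |v x| ≤ M) : Integrable fun x => φ x * shiftIntegral κ v x := by
  refine (integrable_mul_mul_comp_sub hκ hφ hv hM).integral_prod_left.congr
    (ae_of_all _ fun x => ?_)
  simp only [shiftIntegral_eq_integral_mul_comp_sub, integral_const_mul]

lemma integrable_mul_jumpOp (hκ : Integrable κ) (hφ : Integrable φ) (hv : Measurable v)
    (hM : ∀ x, |v x| ≤ M) : Integrable fun x => φ x * jumpOp κ v x := by
  simp_rw [jumpOp_eq hκ hv hM, mul_sub, ← mul_assoc]
  exact ((hφ.mul_bdd hv.aestronglyMeasurable (ae_of_all _ hM)).mul_const _).sub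
    (integrable_mul_shiftIntegral hκ hφ hv hM)

lemma integral_mul_jumpOp_comm (hκ : Integrable κ) (heven : ∀ z, κ (-z) = κ z) (hφ : Integrable φ)
    (hφm : Measurable φ) (hM' : ∀ x, |φ x| ≤ M') (hv : Measurable v) (hM : ∀ x, |v x| ≤ M) :
    ∫ x, φ x * jumpOp κ v x = ∫ x, v x * jumpOp κ φ x := by
  have hφv : Integrable fun x => φ x * v x := hφ.mul_bdd hv.aestronglyMeasurable (ae_of_all _ hM)
  have hvφ : Integrable fun x => v x * shiftIntegral κ φ x := by
    simpa only [integral_mul_mul_comp_sub heven] using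
      (integrable_mul_mul_comp_sub hκ hφ hv hM).integral_prod_right
  simp_rw [jumpOp_eq hκ hv hM, jumpOp_eq hκ hφm hM', mul_sub, ← mul_assoc, mul_comm (v _) (φ _)]
  rw [integral_sub (hφv.mul_const _) (integrable_mul_shiftIntegral hκ hφ hv hM),
    integral_sub (hφv.mul_const _) hvφ, integral_mul_shiftIntegral_comm hκ heven hφ hv hM]

end Duality

section SingularOperator

variable {E : Type*} [NormedAddCommGroup E]

lemma secondDiff_eq_zero_of_notMem_cthickening {F : Type*} [NormedAddCommGroup F] [NormedSpace ℝ F]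
    {φ : E → F} {x z : E} (hx : x ∉ cthickening ‖z‖ (tsupport φ)) : secondDiff φ x z = 0 := by
  have hzero {y : E} (hy : dist x y ≤ ‖z‖) : φ y = 0 := by
    by_contra h
    exact hx (mem_cthickening_of_dist_le x y _ _ (subset_tsupport φ h) hy)
  simp [secondDiff, hzero (y := x), hzero (y := x + z), hzero (y := x - z)]

variable [InnerProductSpace ℝ E] [FiniteDimensional ℝ E]
  [MeasurableSpace E] [BorelSpace E] {s σ C M : ℝ} {κ v φ : E → ℝ}

lemma integrable_secondDiff (hφ : Integrable φ) (z : E) :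
    Integrable fun x => secondDiff φ x z :=
  hφ.sub (((hφ.comp_add_right z).add (hφ.comp_sub_right z)).const_mul (1 / 2))

lemma integral_abs_secondDiff_le (hφ : Integrable φ) (z : E) :
    ∫ x, |secondDiff φ x z| ≤ 2 * ∫ x, |φ x| := by
  have hadd := hφ.abs.comp_add_right z
  have hsub := hφ.abs.comp_sub_right z
  have hhalf : Integrable fun x => 1 / 2 * (|φ (x + z)| + |φ (x - z)|) :=
    (hadd.add hsub).const_mul _
  calc ∫ x, |secondDiff φ x z| ≤ ∫ x, (|φ x| + 1 / 2 * (|φ (x + z)| + |φ (x - z)|)) := by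
        refine integral_mono (integrable_secondDiff hφ z).abs
          (hφ.abs.add hhalf) fun x => ?_
        refine (abs_sub _ _).trans ?_
        rw [smul_eq_mul, abs_mul, abs_of_pos (one_half_pos (α := ℝ))]
        gcongr
        exact abs_add_le _ _
    _ = 2 * ∫ x, |φ x| := by
        rw [integral_add hφ.abs hhalf, integral_const_mul,
          integral_add hadd hsub, integral_add_right_eq_self (fun x => |φ x|),
          integral_sub_right_eq_self (fun x => |φ x|)]
        ring

lemma exists_integral_abs_secondDiff_le_min (hφ : ContDiff ℝ 2 φ) (hφc : HasCompactSupport φ) :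
    ∃ C, ∀ z, ∫ x, |secondDiff φ x z| ≤ C * min 1 (‖z‖ ^ 2) := by
  obtain ⟨C, hC0, hC⟩ := exists_norm_secondDiff_le_min hφ hφc
  have hint : Integrable φ := hφ.continuous.integrable_of_hasCompactSupport hφc
  set T : Set E := cthickening 1 (tsupport φ)
  have hT : volume T ≠ ⊤ := hφc.cthickening.measure_lt_top.ne
  refine ⟨max (2 * ∫ x, |φ x|) (C * volume.real T), fun z => ?_⟩
  rcases le_or_gt 1 ‖z‖ with hz | hz
  · rw [min_eq_left (one_le_pow₀ hz), mul_one]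
    exact (integral_abs_secondDiff_le hint z).trans (le_max_left _ _)
  · have hpt (x : E) : |secondDiff φ x z| ≤ T.indicator (fun _ => C * ‖z‖ ^ 2) x := by
      by_cases hx : x ∈ T
      · rw [indicator_of_mem hx]
        exact (hC x z).trans (by gcongr; exact min_le_right _ _)
      · rw [secondDiff_eq_zero_of_notMem_cthickening fun h => hx (cthickening_mono hz.le _ h)]
        simp [indicator_of_notMem hx]
    have hTm : MeasurableSet T := isClosed_cthickening.measurableSet
    rw [min_eq_right (pow_le_one₀ (norm_nonneg z) hz.le)]
    calc ∫ x, |secondDiff φ x z| ≤ ∫ x, T.indicator (fun _ => C * ‖z‖ ^ 2) x :=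
          integral_mono (integrable_secondDiff hint z).abs
            ((integrableOn_const hT).integrable_indicator hTm) hpt
      _ = C * volume.real T * ‖z‖ ^ 2 := by
          rw [integral_indicator hTm, setIntegral_const, smul_eq_mul]; ring
      _ ≤ _ := by gcongr; exact le_max_right _ _

variable [Nontrivial E]

lemma integrable_secondDiff_mul (hs0 : 0 < s) (hs1 : s < 1) (hκ : Measurable κ)
    (hκle : ∀ z, |κ z| ≤ fracKernel s z) (hφ : Measurable φ) {x : E}
    (hC : ∀ z, |secondDiff φ x z| ≤ C * min 1 (‖z‖ ^ 2)) :
    Integrable fun z => secondDiff φ x z * κ z := by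
  refine ((integrable_min_norm_sq_mul_fracKernel (E := E) hs0 hs1).const_mul C).mono'
    (Measurable.aestronglyMeasurable (by unfold secondDiff; fun_prop)) (ae_of_all _ fun z => ?_)
  rw [Real.norm_eq_abs, abs_mul, ← mul_assoc]
  exact mul_le_mul (hC z) (hκle z) (abs_nonneg _) ((abs_nonneg _).trans (hC z))

lemma integrable_prod_secondDiff_mul (hs0 : 0 < s) (hs1 : s < 1) (hκ : Measurable κ)
    (hκle : ∀ z, |κ z| ≤ fracKernel s z) (hφ : ContDiff ℝ 2 φ) (hφc : HasCompactSupport φ) :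
    Integrable (fun p : E × E => secondDiff φ p.1 p.2 * κ p.2) (volume.prod volume) := by
  obtain ⟨C, hC⟩ := exists_integral_abs_secondDiff_le_min hφ hφc
  have hint : Integrable φ := hφ.continuous.integrable_of_hasCompactSupport hφc
  have hmeas : Measurable fun p : E × E => secondDiff φ p.1 p.2 * κ p.2 := by
    have := hφ.continuous.measurable
    unfold secondDiff; fun_prop
  refine (integrable_prod_iff' hmeas.aestronglyMeasurable).2
    ⟨ae_of_all _ fun z => (integrable_secondDiff hint z).mul_const (κ z), ?_⟩
  refine ((integrable_min_norm_sq_mul_fracKernel (E := E) hs0 hs1).const_mul C).mono'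
    hmeas.aestronglyMeasurable.norm.prod_swap.integral_prod_right' (ae_of_all _ fun z => ?_)
  simp_rw [norm_mul, integral_mul_const, Real.norm_eq_abs]
  rw [abs_mul, abs_abs, abs_of_nonneg (integral_nonneg fun _ => abs_nonneg _), ← mul_assoc]
  exact mul_le_mul (hC z) (hκle z) (abs_nonneg _)
    ((integral_nonneg fun _ => abs_nonneg _).trans (hC z))

lemma integrable_symmOp (hs0 : 0 < s) (hs1 : s < 1) (hκ : Measurable κ)
    (hκle : ∀ z, |κ z| ≤ fracKernel s z) (hφ : ContDiff ℝ 2 φ) (hφc : HasCompactSupport φ) :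
    Integrable (symmOp κ φ) :=
  (integrable_prod_secondDiff_mul hs0 hs1 hκ hκle hφ hφc).integral_prod_left

lemma integrable_prod_mul_secondDiff_mul (hs0 : 0 < s) (hs1 : s < 1) (hκ : Measurable κ)
    (hκle : ∀ z, |κ z| ≤ fracKernel s z) (hφ : ContDiff ℝ 2 φ) (hφc : HasCompactSupport φ)
    (hv : Measurable v) (hM : ∀ x, |v x| ≤ M) :
    Integrable (fun p : E × E => v p.1 * (secondDiff φ p.1 p.2 * κ p.2)) (volume.prod volume) :=
  (integrable_prod_secondDiff_mul hs0 hs1 hκ hκle hφ hφc).bdd_mul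
    (hv.comp measurable_fst).aestronglyMeasurable (ae_of_all _ fun p => hM p.1)

lemma integral_mul_symmOp (hs0 : 0 < s) (hs1 : s < 1) (hκ : Measurable κ)
    (hκle : ∀ z, |κ z| ≤ fracKernel s z) (hφ : ContDiff ℝ 2 φ) (hφc : HasCompactSupport φ)
    (hv : Measurable v) (hM : ∀ x, |v x| ≤ M) :
    ∫ x, v x * symmOp κ φ x =
      ∫ p : E × E, v p.1 * (secondDiff φ p.1 p.2 * κ p.2) ∂(volume.prod volume) := by
  rw [integral_prod _ (integrable_prod_mul_secondDiff_mul hs0 hs1 hκ hκle hφ hφc hv hM)]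
  simp_rw [symmOp, integral_const_mul]

end SingularOperator

section WeakForm

lemma integral_le_of_tendsto_of_eventually_le {α ι : Type*} [MeasurableSpace α] {μ : Measure α}
    {l : Filter ι} [l.NeBot] [l.IsCountablyGenerated] {f : ι → α → ℝ} {b h : α → ℝ} {a : ℝ}
    (hb : Integrable b μ) (hh : Integrable h μ) (hf : ∀ᶠ i in l, Integrable (f i) μ)
    (hbf : ∀ᶠ i in l, ∀ x, b x ≤ f i x) (hhf : ∀ x, ∀ᶠ i in l, h x ≤ f i x)
    (hlim : Tendsto (fun i => ∫ x, f i x ∂μ) l (𝓝 a)) : ∫ x, h x ∂μ ≤ a := by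
  have hmin : Tendsto (fun i => ∫ x, min (f i x) (h x) ∂μ) l (𝓝 (∫ x, h x ∂μ)) := by
    refine tendsto_integral_filter_of_dominated_convergence (fun x => |b x| + |h x|) ?_ ?_
      (hb.abs.add hh.abs) (ae_of_all _ fun x => ?_)
    · filter_upwards [hf] with i hi using (hi.inf hh).aestronglyMeasurable
    · filter_upwards [hbf] with i hi
      refine ae_of_all _ fun x => abs_le.2 ⟨le_min ?_ ?_, (min_le_right _ _).trans ?_⟩
      · linarith [hi x, neg_abs_le (b x), abs_nonneg (h x)]
      · linarith [neg_abs_le (h x), abs_nonneg (b x)]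
      · linarith [le_abs_self (h x), abs_nonneg (b x)]
    · exact tendsto_const_nhds.congr' ((hhf x).mono fun i hi => (min_eq_right hi).symm)
  refine le_of_tendsto_of_tendsto hmin hlim ?_
  filter_upwards [hf] with i hi
  exact integral_mono (hi.inf hh) hi fun x => min_le_left _ _

variable {E : Type*} [NormedAddCommGroup E] [InnerProductSpace ℝ E] [FiniteDimensional ℝ E]
  [MeasurableSpace E] [BorelSpace E] {s σ C M η : ℝ} {κ v φ u : E → ℝ}

lemma symmOp_eq_zero_of_notMem_cthickening {x : E} (hκ : ∀ z, σ < ‖z‖ → κ z = 0)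
    (hx : x ∉ cthickening σ (tsupport φ)) : symmOp κ φ x = 0 := by
  refine integral_eq_zero_of_ae (ae_of_all _ fun z => ?_)
  rcases lt_or_ge σ ‖z‖ with hz | hz
  · simp [hκ z hz]
  · simp [secondDiff_eq_zero_of_notMem_cthickening fun h => hx (cthickening_mono hz _ h)]

variable [Nontrivial E]

lemma neg_mul_levyMass_le_symmOp (hs0 : 0 < s) (hs1 : s < 1) (hκ0 : ∀ z, 0 ≤ κ z)
    (hκle : ∀ z, κ z ≤ fracKernel s z) (hC : 0 ≤ C) {x : E}
    (h : ∀ z, -(C * min 1 (‖z‖ ^ 2)) ≤ secondDiff v x z) : -(C * levyMass E s) ≤ symmOp κ v x := by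
  by_cases hint : Integrable fun z => secondDiff v x z * κ z
  · rw [levyMass, ← integral_const_mul, ← integral_neg]
    refine integral_mono ((integrable_min_norm_sq_mul_fracKernel hs0 hs1).const_mul C).neg hint
      fun z => ?_
    calc -(C * (min 1 (‖z‖ ^ 2) * fracKernel s z)) ≤ -(C * min 1 (‖z‖ ^ 2)) * κ z := by
          rw [neg_mul, mul_assoc]
          have := hκle z
          gcongr
      _ ≤ secondDiff v x z * κ z := mul_le_mul_of_nonneg_right (h z) (hκ0 z)
  · rw [symmOp, integral_undef hint, Left.neg_nonpos_iff]
    exact mul_nonneg hC levyMass_nonneg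

lemma tendsto_integral_mul_symmOp_annKernel (hs0 : 0 < s) (hs1 : s < 1) (hσ : 0 < σ)
    (hφ : ContDiff ℝ 2 φ) (hφc : HasCompactSupport φ) (hv : Measurable v) (hM : ∀ x, |v x| ≤ M) :
    Tendsto (fun ε => ∫ x, v x * symmOp (annKernel s ε σ) φ x) (𝓝[>] 0)
      (𝓝 (∫ x, v x * symmOp (annKernel s 0 σ) φ x)) := by
  have hsmall : ∀ᶠ ε : ℝ in 𝓝[>] 0, ε ≤ σ :=
    eventually_nhdsWithin_of_eventually_nhds (eventually_le_nhds hσ)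
  rw [integral_mul_symmOp hs0 hs1 measurable_annKernel (abs_annKernel_le_fracKernel hσ.le) hφ hφc
    hv hM]
  refine Tendsto.congr' (hsmall.mono fun ε hε => (integral_mul_symmOp hs0 hs1 measurable_annKernel
    (abs_annKernel_le_fracKernel hε) hφ hφc hv hM).symm) ?_
  refine tendsto_integral_filter_of_dominated_convergence _ (hsmall.mono fun ε hε =>
      (integrable_prod_mul_secondDiff_mul hs0 hs1 measurable_annKernel
        (abs_annKernel_le_fracKernel hε) hφ hφc hv hM).aestronglyMeasurable) ?_
    (integrable_prod_mul_secondDiff_mul hs0 hs1 measurable_fracKernel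
      (fun z => (abs_of_nonneg (fracKernel_nonneg z)).le) hφ hφc hv hM).norm
    (ae_of_all _ fun p => ?_)
  · filter_upwards [hsmall] with ε hε
    refine ae_of_all _ fun p => ?_
    simp_rw [norm_mul]
    gcongr
    exact (abs_annKernel_le_fracKernel hε _).trans (le_abs_self _)
  · refine tendsto_const_nhds.congr' ?_
    rcases eq_or_ne p.2 0 with hz | hz
    · simp [hz, secondDiff, ← two_mul]
    filter_upwards [Ioo_mem_nhdsGT (norm_pos_iff.2 hz)] with ε hε
    simp [annKernel, truncKernel_of_lt hε.2, truncKernel_of_lt (hε.1.trans hε.2)]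

lemma IsFracHarmonicAt.tendsto_jumpOp_annKernel {x : E} (h : IsFracHarmonicAt s u x) (hs : 0 < s)
    (hσ : 0 < σ) (hu : Measurable u) (hM : ∀ x, |u x| ≤ M) :
    Tendsto (fun ε => jumpOp (annKernel s ε σ) u x) (𝓝[>] 0)
      (𝓝 (-jumpOp (truncKernel s σ) u x)) := by
  rw [← zero_sub]
  refine (h.sub_const _).congr' (eventually_mem_nhdsWithin.mono fun ε hε => ?_)
  exact (jumpOp_sub_kernel (integrable_truncKernel hs hε) (integrable_truncKernel hs hσ)
    hu hM x).symm

lemma jumpOp_annKernel_le_jumpOp_infConv {K : Set E} {N ε : ℝ} {x y : E} (hs : 0 < s) (hε : 0 < ε)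
    (hεσ : ε ≤ σ) (hu : Measurable u) (hM : ∀ x, |u x| ≤ M) (hN : 0 ≤ N)
    (hv : Measurable (infConv u K M N)) (hyK : closedBall y σ ⊆ K)
    (hy : infConv u K M N x = u y + N * ‖x - y‖ ^ 2) :
    jumpOp (annKernel s ε σ) u y ≤ jumpOp (annKernel s ε σ) (infConv u K M N) x := by
  have hκ := integrable_annKernel (E := E) hs hε (hε.trans_le hεσ)
  refine integral_mono (integrable_jump_mul hκ hu hM y)
    (integrable_jump_mul hκ hv (abs_infConv_le hM hN) x) fun z => ?_
  by_cases hz : ε < ‖z‖ ∧ ‖z‖ ≤ σ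
  · refine mul_le_mul_of_nonneg_right ?_ (annKernel_nonneg hεσ z)
    exact sub_le_infConv_sub_infConv hM hN hy (hyK (by simpa using hz.2))
  · simp [annKernel_of_notMem hεσ hz]

lemma neg_mul_levyMass_le_symmOp_infConv {K : Set E} {N : ℝ} {x y : E} (hs0 : 0 < s) (hs1 : s < 1)
    (hκ0 : ∀ z, 0 ≤ κ z) (hκle : ∀ z, κ z ≤ fracKernel s z) (hM : ∀ x, |u x| ≤ M) (hN : 0 ≤ N)
    (hyK : y ∈ K) (hy : infConv u K M N x = u y + N * ‖x - y‖ ^ 2) :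
    -(max (2 * M) N * levyMass E s) ≤ symmOp κ (infConv u K M N) x := by
  have hC : 0 ≤ max (2 * M) N := le_max_of_le_right hN
  refine neg_mul_levyMass_le_symmOp hs0 hs1 hκ0 hκle hC fun z => ?_
  rw [mul_min_of_nonneg _ _ hC, mul_one, neg_le, le_min_iff]
  constructor
  · exact (neg_le_abs _).trans ((norm_secondDiff_le_of_norm_le (f := infConv u K M N)
      (abs_infConv_le hM hN) x z).trans (le_max_left _ _))
  · refine (neg_le.1 (neg_mul_norm_sq_le_secondDiff_infConv hM hN hyK hy)).trans ?_
    gcongr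
    exact le_max_right _ _

/- The inf-convolution `v` satisfies the inequality pointwise on the support of `φ`, and being
semiconcave it is regular enough to pass to the limit `ε → 0` in
`∫ φ * jumpOp (annKernel s ε σ) v = ∫ v * symmOp (annKernel s ε σ) φ`. -/
lemma integral_mul_neg_jumpOp_sub_le_integral_infConv {K : Set E} {N : ℝ} (hs0 : 0 < s)
    (hs1 : s < 1) (hσ : 0 < σ) (hη : 0 < η) (hu : Measurable u) (hM : ∀ x, |u x| ≤ M)
    (hN : 0 ≤ N) (hv : Measurable (infConv u K M N)) (hφ : ContDiff ℝ 2 φ)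
    (hφc : HasCompactSupport φ) (hφ0 : ∀ x, 0 ≤ φ x)
    (hcontact : ∀ x ∈ tsupport φ, ∃ y, closedBall y σ ⊆ K ∧ IsFracHarmonicAt s u y ∧
      infConv u K M N x = u y + N * ‖x - y‖ ^ 2 ∧
      |jumpOp (truncKernel s σ) u x - jumpOp (truncKernel s σ) u y| ≤ η) :
    ∫ x, φ x * (-jumpOp (truncKernel s σ) u x - 2 * η) ≤
      ∫ x, infConv u K M N x * symmOp (annKernel s 0 σ) φ x := by
  set v := infConv u K M N
  have hvM : ∀ x, |v x| ≤ M := abs_infConv_le hM hN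
  have hφint : Integrable φ := hφ.continuous.integrable_of_hasCompactSupport hφc
  obtain ⟨M', hM'⟩ := hφc.exists_bound_of_continuous hφ.continuous
  have hsmall : ∀ᶠ ε : ℝ in 𝓝[>] 0, ε ∈ Ioc 0 σ := Ioc_mem_nhdsGT hσ
  have hpt (x : E) {P : Prop} (h0 : φ x = 0 → P) (hS : x ∈ tsupport φ → P) : P :=
    (em (φ x = 0)).elim h0 fun h => hS (subset_tsupport φ h)
  refine integral_le_of_tendsto_of_eventually_le
    (f := fun ε x => φ x * jumpOp (annKernel s ε σ) v x)
    (b := fun x => φ x * -(max (2 * M) N * levyMass E s)) (l := 𝓝[>] (0 : ℝ))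
    (hφint.mul_const _) ?_ (hsmall.mono fun ε hε => integrable_mul_jumpOp
      (integrable_annKernel hs0 hε.1 hσ) hφint hv hvM) ?_ (fun x => ?_) ?_
  · have := (integrable_mul_jumpOp (integrable_truncKernel hs0 hσ) hφint hu hM).neg.sub
      (hφint.mul_const (2 * η))
    simpa only [mul_sub, mul_neg] using! this
  · filter_upwards [hsmall] with ε hε x
    refine hpt x (fun h => by simp [h]) fun hx => ?_
    obtain ⟨y, hyK, -, hy, -⟩ := hcontact x hx
    rw [jumpOp_eq_symmOp (integrable_annKernel hs0 hε.1 hσ) annKernel_neg hv hvM]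
    exact mul_le_mul_of_nonneg_left (neg_mul_levyMass_le_symmOp_infConv hs0 hs1
      (annKernel_nonneg hε.2) annKernel_le_fracKernel hM hN (hyK (mem_closedBall_self hσ.le)) hy)
      (hφ0 x)
  · refine hpt x (fun h => by simp [h]) fun hx => ?_
    obtain ⟨y, hyK, hharm, hy, hG⟩ := hcontact x hx
    filter_upwards [hsmall, (hharm.tendsto_jumpOp_annKernel hs0 hσ hu hM).eventually
      (eventually_ge_nhds (sub_lt_self _ hη))] with ε hε hlim
    refine mul_le_mul_of_nonneg_left ?_ (hφ0 x)
    linarith [jumpOp_annKernel_le_jumpOp_infConv hs0 hε.1 hε.2 hu hM hN hv hyK hy, abs_le.1 hG]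
  · refine (tendsto_integral_mul_symmOp_annKernel hs0 hs1 hσ hφ hφc hv hvM).congr'
      (hsmall.mono fun ε hε => ?_)
    have hκ := integrable_annKernel (E := E) hs0 hε.1 hσ
    simp_rw [integral_mul_jumpOp_comm hκ annKernel_neg hφint hφ.continuous.measurable hM' hv hvM,
      jumpOp_eq_symmOp hκ annKernel_neg hφ.continuous.measurable hM']

lemma integral_mul_neg_jumpOp_sub_le (hs0 : 0 < s) (hs1 : s < 1) (hσ : 0 < σ) (hη : 0 < η)
    (hu : Measurable u) (hM : ∀ x, |u x| ≤ M)
    (huK : ContinuousOn u (cthickening (2 * σ) (tsupport φ)))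
    (hharm : ∀ x ∈ cthickening (2 * σ) (tsupport φ), IsFracHarmonicAt s u x)
    (hφ : ContDiff ℝ 2 φ) (hφc : HasCompactSupport φ) (hφ0 : ∀ x, 0 ≤ φ x) :
    ∫ x, φ x * (-jumpOp (truncKernel s σ) u x - 2 * η) ≤
      (∫ x, u x * symmOp (annKernel s 0 σ) φ x) + η * ∫ x, |symmOp (annKernel s 0 σ) φ x| := by
  set K := cthickening (2 * σ) (tsupport φ)
  have hK : IsCompact K := hφc.cthickening
  have hSK : cthickening σ (tsupport φ) ⊆ K := cthickening_mono (by linarith) _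
  have hG := continuousOn_jumpOp (integrable_truncKernel hs0 hσ) hu hM huK
  obtain ⟨N, hN, happrox⟩ := exists_infConv_approx hK huK hM hG hσ hη
  have hv := (continuous_infConv (M := M) (N := N) hK huK).measurable
  have hnear := integrable_symmOp hs0 hs1 measurable_annKernel
    (abs_annKernel_le_fracKernel hσ.le) hφ hφc
  calc _ ≤ ∫ x, infConv u K M N x * symmOp (annKernel s 0 σ) φ x := by
        refine integral_mul_neg_jumpOp_sub_le_integral_infConv hs0 hs1 hσ hη hu hM hN hv hφ hφc hφ0
          fun x hx => ?_
        obtain ⟨y, hyK, hxy, hy, -, hGxy⟩ := happrox x (self_subset_cthickening _ hx)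
        refine ⟨y, fun z hz => mem_cthickening_of_dist_le z x _ _ hx ?_, hharm y hyK, hy, hGxy⟩
        linarith [dist_triangle_right z x y, mem_closedBall.1 hz, dist_eq_norm x y]
    _ ≤ ∫ x, (u x * symmOp (annKernel s 0 σ) φ x + η * |symmOp (annKernel s 0 σ) φ x|) := by
        refine integral_mono (hnear.bdd_mul hv.aestronglyMeasurable
            (ae_of_all _ (abs_infConv_le hM hN)))
          ((hnear.bdd_mul hu.aestronglyMeasurable (ae_of_all _ hM)).add (hnear.abs.const_mul η))
          fun x => ?_
        by_cases hx : x ∈ cthickening σ (tsupport φ)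
        · obtain ⟨-, -, -, -, hux, -⟩ := happrox x (hSK hx)
          nlinarith [neg_abs_le ((u x - infConv u K M N x) * symmOp (annKernel s 0 σ) φ x),
            abs_mul (u x - infConv u K M N x) (symmOp (annKernel s 0 σ) φ x),
            mul_le_mul_of_nonneg_right hux (abs_nonneg (symmOp (annKernel s 0 σ) φ x))]
        · simp [symmOp_eq_zero_of_notMem_cthickening (κ := annKernel s 0 σ)
            (fun _ hz => annKernel_of_notMem hσ.le fun h => h.2.not_gt hz) hx]
    _ = _ := by
        rw [integral_add (hnear.bdd_mul hu.aestronglyMeasurable (ae_of_all _ hM))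
          (hnear.abs.const_mul η), integral_const_mul]

lemma symmOp_fracKernel_eq_add (hs0 : 0 < s) (hs1 : s < 1) (hσ : 0 ≤ σ) (hφ : ContDiff ℝ 2 φ)
    (hφc : HasCompactSupport φ) (x : E) : symmOp (fracKernel s) φ x =
      symmOp (annKernel s 0 σ) φ x + symmOp (truncKernel s σ) φ x := by
  obtain ⟨C, -, hC⟩ := exists_norm_secondDiff_le_min hφ hφc
  rw [symmOp, symmOp, symmOp, ← integral_add
    (integrable_secondDiff_mul hs0 hs1 measurable_annKernel (abs_annKernel_le_fracKernel hσ)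
      hφ.continuous.measurable (hC x))
    (integrable_secondDiff_mul hs0 hs1 measurable_truncKernel abs_truncKernel_le_fracKernel
      hφ.continuous.measurable (hC x))]
  simp_rw [← mul_add, annKernel, Pi.sub_apply, sub_add_cancel, truncKernel_zero hs0]

lemma integral_mul_symmOp_nonneg (hs0 : 0 < s) (hs1 : s < 1) (hσ : 0 < σ)
    (hu : Measurable u) (hM : ∀ x, |u x| ≤ M)
    (huK : ContinuousOn u (cthickening (2 * σ) (tsupport φ)))
    (hharm : ∀ x ∈ cthickening (2 * σ) (tsupport φ), IsFracHarmonicAt s u x)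
    (hφ : ContDiff ℝ 2 φ) (hφc : HasCompactSupport φ) (hφ0 : ∀ x, 0 ≤ φ x) :
    0 ≤ ∫ x, u x * symmOp (fracKernel s) φ x := by
  have hφint : Integrable φ := hφ.continuous.integrable_of_hasCompactSupport hφc
  obtain ⟨M', hM'⟩ := hφc.exists_bound_of_continuous hφ.continuous
  have hκ := integrable_truncKernel (E := E) hs0 hσ
  have hφG := integrable_mul_jumpOp hκ hφint hu hM
  have hnear := integrable_symmOp hs0 hs1 measurable_annKernel
    (abs_annKernel_le_fracKernel hσ.le) hφ hφc
  have hfar := integrable_symmOp hs0 hs1 measurable_truncKernel abs_truncKernel_le_fracKernel hφ hφc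
    (κ := truncKernel s σ)
  have hdual : ∫ x, φ x * jumpOp (truncKernel s σ) u x =
      ∫ x, u x * symmOp (truncKernel s σ) φ x := by
    simp_rw [integral_mul_jumpOp_comm hκ truncKernel_neg hφint hφ.continuous.measurable hM' hu hM,
      jumpOp_eq_symmOp hκ truncKernel_neg hφ.continuous.measurable hM']
  have hsplit : ∫ x, u x * symmOp (fracKernel s) φ x =
      (∫ x, u x * symmOp (annKernel s 0 σ) φ x) + ∫ x, u x * symmOp (truncKernel s σ) φ x := by
    rw [← integral_add (hnear.bdd_mul hu.aestronglyMeasurable (ae_of_all _ hM))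
      (hfar.bdd_mul hu.aestronglyMeasurable (ae_of_all _ hM))]
    simp_rw [← mul_add, symmOp_fracKernel_eq_add hs0 hs1 hσ.le hφ hφc]
  set B := 2 * (∫ x, φ x) + ∫ x, |symmOp (annKernel s 0 σ) φ x| with hB
  have hle (η : ℝ) (hη : 0 < η) : 0 ≤ (∫ x, u x * symmOp (fracKernel s) φ x) + η * B := by
    have := integral_mul_neg_jumpOp_sub_le hs0 hs1 hσ hη hu hM huK hharm hφ hφc hφ0
    simp_rw [mul_sub, mul_neg] at this
    rw [integral_sub hφG.fun_neg (hφint.mul_const _), integral_neg, integral_mul_const,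
      hdual] at this
    rw [hsplit, hB]
    linarith
  have hlim : Tendsto (fun η => (∫ x, u x * symmOp (fracKernel s) φ x) + η * B) (𝓝[>] 0)
      (𝓝 ((∫ x, u x * symmOp (fracKernel s) φ x) + 0 * B)) :=
    (tendsto_const_nhds.add (tendsto_id.mul_const B)).mono_left nhdsWithin_le_nhds
  simpa using ge_of_tendsto hlim (eventually_mem_nhdsWithin.mono hle)

lemma integral_mul_symmOp_eq_zero (hs0 : 0 < s) (hs1 : s < 1) {Ω : Set E} (hΩ : IsOpen Ω)
    (hu : Measurable u) (hM : ∀ x, |u x| ≤ M) (hharm : ∀ x ∈ Ω, IsFracHarmonicAt s u x)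
    (hφ : ContDiff ℝ 2 φ) (hφc : HasCompactSupport φ) (hφ0 : ∀ x, 0 ≤ φ x)
    (hsupp : tsupport φ ⊆ Ω) : ∫ x, u x * symmOp (fracKernel s) φ x = 0 := by
  obtain ⟨δ, hδ, hδΩ⟩ := hφc.exists_cthickening_subset_open hΩ hsupp
  have hK : cthickening (2 * (δ / 2)) (tsupport φ) ⊆ Ω := by rwa [mul_div_cancel₀ δ two_ne_zero]
  have hcont := continuousOn_of_isFracHarmonicAt hs0 hs1 hu hM hΩ hharm
  refine le_antisymm ?_ (integral_mul_symmOp_nonneg hs0 hs1 (half_pos hδ) hu hM (hcont.mono hK)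
    (fun x hx => hharm x (hK hx)) hφ hφc hφ0)
  have := integral_mul_symmOp_nonneg hs0 hs1 (half_pos hδ) hu.neg (M := M) (by simpa using hM)
    (hcont.mono hK).neg (fun x hx => (hharm x (hK hx)).neg) hφ hφc hφ0
  simpa [integral_neg] using this

lemma symmOp_shiftIntegral_eq_zero (hs0 : 0 < s) (hs1 : s < 1) {Ω : Set E} (hΩ : IsOpen Ω)
    (hu : Measurable u) (hM : ∀ x, |u x| ≤ M) (hharm : ∀ x ∈ Ω, IsFracHarmonicAt s u x)
    (hφ : ContDiff ℝ 2 φ) (hφc : HasCompactSupport φ) (hφ0 : ∀ x, 0 ≤ φ x) {x : E}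
    (hsupp : ∀ y ∈ tsupport φ, x + y ∈ Ω) :
    symmOp (fracKernel s) (shiftIntegral φ u) x = 0 := by
  set ψ : E → ℝ := fun y => φ (y - x) with hψ
  have hψ2 : ContDiff ℝ 2 ψ := hφ.comp (contDiff_id.sub contDiff_const)
  have hψc : HasCompactSupport ψ := hφc.comp_homeomorph (Homeomorph.subRight x)
  have hψsupp : tsupport ψ ⊆ Ω := fun y hy => by
    have : y - x ∈ tsupport φ :=
      tsupport_comp_subset_preimage φ (continuous_id.sub continuous_const) hy
    simpa using hsupp _ this
  rw [← integral_mul_symmOp_eq_zero hs0 hs1 hΩ hu hM hharm hψ2 hψc (fun y => hφ0 _) hψsupp]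
  have hsecond (z : E) :
      secondDiff (shiftIntegral φ u) x z = ∫ y, u y * secondDiff ψ y z := by
    rw [secondDiff_shiftIntegral (hφ.continuous.integrable_of_hasCompactSupport hφc) hu hM]
    simp only [secondDiff, hψ, sub_add_eq_add_sub, sub_right_comm]
  simp_rw [symmOp, hsecond, ← integral_const_mul, ← integral_mul_const, mul_assoc]
  exact (integral_integral_swap (integrable_prod_mul_secondDiff_mul hs0 hs1 measurable_fracKernel
    (fun z => (abs_of_nonneg (fracKernel_nonneg z)).le) hψ2 hψc hu hM)).symm

end WeakForm

section Gaussian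

variable {E : Type*} [NormedAddCommGroup E] [InnerProductSpace ℝ E] {r t s M : ℝ}

/-- The Gaussian probability density of variance proportional to `t`, i.e. the heat kernel at time
`t / 4`; this time scale keeps the exponent free of constants. -/
noncomputable def gauss (t : ℝ) (w : E) : ℝ :=
  (Real.pi * t) ^ (-(finrank ℝ E / 2 : ℝ)) * Real.exp (-‖w‖ ^ 2 / t)

lemma gauss_pos (ht : 0 < t) (w : E) : 0 < gauss t w := by
  unfold gauss; positivity

lemma gauss_neg (w : E) : gauss t (-w) = gauss t w := by simp [gauss]

lemma gauss_mul_gauss_add (hr : 0 < r) (ht : 0 < t) (w z : E) :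
    gauss r (w + z) * gauss t z =
      gauss (t + r) w * gauss (r * t / (t + r)) (z + (t / (t + r)) • w) := by
  have hprefactor : (Real.pi * r) ^ (-(finrank ℝ E / 2 : ℝ)) *
      (Real.pi * t) ^ (-(finrank ℝ E / 2 : ℝ)) = (Real.pi * (t + r)) ^ (-(finrank ℝ E / 2 : ℝ)) *
        (Real.pi * (r * t / (t + r))) ^ (-(finrank ℝ E / 2 : ℝ)) := by
    rw [← Real.mul_rpow (by positivity) (by positivity),
      ← Real.mul_rpow (by positivity) (by positivity)]
    congr 1
    field_simp
  have hexponent : -‖w + z‖ ^ 2 / r + -‖z‖ ^ 2 / t =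
      -‖w‖ ^ 2 / (t + r) + -‖z + (t / (t + r)) • w‖ ^ 2 / (r * t / (t + r)) := by
    rw [norm_add_sq_real, norm_add_sq_real, norm_smul, inner_smul_right, real_inner_comm,
      Real.norm_of_nonneg (by positivity)]
    field_simp
    ring
  unfold gauss
  rw [mul_mul_mul_comm, ← Real.exp_add, hprefactor, hexponent, Real.exp_add, mul_mul_mul_comm]

lemma gauss_smul_sqrt (ht : 0 < t) (w : E) :
    gauss t (√t • w) = t ^ (-(finrank ℝ E / 2 : ℝ)) * gauss 1 w := by
  rw [gauss, gauss, Real.mul_rpow Real.pi_pos.le ht.le, norm_smul,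
    Real.norm_of_nonneg (Real.sqrt_nonneg t), mul_pow, Real.sq_sqrt ht.le, mul_one, neg_div,
    mul_div_cancel_left₀ _ ht.ne', div_one]
  ring

/-- The constant `π^(-d/2) Γ(d/2 + s)` in the representation of `fracKernel s` as a mixture of
Gaussians. -/
noncomputable def mixtureConst (E : Type*) [NormedAddCommGroup E] [InnerProductSpace ℝ E] (s : ℝ) :
    ℝ :=
  Real.pi ^ (-(finrank ℝ E / 2 : ℝ)) * Real.Gamma (finrank ℝ E / 2 + s)

lemma mixtureConst_pos (hs : 0 < s) : 0 < mixtureConst E s :=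
  mul_pos (by positivity) (Real.Gamma_pos_of_pos (by positivity))

lemma integral_rpow_mul_gauss (hs : 0 < s) {z : E} (hz : z ≠ 0) :
    ∫ r in Ioi 0, r ^ (-1 - s) * gauss r z = mixtureConst E s * fracKernel s z := by
  have hz0 : 0 < ‖z‖ := norm_pos_iff.2 hz
  set d : ℝ := finrank ℝ E / 2 with hd
  have hGamma := Real.integral_rpow_mul_exp_neg_mul_Ioi (a := d + s) (r := ‖z‖ ^ 2)
    (by positivity) (by positivity)
  rw [← integral_comp_rpow_Ioi _ (p := -1) (by norm_num)] at hGamma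
  have hinvert : ∀ r ∈ Ioi (0 : ℝ), r ^ (-1 - s) * gauss r z =
      Real.pi ^ (-d) * ((|(-1 : ℝ)| * r ^ ((-1 : ℝ) - 1)) •
        ((r ^ (-1 : ℝ)) ^ (d + s - 1) * Real.exp (-(‖z‖ ^ 2 * r ^ (-1 : ℝ))))) := by
    intro r (hr : 0 < r)
    have hpow : r ^ (-1 - s) * r ^ (-d) = r ^ ((-1 : ℝ) - 1) * r ^ (-1 * (d + s - 1)) := by
      rw [← Real.rpow_add hr, ← Real.rpow_add hr]
      ring_nf
    rw [gauss, ← hd, abs_neg, abs_one, one_mul, smul_eq_mul, ← Real.rpow_mul hr.le,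
      Real.mul_rpow Real.pi_pos.le hr.le, Real.rpow_neg_one, neg_div, div_eq_mul_inv (_ ^ 2)]
    linear_combination (Real.pi ^ (-d) * Real.exp (-(‖z‖ ^ 2 * r⁻¹))) * hpow
  have hnorm : (1 / ‖z‖ ^ 2) ^ (d + s) = fracKernel s z := by
    rw [fracKernel, one_div, Real.inv_rpow (by positivity), ← Real.rpow_neg (by positivity),
      ← Real.rpow_natCast, ← Real.rpow_mul hz0.le]
    congr 1
    rw [hd]
    push_cast
    ring
  rw [setIntegral_congr_fun measurableSet_Ioi hinvert, integral_const_mul, hGamma, hnorm,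
    mixtureConst]
  ring

lemma integrableOn_rpow_mul_gauss (hs : 0 < s) {z : E} (hz : z ≠ 0) :
    IntegrableOn (fun r => r ^ (-1 - s) * gauss r z) (Ioi 0) :=
  not_imp_comm.1 integral_undef
    (integral_rpow_mul_gauss hs hz ▸ (mul_pos (mixtureConst_pos hs) (fracKernel_pos hz)).ne')

variable [MeasurableSpace E] [BorelSpace E]

lemma measurable_gauss : Measurable (gauss t : E → ℝ) := by
  unfold gauss; fun_prop

lemma measurable_uncurry_gauss : Measurable fun p : ℝ × E => gauss p.1 p.2 := by
  unfold gauss; fun_prop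

variable [FiniteDimensional ℝ E]

lemma integral_gauss (ht : 0 < t) : ∫ w : E, gauss t w = 1 := by
  have hgauss := GaussianFourier.integral_rexp_neg_mul_sq_norm (V := E) (inv_pos.2 ht)
  simp only [gauss, div_eq_inv_mul _ t, mul_neg, integral_const_mul]
  simp only [neg_mul, div_inv_eq_mul] at hgauss
  rw [hgauss, ← Real.rpow_add (by positivity), div_eq_inv_mul, neg_add_cancel, Real.rpow_zero]

lemma integrable_gauss (ht : 0 < t) : Integrable (gauss t : E → ℝ) :=
  not_imp_comm.1 integral_undef (integral_gauss (E := E) ht ▸ one_ne_zero)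

lemma abs_shiftIntegral_gauss_le {u : E → ℝ} (ht : 0 < t) (hM : ∀ x, |u x| ≤ M) (x : E) :
    |shiftIntegral (gauss t) u x| ≤ M := by
  have hle := norm_integral_le_of_norm_le ((integrable_gauss (E := E) ht).const_mul M)
    (ae_of_all _ fun z => show ‖u (x + z) * gauss t z‖ ≤ M * gauss t z by
      rw [norm_mul, Real.norm_of_nonneg (gauss_pos ht z).le]
      exact mul_le_mul_of_nonneg_right (hM _) (gauss_pos ht z).le)
  rwa [integral_const_mul, integral_gauss ht, mul_one] at hle

lemma shiftIntegral_gauss_gauss (hr : 0 < r) (ht : 0 < t) :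
    shiftIntegral (gauss t) (gauss r : E → ℝ) = gauss (t + r) := by
  ext w
  simp_rw [shiftIntegral, gauss_mul_gauss_add hr ht]
  rw [integral_const_mul, integral_add_right_eq_self, integral_gauss (by positivity), mul_one]

variable {u : E → ℝ}

lemma shiftIntegral_gauss_shiftIntegral_gauss (hr : 0 < r) (ht : 0 < t) (hu : Measurable u)
    (hM : ∀ x, |u x| ≤ M) (x : E) :
    shiftIntegral (gauss r) (shiftIntegral (gauss t) u) x = shiftIntegral (gauss (t + r)) u x := by
  have hconv (y : E) :
      shiftIntegral (gauss t) (fun z => gauss r (z - x)) y = gauss (t + r) (y - x) := by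
    rw [← shiftIntegral_gauss_gauss hr ht]
    simp only [shiftIntegral, add_sub_right_comm]
  simp_rw [shiftIntegral_eq_integral_mul_comp_sub (κ := gauss r), mul_comm _ (gauss r _)]
  rw [integral_mul_shiftIntegral_comm (integrable_gauss ht) gauss_neg
    ((integrable_gauss hr).comp_sub_right x) hu hM, shiftIntegral_eq_integral_mul_comp_sub]
  simp_rw [hconv]

lemma symmOp_gauss_shiftIntegral_gauss (hr : 0 < r) (ht : 0 < t) (hu : Measurable u)
    (hM : ∀ x, |u x| ≤ M) (x : E) :
    symmOp (gauss r) (shiftIntegral (gauss t) u) x =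
      shiftIntegral (gauss t) u x - shiftIntegral (gauss (t + r)) u x := by
  have hcont := continuous_shiftIntegral (integrable_gauss ht) hu hM
  rw [← jumpOp_eq_symmOp (integrable_gauss hr) gauss_neg hcont.measurable
      (abs_shiftIntegral_gauss_le ht hM),
    jumpOp_eq (integrable_gauss hr) hcont.measurable (abs_shiftIntegral_gauss_le ht hM),
    integral_gauss hr, mul_one, shiftIntegral_gauss_shiftIntegral_gauss hr ht hu hM]

lemma shiftIntegral_gauss_eq_integral_comp_smul (ht : 0 < t) (x : E) :
    shiftIntegral (gauss t) u x = ∫ z, u (x + √t • z) * gauss 1 z := by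
  have hsqrt : (√t ^ finrank ℝ E : ℝ) = t ^ (finrank ℝ E / 2 : ℝ) := by
    rw [Real.sqrt_eq_rpow, ← Real.rpow_mul_natCast ht.le, one_div_mul_eq_div]
  have hscale := Measure.integral_comp_smul_of_nonneg (volume : Measure E)
    (fun z => u (x + z) * gauss t z) (√t) (hR := Real.sqrt_nonneg t)
  simp_rw [gauss_smul_sqrt ht, mul_left_comm, integral_const_mul, hsqrt, smul_eq_mul,
    Real.rpow_neg ht.le] at hscale
  exact (mul_left_cancel₀ (by positivity) hscale).symm

lemma tendsto_shiftIntegral_gauss (hu : Measurable u) (hM : ∀ x, |u x| ≤ M) {x : E}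
    (hx : ContinuousAt u x) :
    Tendsto (fun t => shiftIntegral (gauss t) u x) (𝓝[>] 0) (𝓝 (u x)) := by
  have hscale : (fun t => ∫ z, u (x + √t • z) * gauss 1 z) =ᶠ[𝓝[>] 0]
      fun t => shiftIntegral (gauss t) u x :=
    eventually_mem_nhdsWithin.mono fun t ht =>
      (shiftIntegral_gauss_eq_integral_comp_smul ht x).symm
  have hlimit : ∫ z : E, u x * gauss 1 z = u x := by
    rw [integral_const_mul, integral_gauss one_pos, mul_one]
  rw [← hlimit]
  refine (tendsto_integral_filter_of_dominated_convergence (fun z => M * gauss 1 z)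
    (.of_forall fun t => Measurable.aestronglyMeasurable ?_)
    (.of_forall fun t => ae_of_all _ fun z => ?_) ((integrable_gauss one_pos).const_mul M)
    (ae_of_all _ fun z => Tendsto.mul_const _ ?_)).congr' hscale
  · have := measurable_gauss (E := E) (t := 1)
    fun_prop
  · rw [norm_mul, Real.norm_of_nonneg (gauss_pos one_pos z).le]
    exact mul_le_mul_of_nonneg_right (hM _) (gauss_pos one_pos z).le
  · exact hx.tendsto.comp ((Continuous.tendsto' (by fun_prop) 0 x (by simp)).mono_left
      nhdsWithin_le_nhds)

end Gaussian

section Marchaud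

variable {s τ v M : ℝ} {U W b : ℝ → ℝ}

/-- The Marchaud fractional derivative `∫₀^∞ (U t - U (t + r)) r^(-1-s) dr` of order `s`, up to its
normalising constant. -/
noncomputable def marchaud (s : ℝ) (U : ℝ → ℝ) (t : ℝ) : ℝ :=
  ∫ r in Ioi 0, r ^ (-1 - s) * (U t - U (t + r))

lemma integrableOn_rpow_neg_div_one_add (hs0 : 0 < s) (hs1 : s < 1) :
    IntegrableOn (fun v : ℝ => v ^ (-s) / (1 + v)) (Ioi 0) := by
  have hmeas : Measurable fun v : ℝ => v ^ (-s) / (1 + v) := by fun_prop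
  rw [← Ioc_union_Ioi_eq_Ioi (zero_le_one' ℝ)]
  refine IntegrableOn.union ?_ ?_
  · have hdom : IntegrableOn (fun v : ℝ => v ^ (-s)) (Ioc 0 1) :=
      (intervalIntegrable_iff_integrableOn_Ioc_of_le zero_le_one).1
        (intervalIntegral.intervalIntegrable_rpow' (by linarith))
    refine hdom.mono' hmeas.aestronglyMeasurable
      ((ae_restrict_iff' measurableSet_Ioc).2 (ae_of_all _ fun v ⟨hv, _⟩ => ?_))
    rw [Real.norm_of_nonneg (by positivity)]
    exact div_le_self (by positivity) (by linarith)
  · have hdom : IntegrableOn (fun v : ℝ => v ^ (-s - 1)) (Ioi 1) :=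
      integrableOn_Ioi_rpow_of_lt (by linarith) one_pos
    refine hdom.mono' hmeas.aestronglyMeasurable
      ((ae_restrict_iff' measurableSet_Ioi).2 (ae_of_all _ fun v (hv : 1 < v) => ?_))
    have hv0 : 0 < v := one_pos.trans hv
    rw [Real.norm_of_nonneg (by positivity), Real.rpow_sub_one hv0.ne']
    gcongr
    linarith

lemma integral_rpow_neg_div_one_add_pos (hs0 : 0 < s) (hs1 : s < 1) :
    0 < ∫ v in Ioi (0 : ℝ), v ^ (-s) / (1 + v) := by
  have hpos : ∀ v ∈ Ioi (0 : ℝ), 0 < v ^ (-s) / (1 + v) := fun v (hv : 0 < v) => by positivity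
  rw [setIntegral_pos_iff_support_of_nonneg_ae
    ((ae_restrict_iff' measurableSet_Ioi).2 (ae_of_all _ fun v hv => (hpos v hv).le))
    (integrableOn_rpow_neg_div_one_add hs0 hs1),
    inter_eq_right.2 fun v hv => Function.mem_support.2 (hpos v hv).ne', Real.volume_Ioi]
  exact ENNReal.zero_lt_top

lemma integral_Ioi_rpow_neg_mul_comp_mul {c : ℝ} (hc : 0 < c) (f : ℝ → ℝ) (p : ℝ) :
    ∫ v in Ioi 0, v ^ (-p) * f (v * c) = c ^ (p - 1) * ∫ v in Ioi 0, v ^ (-p) * f v := by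
  have hscale := integral_comp_mul_right_Ioi (fun v => v ^ (-p) * f v) 0 hc
  rw [zero_mul, smul_eq_mul] at hscale
  rw [Real.rpow_sub_one hc.ne', div_eq_mul_inv, mul_assoc, ← hscale, ← integral_const_mul]
  refine setIntegral_congr_fun measurableSet_Ioi fun v (hv : 0 < v) => ?_
  rw [Real.mul_rpow hv.le hc.le, Real.rpow_neg hc.le]
  field_simp

lemma integrableOn_Ioi_rpow_neg_mul_comp_mul {c p : ℝ} {f : ℝ → ℝ} (hc : 0 < c)
    (hf : IntegrableOn (fun v => v ^ (-p) * f v) (Ioi 0)) :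
    IntegrableOn (fun v => v ^ (-p) * f (v * c)) (Ioi 0) := by
  have hscale := (integrableOn_Ioi_comp_mul_right_iff (fun v => v ^ (-p) * f v) 0 hc).2
    (by rwa [zero_mul])
  refine IntegrableOn.congr_fun (hscale.const_mul (c ^ p)) (fun v (hv : 0 < v) => ?_)
    measurableSet_Ioi
  rw [Real.mul_rpow hv.le hc.le, Real.rpow_neg hc.le]
  field_simp

lemma integrable_prod_rpow_neg_mul_comp_mul (hs0 : 0 < s) (hW : Measurable W)
    (hint : IntegrableOn (fun v => v ^ (-s) * W v) (Ioi 0)) :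
    Integrable (fun p : ℝ × ℝ => p.1 ^ (-s) * W (p.1 * p.2))
      ((volume.restrict (Ioi 0)).prod (volume.restrict (Ioc 0 1))) := by
  have hmeas : Measurable fun p : ℝ × ℝ => p.1 ^ (-s) * W (p.1 * p.2) := by fun_prop
  have habs : ∀ a ∈ Ioc (0 : ℝ) 1, ∫ v in Ioi 0, ‖v ^ (-s) * W (v * a)‖ =
      a ^ (s - 1) * ∫ v in Ioi 0, v ^ (-s) * ‖W v‖ := fun a ha => by
    rw [← integral_Ioi_rpow_neg_mul_comp_mul ha.1]
    refine setIntegral_congr_fun measurableSet_Ioi fun v (hv : 0 < v) => ?_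
    rw [norm_mul, Real.norm_of_nonneg (by positivity)]
  rw [integrable_prod_iff' hmeas.aestronglyMeasurable]
  refine ⟨(ae_restrict_iff' measurableSet_Ioc).2 (ae_of_all _ fun a ha =>
    integrableOn_Ioi_rpow_neg_mul_comp_mul ha.1 hint), ?_⟩
  refine IntegrableOn.congr_fun ?_ (fun a ha => (habs a ha).symm) measurableSet_Ioc
  exact ((intervalIntegrable_iff_integrableOn_Ioc_of_le zero_le_one).1
    (intervalIntegral.intervalIntegrable_rpow' (by linarith))).mul_const _

lemma integral_rpow_neg_one_sub_mul_integral (hs0 : 0 < s) (hW : Measurable W)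
    (hint : IntegrableOn (fun v => v ^ (-s) * W v) (Ioi 0)) :
    ∫ v in Ioi 0, v ^ (-1 - s) * ∫ a in 0..v, W a = s⁻¹ * ∫ v in Ioi 0, v ^ (-s) * W v := by
  have hunit : ∀ v ∈ Ioi (0 : ℝ), v ^ (-1 - s) * ∫ a in 0..v, W a =
      ∫ a in Ioc 0 1, v ^ (-s) * W (v * a) := fun v (hv : 0 < v) => by
    have hsubst := intervalIntegral.mul_integral_comp_mul_left (f := W) (a := 0) (b := 1) v
    rw [mul_zero, mul_one] at hsubst
    rw [integral_const_mul, ← intervalIntegral.integral_of_le zero_le_one, ← hsubst,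
      show -1 - s = -s - 1 by ring, Real.rpow_sub_one hv.ne']
    field_simp
  have hpow : ∫ a in Ioc (0 : ℝ) 1, a ^ (s - 1) = s⁻¹ := by
    rw [← intervalIntegral.integral_of_le zero_le_one, integral_rpow (Or.inl (by linarith))]
    simp [hs0.ne']
  rw [setIntegral_congr_fun measurableSet_Ioi hunit,
    integral_integral_swap (integrable_prod_rpow_neg_mul_comp_mul hs0 hW hint),
    setIntegral_congr_fun measurableSet_Ioc fun a ha => integral_Ioi_rpow_neg_mul_comp_mul ha.1 W s,
    integral_mul_const, hpow]

lemma intervalIntegrable_div_self (hU : Measurable U) (hM : ∀ t > 0, |U t| ≤ M) {a b : ℝ}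
    (ha : 0 < a) (hb : 0 < b) : IntervalIntegrable (fun t => U t / t) volume a b := by
  have hM0 : 0 ≤ M := (abs_nonneg _).trans (hM a ha)
  refine intervalIntegrable_iff.2 (Measure.integrableOn_of_bounded (M := M / min a b) (by simp)
    (Measurable.aestronglyMeasurable (by fun_prop))
    ((ae_restrict_iff' measurableSet_uIoc).2 (ae_of_all _ fun t ht => ?_)))
  have hmin : 0 < min a b := lt_min ha hb
  have ht0 : 0 < t := hmin.trans ht.1
  rw [norm_div, Real.norm_of_nonneg ht0.le]
  exact div_le_div₀ hM0 (hM t ht0) hmin ht.1.le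

lemma integral_comp_mul_div_self {c : ℝ} (hc : c ≠ 0) (U : ℝ → ℝ) (a b : ℝ) :
    ∫ t in a..b, U (c * t) / t = ∫ t in c * a..c * b, U t / t := by
  rw [← intervalIntegral.mul_integral_comp_mul_left, ← intervalIntegral.integral_const_mul]
  simp_rw [← mul_div_assoc, mul_div_mul_left _ _ hc]

lemma integral_sub_comp_mul_div_self (hU : Measurable U) (hM : ∀ t > 0, |U t| ≤ M) (hτ : 0 < τ)
    (hv : 0 < v) :
    ∫ t in τ..1, (U t - U ((1 + v) * t)) / t =
      ∫ a in 0..v, (U (τ * (1 + a)) - U (1 + a)) / (1 + a) := by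
  have hv1 : 0 < 1 + v := by linarith
  have hint {a b c : ℝ} (ha : 0 < a) (hb : 0 < b) (hc : 0 < c) :
      IntervalIntegrable (fun t => U (c * t) / t) volume a b :=
    intervalIntegrable_div_self (hU.comp (measurable_id.const_mul c))
      (fun t ht => hM _ (mul_pos hc ht)) ha hb
  have hint' {a b : ℝ} (ha : 0 < a) (hb : 0 < b) := intervalIntegrable_div_self hU hM ha hb
  have hshift := intervalIntegral.integral_comp_add_left (a := 0) (b := v)
    (fun t => (U (τ * t) - U t) / t) 1
  rw [hshift, add_zero]
  simp_rw [sub_div]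
  rw [intervalIntegral.integral_sub (hint' hτ one_pos) (hint hτ one_pos hv1),
    intervalIntegral.integral_sub (hint one_pos hv1 hτ) (hint' one_pos hv1),
    integral_comp_mul_div_self hv1.ne', integral_comp_mul_div_self hτ.ne', mul_one, mul_one,
    mul_comm τ, intervalIntegral.integral_interval_sub_interval_comm (hint' hτ one_pos)
      (hint' (by positivity) hv1) (hint' hτ (by positivity))]

lemma rpow_mul_marchaud {t : ℝ} (ht : 0 < t) (s : ℝ) (U : ℝ → ℝ) :
    t ^ (s - 1) * marchaud s U t =
      ∫ v in Ioi 0, v ^ (-1 - s) * ((U t - U ((1 + v) * t)) / t) := by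
  have hscale := integral_Ioi_rpow_neg_mul_comp_mul ht (fun r => (U t - U (t + r)) / t) (1 + s)
  rw [neg_add'] at hscale
  simp_rw [one_add_mul, hscale, marchaud, mul_div_assoc', integral_div]
  rw [add_sub_cancel_left, Real.rpow_sub_one ht.ne']
  ring

lemma integrable_prod_rpow_mul_sub_comp_mul_div (hτ : 0 < τ) (hU : Measurable U)
    (hb : IntegrableOn (fun r => r ^ (-1 - s) * b r) (Ioi 0))
    (hUb : ∀ t ∈ Ioc τ 1, ∀ r > 0, |U t - U (t + r)| ≤ b r) :
    Integrable (fun p : ℝ × ℝ => p.2 ^ (-1 - s) * ((U p.1 - U ((1 + p.2) * p.1)) / p.1))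
      ((volume.restrict (Ioc τ 1)).prod (volume.restrict (Ioi 0))) := by
  rw [show -1 - s = -(1 + s) by ring] at hb ⊢
  have hmeas : Measurable fun p : ℝ × ℝ =>
      p.2 ^ (-(1 + s)) * ((U p.1 - U ((1 + p.2) * p.1)) / p.1) := by fun_prop
  have hbound : ∀ t ∈ Ioc τ 1, ∀ v ∈ Ioi (0 : ℝ),
      ‖v ^ (-(1 + s)) * ((U t - U ((1 + v) * t)) / t)‖ ≤ v ^ (-(1 + s)) * (b (v * t) / τ) := by
    intro t ht v (hv : 0 < v)
    have ht0 : 0 < t := hτ.trans ht.1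
    have hle := hUb t ht (v * t) (mul_pos hv ht0)
    rw [norm_mul, norm_div, Real.norm_of_nonneg (by positivity), Real.norm_of_nonneg ht0.le,
      one_add_mul]
    gcongr
    exacts [(abs_nonneg _).trans hle, hle, ht.1.le]
  have hdom : ∀ t ∈ Ioc τ 1, IntegrableOn (fun v => v ^ (-(1 + s)) * (b (v * t) / τ)) (Ioi 0) :=
    fun t ht => by
      simpa only [mul_div_assoc] using!
        (integrableOn_Ioi_rpow_neg_mul_comp_mul (hτ.trans ht.1) hb).div_const τ
  rw [integrable_prod_iff hmeas.aestronglyMeasurable]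
  refine ⟨(ae_restrict_iff' measurableSet_Ioc).2 (ae_of_all _ fun t ht =>
    (hdom t ht).mono' (hmeas.comp measurable_prodMk_left).aestronglyMeasurable
      ((ae_restrict_iff' measurableSet_Ioi).2 (ae_of_all _ (hbound t ht)))), ?_⟩
  refine Integrable.mono' ((intervalIntegral.intervalIntegrable_rpow (r := 1 + s - 1)
      (Or.inr (notMem_uIcc_of_lt hτ one_pos))).1.mul_const
        (∫ r in Ioi 0, r ^ (-(1 + s)) * (b r / τ)))
    hmeas.aestronglyMeasurable.norm.integral_prod_right'
    ((ae_restrict_iff' measurableSet_Ioc).2 (ae_of_all _ fun t ht => ?_))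
  rw [Real.norm_of_nonneg (integral_nonneg fun _ => norm_nonneg _),
    ← integral_Ioi_rpow_neg_mul_comp_mul (hτ.trans ht.1) (fun r => b r / τ)]
  exact integral_mono_of_nonneg (ae_of_all _ fun _ => norm_nonneg _) (hdom t ht)
    ((ae_restrict_iff' measurableSet_Ioi).2 (ae_of_all _ (hbound t ht)))

lemma integral_rpow_mul_marchaud (hs0 : 0 < s) (hs1 : s < 1) (hτ0 : 0 < τ) (hτ1 : τ ≤ 1)
    (hU : Measurable U) (hM : ∀ t > 0, |U t| ≤ M)
    (hb : IntegrableOn (fun r => r ^ (-1 - s) * b r) (Ioi 0))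
    (hUb : ∀ t ∈ Ioc τ 1, ∀ r > 0, |U t - U (t + r)| ≤ b r) :
    ∫ t in Ioc τ 1, t ^ (s - 1) * marchaud s U t =
      s⁻¹ * ∫ v in Ioi 0, v ^ (-s) * ((U (τ * (1 + v)) - U (1 + v)) / (1 + v)) := by
  have hW : IntegrableOn (fun v => v ^ (-s) * ((U (τ * (1 + v)) - U (1 + v)) / (1 + v)))
      (Ioi 0) := by
    refine ((integrableOn_rpow_neg_div_one_add hs0 hs1).mul_const (2 * M)).mono'
      (Measurable.aestronglyMeasurable (by fun_prop))
      ((ae_restrict_iff' measurableSet_Ioi).2 (ae_of_all _ fun v (hv : 0 < v) => ?_))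
    have hle : |U (τ * (1 + v)) - U (1 + v)| ≤ 2 * M := by
      linarith [abs_sub (U (τ * (1 + v))) (U (1 + v)), hM (τ * (1 + v)) (by positivity),
        hM (1 + v) (by positivity)]
    rw [norm_mul, norm_div, Real.norm_of_nonneg (by positivity : 0 ≤ v ^ (-s)),
      Real.norm_of_nonneg (by positivity : 0 ≤ 1 + v), div_mul_eq_mul_div, mul_div_assoc]
    gcongr
    exact hle
  rw [setIntegral_congr_fun measurableSet_Ioc fun t ht => rpow_mul_marchaud (hτ0.trans ht.1) s U,
    integral_integral_swap (integrable_prod_rpow_mul_sub_comp_mul_div hτ0 hU hb hUb),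
    ← integral_rpow_neg_one_sub_mul_integral hs0 (by fun_prop) hW]
  refine setIntegral_congr_fun measurableSet_Ioi fun v hv => ?_
  rw [integral_const_mul, ← intervalIntegral.integral_of_le hτ1,
    integral_sub_comp_mul_div_self hU hM hτ0 hv]

lemma tendsto_setIntegral_Ioc_left {f : ℝ → ℝ} (hf : IntegrableOn f (Ioc 0 1)) :
    Tendsto (fun τ => ∫ t in Ioc τ 1, f t) (𝓝[>] 0) (𝓝 (∫ t in Ioc 0 1, f t)) := by
  have hf' : IntegrableOn f (uIcc 0 1) := by
    rwa [uIcc_of_le zero_le_one, integrableOn_Icc_iff_integrableOn_Ioc]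
  have hcont := intervalIntegral.continuousOn_primitive_interval_left hf'
  have hlim := (hcont 0 left_mem_uIcc).mono_left (nhdsWithin_mono (0 : ℝ)
    (Ioc_subset_Icc_self.trans_eq (uIcc_of_le zero_le_one).symm))
  beta_reduce at hlim
  rw [intervalIntegral.integral_of_le zero_le_one] at hlim
  rw [← nhdsWithin_Ioc_eq_nhdsGT one_pos]
  exact hlim.congr' (eventually_mem_nhdsWithin.mono fun τ hτ =>
    intervalIntegral.integral_of_le hτ.2)

lemma tendsto_integral_rpow_mul_comp_mul (hs0 : 0 < s) (hs1 : s < 1) (hU : Measurable U)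
    (hM : ∀ t > 0, |U t| ≤ M) {l : ℝ} (hlim : Tendsto U (𝓝[>] 0) (𝓝 l)) :
    Tendsto (fun τ => ∫ v in Ioi 0, v ^ (-s) / (1 + v) * U (τ * (1 + v))) (𝓝[>] 0)
      (𝓝 (∫ v in Ioi 0, v ^ (-s) / (1 + v) * l)) := by
  refine tendsto_integral_filter_of_dominated_convergence (fun v => v ^ (-s) / (1 + v) * M)
    (.of_forall fun τ => Measurable.aestronglyMeasurable (by fun_prop))
    (eventually_mem_nhdsWithin.mono fun τ (hτ : 0 < τ) => ?_)
    ((integrableOn_rpow_neg_div_one_add hs0 hs1).mul_const M) ?_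
  · refine (ae_restrict_iff' measurableSet_Ioi).2 (ae_of_all _ fun v (hv : 0 < v) => ?_)
    rw [norm_mul, Real.norm_of_nonneg (by positivity)]
    exact mul_le_mul_of_nonneg_left (hM _ (by positivity)) (by positivity)
  · refine (ae_restrict_iff' measurableSet_Ioi).2 (ae_of_all _ fun v (hv : 0 < v) => ?_)
    refine (hlim.comp (tendsto_nhdsWithin_iff.2 ⟨?_, ?_⟩)).const_mul _
    · exact ((continuous_mul_const (1 + v)).tendsto' 0 0 (zero_mul _)).mono_left
        nhdsWithin_le_nhds
    · exact eventually_mem_nhdsWithin.mono fun τ (hτ : 0 < τ) => mem_Ioi.2 (by positivity)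

lemma integrableOn_rpow_mul_comp_mul (hs0 : 0 < s) (hs1 : s < 1) (hU : Measurable U)
    (hM : ∀ t > 0, |U t| ≤ M) (hτ : 0 < τ) :
    IntegrableOn (fun v => v ^ (-s) / (1 + v) * U (τ * (1 + v))) (Ioi 0) :=
  (integrableOn_rpow_neg_div_one_add hs0 hs1).mul_bdd (c := M)
    (Measurable.aestronglyMeasurable (by fun_prop))
    ((ae_restrict_iff' measurableSet_Ioi).2 (ae_of_all _ fun v (hv : 0 < v) =>
      hM _ (by positivity)))

lemma mul_integral_eq_add_integral_marchaud (hs0 : 0 < s) (hs1 : s < 1) (hU : Measurable U)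
    (hM : ∀ t > 0, |U t| ≤ M) {l : ℝ} (hlim : Tendsto U (𝓝[>] 0) (𝓝 l))
    (hint : IntegrableOn (fun t => t ^ (s - 1) * marchaud s U t) (Ioc 0 1))
    (hmod : ∀ τ > 0, ∃ b : ℝ → ℝ, IntegrableOn (fun r => r ^ (-1 - s) * b r) (Ioi 0) ∧
      ∀ t ∈ Ioc τ 1, ∀ r > 0, |U t - U (t + r)| ≤ b r) :
    (∫ v in Ioi 0, v ^ (-s) / (1 + v)) * l =
      (∫ v in Ioi 0, v ^ (-s) / (1 + v) * U (1 + v)) +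
        s * ∫ t in Ioc 0 1, t ^ (s - 1) * marchaud s U t := by
  have hident : ∀ τ ∈ Ioc (0 : ℝ) 1, (∫ v in Ioi 0, v ^ (-s) / (1 + v) * U (τ * (1 + v))) =
      (∫ v in Ioi 0, v ^ (-s) / (1 + v) * U (1 + v)) +
        s * ∫ t in Ioc τ 1, t ^ (s - 1) * marchaud s U t := fun τ hτ => by
    obtain ⟨b, hb, hUb⟩ := hmod τ hτ.1
    have hone := integrableOn_rpow_mul_comp_mul hs0 hs1 hU hM one_pos
    simp_rw [one_mul] at hone
    rw [integral_rpow_mul_marchaud hs0 hs1 hτ.1 hτ.2 hU hM hb hUb, mul_inv_cancel_left₀ hs0.ne']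
    simp_rw [mul_div_assoc', mul_div_right_comm, mul_sub]
    rw [integral_sub (integrableOn_rpow_mul_comp_mul hs0 hs1 hU hM hτ.1) hone,
      add_sub_cancel]
  rw [← integral_mul_const]
  refine tendsto_nhds_unique (tendsto_integral_rpow_mul_comp_mul hs0 hs1 hU hM hlim) ?_
  refine (((tendsto_setIntegral_Ioc_left hint).const_mul s).const_add _).congr' ?_
  rw [← nhdsWithin_Ioc_eq_nhdsGT one_pos]
  exact eventually_mem_nhdsWithin.mono fun τ hτ => (hident τ hτ).symm

end Marchaud

section Subordination

variable {E : Type*} [NormedAddCommGroup E] [InnerProductSpace ℝ E] [FiniteDimensional ℝ E]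
  [MeasurableSpace E] [BorelSpace E] {s t C M : ℝ} {f u : E → ℝ} {x : E}

lemma abs_sub_shiftIntegral_gauss_le {r : ℝ} (hr : 0 < r) (ht : 0 < t) (hu : Measurable u)
    (hM : ∀ x, |u x| ≤ M)
    (hC : ∀ z, |secondDiff (shiftIntegral (gauss t) u) x z| ≤ C * min 1 (‖z‖ ^ 2)) :
    |shiftIntegral (gauss t) u x - shiftIntegral (gauss (t + r)) u x| ≤
      C * ∫ z : E, min 1 (‖z‖ ^ 2) * gauss r z := by
  rw [← symmOp_gauss_shiftIntegral_gauss hr ht hu hM, ← integral_const_mul]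
  have hint : Integrable fun z : E => min 1 (‖z‖ ^ 2) * gauss r z :=
    (integrable_gauss hr).bdd_mul (c := 1) (Measurable.aestronglyMeasurable (by fun_prop))
      (ae_of_all _ fun z => by
        rw [Real.norm_of_nonneg (by positivity)]
        exact min_le_left _ _)
  have hbound (z : E) : ‖secondDiff (shiftIntegral (gauss t) u) x z * gauss r z‖ ≤
      C * (min 1 (‖z‖ ^ 2) * gauss r z) := by
    rw [norm_mul, Real.norm_of_nonneg (gauss_pos hr z).le, ← mul_assoc]
    exact mul_le_mul_of_nonneg_right (hC z) (gauss_pos hr z).le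
  exact norm_integral_le_of_norm_le (hint.const_mul C) (ae_of_all _ hbound)

variable [Nontrivial E]

lemma integrable_prod_min_norm_sq_mul_rpow_mul_gauss (hs0 : 0 < s) (hs1 : s < 1) :
    Integrable (fun p : E × ℝ => min 1 (‖p.1‖ ^ 2) * (p.2 ^ (-1 - s) * gauss p.2 p.1))
      (volume.prod (volume.restrict (Ioi 0))) := by
  have hmeas : Measurable fun p : E × ℝ =>
      min 1 (‖p.1‖ ^ 2) * (p.2 ^ (-1 - s) * gauss p.2 p.1) := by
    unfold gauss; fun_prop
  have hne : ∀ᵐ z : E, z ≠ 0 := by simp [ae_iff, measure_singleton]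
  rw [integrable_prod_iff hmeas.aestronglyMeasurable]
  refine ⟨hne.mono fun z hz =>
    (integrableOn_rpow_mul_gauss hs0 hz).const_mul (min 1 (‖z‖ ^ 2)), ?_⟩
  refine ((integrable_min_norm_sq_mul_fracKernel (E := E) hs0 hs1).const_mul
    (mixtureConst E s)).congr (hne.mono fun z hz => ?_)
  dsimp only
  rw [mul_left_comm, ← integral_rpow_mul_gauss hs0 hz, ← integral_const_mul]
  refine setIntegral_congr_fun measurableSet_Ioi fun r (hr : 0 < r) => ?_
  exact (Real.norm_of_nonneg (mul_nonneg (by positivity)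
    (mul_nonneg (by positivity) (gauss_pos hr z).le))).symm

lemma integrable_prod_secondDiff_mul_rpow_mul_gauss (hs0 : 0 < s) (hs1 : s < 1)
    (hf : Measurable f) (hC : ∀ z, |secondDiff f x z| ≤ C * min 1 (‖z‖ ^ 2)) :
    Integrable (fun p : E × ℝ => secondDiff f x p.1 * (p.2 ^ (-1 - s) * gauss p.2 p.1))
      (volume.prod (volume.restrict (Ioi 0))) := by
  refine Integrable.mono ((integrable_prod_min_norm_sq_mul_rpow_mul_gauss hs0 hs1).const_mul C)
    (Measurable.aestronglyMeasurable (by unfold secondDiff gauss; fun_prop))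
    (ae_of_all _ fun p => ?_)
  rw [← mul_assoc C, norm_mul, norm_mul (C * _)]
  exact mul_le_mul_of_nonneg_right ((hC p.1).trans (le_abs_self _)) (norm_nonneg _)

lemma mixtureConst_mul_symmOp_fracKernel (hs0 : 0 < s) (hs1 : s < 1) (hf : Measurable f)
    (hC : ∀ z, |secondDiff f x z| ≤ C * min 1 (‖z‖ ^ 2)) :
    mixtureConst E s * symmOp (fracKernel s) f x =
      ∫ r in Ioi 0, r ^ (-1 - s) * symmOp (gauss r) f x := by
  have hne : ∀ᵐ z : E, z ≠ 0 := by simp [ae_iff, measure_singleton]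
  simp_rw [symmOp, ← integral_const_mul, mul_left_comm _ (secondDiff _ _ _)]
  rw [← integral_integral_swap (integrable_prod_secondDiff_mul_rpow_mul_gauss hs0 hs1 hf hC)]
  refine integral_congr_ae (hne.mono fun z hz => ?_)
  dsimp only
  rw [← integral_rpow_mul_gauss hs0 hz, integral_const_mul]

lemma mixtureConst_mul_symmOp_shiftIntegral_gauss (hs0 : 0 < s) (hs1 : s < 1) (ht : 0 < t)
    (hu : Measurable u) (hM : ∀ x, |u x| ≤ M)
    (hC : ∀ z, |secondDiff (shiftIntegral (gauss t) u) x z| ≤ C * min 1 (‖z‖ ^ 2)) :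
    mixtureConst E s * symmOp (fracKernel s) (shiftIntegral (gauss t) u) x =
      marchaud s (fun t => shiftIntegral (gauss t) u x) t := by
  rw [mixtureConst_mul_symmOp_fracKernel hs0 hs1
    (continuous_shiftIntegral (integrable_gauss ht) hu hM).measurable hC]
  refine setIntegral_congr_fun measurableSet_Ioi fun r hr => ?_
  rw [symmOp_gauss_shiftIntegral_gauss hr ht hu hM]

lemma integrableOn_rpow_mul_integral_min_norm_sq_mul_gauss (hs0 : 0 < s) (hs1 : s < 1) :
    IntegrableOn (fun r => r ^ (-1 - s) * ∫ z : E, min 1 (‖z‖ ^ 2) * gauss r z) (Ioi 0) := by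
  refine (integrable_prod_min_norm_sq_mul_rpow_mul_gauss (E := E) hs0 hs1).integral_prod_right.congr
    (ae_of_all _ fun r => ?_)
  simp only [mul_left_comm (min _ _), integral_const_mul]

end Subordination

section ParametricIntegral

open scoped ContDiff

variable {α E F : Type*} [MeasurableSpace α] {μ : Measure α} [NormedAddCommGroup E]
  [InnerProductSpace ℝ E] [FiniteDimensional ℝ E] [NormedAddCommGroup F] [NormedSpace ℝ F]
  {f : α → E → F}

lemma aestronglyMeasurable_fderiv (hf : ∀ᵐ a ∂μ, Differentiable ℝ (f a))
    (hmeas : ∀ x, AEStronglyMeasurable (fun a => f a x) μ) (x : E) :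
    AEStronglyMeasurable (fun a => fderiv ℝ (f a) x) μ := by
  have happly (v : E) : AEStronglyMeasurable (fun a => fderiv ℝ (f a) x v) μ := by
    refine aestronglyMeasurable_of_tendsto_ae atTop
      (fun k : ℕ => ((hmeas (x + (k : ℝ)⁻¹ • v)).sub (hmeas x)).const_smul (k : ℝ))
      (hf.mono fun a ha => ?_)
    exact (ha x).hasFDerivAt.lim v (by simpa using tendsto_natCast_atTop_atTop (R := ℝ))
  have hexpand (L : E →L[ℝ] F) : L = ∑ i, ContinuousLinearMap.smulRightL ℝ E F
      (innerSL ℝ (stdOrthonormalBasis ℝ E i)) (L (stdOrthonormalBasis ℝ E i)) := by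
    ext v
    conv_lhs => rw [← (stdOrthonormalBasis ℝ E).sum_repr' v]
    simp
  rw [show (fun a => fderiv ℝ (f a) x) = _ from funext fun a => hexpand _]
  exact Finset.aestronglyMeasurable_fun_sum _ fun i _ =>
    (ContinuousLinearMap.continuous _).comp_aestronglyMeasurable (happly _)

lemma aestronglyMeasurable_iteratedFDeriv (hf : ∀ᵐ a ∂μ, ContDiff ℝ ∞ (f a))
    (hmeas : ∀ x, AEStronglyMeasurable (fun a => f a x) μ) (k : ℕ) (x : E) :
    AEStronglyMeasurable (fun a => iteratedFDeriv ℝ k (f a) x) μ := by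
  induction k generalizing x with
  | zero =>
    simp_rw [iteratedFDeriv_zero_eq_comp]
    exact (LinearIsometryEquiv.continuous _).comp_aestronglyMeasurable (hmeas x)
  | succ k ih =>
    simp_rw [iteratedFDeriv_succ_eq_comp_left]
    refine (LinearIsometryEquiv.continuous _).comp_aestronglyMeasurable
      (aestronglyMeasurable_fderiv (hf.mono fun a ha => ?_) ih x)
    exact ha.differentiable_iteratedFDeriv (mod_cast WithTop.coe_lt_top _)

lemma hasFTaylorSeriesUpTo_integral (hf : ∀ᵐ a ∂μ, ContDiff ℝ ∞ (f a))
    (hmeas : ∀ x, AEStronglyMeasurable (fun a => f a x) μ)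
    (hbound : ∀ (k : ℕ) (x₀ : E), ∃ b : α → ℝ, Integrable b μ ∧
      ∀ᵐ a ∂μ, ∀ x ∈ ball x₀ 1, ‖iteratedFDeriv ℝ k (f a) x‖ ≤ b a) :
    HasFTaylorSeriesUpTo ∞ (fun x => ∫ a, f a x ∂μ)
      fun x k => ∫ a, iteratedFDeriv ℝ k (f a) x ∂μ := by
  refine (hasFTaylorSeriesUpTo_top_iff' le_rfl).2 ⟨fun x => ?_, fun k x => ?_⟩
  · exact ((continuousMultilinearCurryFin0 ℝ E F).toContinuousLinearEquiv.integral_comp_comm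
      fun a => iteratedFDeriv ℝ 0 (f a) x).symm
  · have hcurry : (∫ a, iteratedFDeriv ℝ (k + 1) (f a) x ∂μ).curryLeft =
        ∫ a, fderiv ℝ (iteratedFDeriv ℝ k (f a)) x ∂μ :=
      (ContinuousLinearEquiv.integral_comp_comm (𝕜 := ℝ) (E := E [×(k + 1)]→L[ℝ] F)
        (F := E →L[ℝ] E [×k]→L[ℝ] F)
        (continuousMultilinearCurryLeftEquiv ℝ (fun _ => E) F).toContinuousLinearEquiv _).symm
    refine hcurry ▸ ?_
    obtain ⟨b, hb, hle⟩ := hbound k x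
    obtain ⟨b', hb', hle'⟩ := hbound (k + 1) x
    have hdiff : ∀ᵐ a ∂μ, Differentiable ℝ (iteratedFDeriv ℝ k (f a)) :=
      hf.mono fun a ha => ha.differentiable_iteratedFDeriv (mod_cast WithTop.coe_lt_top _)
    have hmeas' := aestronglyMeasurable_iteratedFDeriv hf hmeas k
    refine hasFDerivAt_integral_of_dominated_of_fderiv_le (ball_mem_nhds x one_pos)
      (.of_forall hmeas') (hb.mono' (hmeas' x) (hle.mono fun a ha => ha x (mem_ball_self one_pos)))
      (aestronglyMeasurable_fderiv hdiff hmeas' x) ?_ hb'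
      (hdiff.mono fun a ha y _ => (ha y).hasFDerivAt)
    filter_upwards [hle'] with a ha y hy
    rw [norm_fderiv_iteratedFDeriv]
    exact ha y hy

end ParametricIntegral

section DerivBounds

open scoped ContDiff

lemma one_add_norm_rpow_neg_le {E : Type*} [SeminormedAddCommGroup E] {r : ℝ} (hr : 0 ≤ r)
    {x y : E} (hxy : ‖x - y‖ ≤ 1) :
    (1 + ‖x‖) ^ (-r) ≤ 2 ^ r * (1 + ‖y‖) ^ (-r) := by
  have hle : 1 + ‖y‖ ≤ 2 * (1 + ‖x‖) := by
    linarith [norm_le_norm_add_norm_sub x y, norm_nonneg x]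
  rw [Real.rpow_neg (by positivity), Real.rpow_neg (by positivity), ← div_eq_mul_inv,
    ← Real.div_rpow (by positivity) (by positivity), ← Real.inv_rpow (by positivity)]
  refine Real.rpow_le_rpow (by positivity) ?_ hr
  rw [inv_le_comm₀ (by positivity) (by positivity), inv_div]
  linarith

variable {E F : Type*} [NormedAddCommGroup E] [NormedSpace ℝ E] [NormedAddCommGroup F]
  [NormedSpace ℝ F] {C : ℕ → ℝ} {f : E → F}

lemma norm_iteratedFDeriv_comp_const_sub (f : E → F) (k : ℕ) (y x : E) :
    ‖iteratedFDeriv ℝ k (fun z => f (y - z)) x‖ = ‖iteratedFDeriv ℝ k f (y - x)‖ := by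
  have hneg := (LinearIsometryEquiv.neg ℝ).norm_iteratedFDeriv_comp_right (fun w => f (y + w)) x k
  simpa only [iteratedFDeriv_comp_add_left, Function.comp_def, LinearIsometryEquiv.coe_neg,
    ← sub_eq_add_neg] using hneg

lemma norm_iteratedFDeriv_iteratedFDeriv (f : E → F) (j k : ℕ) (x : E) :
    ‖iteratedFDeriv ℝ j (iteratedFDeriv ℝ k f) x‖ = ‖iteratedFDeriv ℝ (k + j) f x‖ := by
  induction j generalizing k with
  | zero => rw [norm_iteratedFDeriv_zero, add_zero]
  | succ j ih =>
    rw [← norm_iteratedFDeriv_fderiv, fderiv_iteratedFDeriv,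
      LinearIsometryEquiv.norm_iteratedFDeriv_comp_left, ih, add_assoc, add_comm 1]

lemma norm_iteratedFDeriv_const_smul_comp_const_smul {k : ℕ} (hf : ContDiff ℝ k f)
    (a b : ℝ) (w : E) : ‖iteratedFDeriv ℝ k (fun w => b • f (a • w)) w‖ =
      ‖b‖ * (‖a‖ ^ k * ‖iteratedFDeriv ℝ k f (a • w)‖) := by
  have hcomp : ContDiff ℝ k fun w => f (a • w) := by fun_prop
  rw [iteratedFDeriv_const_smul_apply' hcomp.contDiffAt, iteratedFDeriv_comp_const_smul _ hf,
    norm_smul, norm_smul, norm_pow]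

lemma iteratedFDeriv_secondDiff (hf : ContDiff ℝ ∞ f) (k : ℕ) (x z : E) :
    iteratedFDeriv ℝ k (fun y => secondDiff f y z) x = secondDiff (iteratedFDeriv ℝ k f) x z := by
  have hfk : ContDiff ℝ k f := hf.of_le (mod_cast le_top)
  unfold secondDiff
  rw [fun_iteratedFDeriv_sub_apply (by fun_prop) (by fun_prop),
    iteratedFDeriv_const_smul_apply' (by fun_prop),
    fun_iteratedFDeriv_add_apply (by fun_prop) (by fun_prop), iteratedFDeriv_comp_add_right,
    iteratedFDeriv_comp_sub]

/-- `f` is smooth and, for every `k`, its `k`-th derivative is bounded by `C k` on the whole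
space; the constants are kept explicit to express uniformity along families of functions. -/
structure HasDerivBounds (C : ℕ → ℝ) (f : E → F) : Prop where
  contDiff : ContDiff ℝ ∞ f
  norm_le : ∀ k x, ‖iteratedFDeriv ℝ k f x‖ ≤ C k

lemma exists_hasDerivBounds_of_hasCompactSupport (hf : ContDiff ℝ ∞ f)
    (hsupp : HasCompactSupport f) : ∃ C, HasDerivBounds C f := by
  choose C hC using fun k => (hsupp.iteratedFDeriv (𝕜 := ℝ) k).exists_bound_of_continuous
    (hf.continuous_iteratedFDeriv (mod_cast le_top))
  exact ⟨C, hf, hC⟩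

namespace HasDerivBounds

lemma norm_apply_le (hf : HasDerivBounds C f) (x : E) : ‖f x‖ ≤ C 0 := by
  simpa using hf.norm_le 0 x

lemma const (c : F) : HasDerivBounds (fun _ => ‖c‖) fun _ : E => c where
  contDiff := contDiff_const
  norm_le k x := by
    rcases eq_or_ne k 0 with rfl | hk
    · rw [norm_iteratedFDeriv_zero]
    · rw [iteratedFDeriv_const_of_ne hk, Pi.zero_apply, norm_zero]
      exact norm_nonneg c

lemma sub {g : E → F} {D : ℕ → ℝ} (hf : HasDerivBounds C f) (hg : HasDerivBounds D g) :
    HasDerivBounds (fun k => C k + D k) fun x => f x - g x where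
  contDiff := hf.contDiff.sub hg.contDiff
  norm_le k x := by
    rw [fun_iteratedFDeriv_sub_apply (contDiff_infty.1 hf.contDiff k).contDiffAt
      (contDiff_infty.1 hg.contDiff k).contDiffAt]
    exact (norm_sub_le _ _).trans (add_le_add (hf.norm_le k x) (hg.norm_le k x))

lemma const_smul (hf : HasDerivBounds C f) (c : ℝ) :
    HasDerivBounds (fun k => ‖c‖ * C k) fun x => c • f x where
  contDiff := hf.contDiff.const_smul c
  norm_le k x := by
    rw [iteratedFDeriv_const_smul_apply' (contDiff_infty.1 hf.contDiff k).contDiffAt,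
      norm_smul]
    exact mul_le_mul_of_nonneg_left (hf.norm_le k x) (norm_nonneg c)

lemma iteratedFDeriv (hf : HasDerivBounds C f) (k : ℕ) :
    HasDerivBounds (fun j => C (k + j)) (iteratedFDeriv ℝ k f) where
  contDiff := hf.contDiff.iteratedFDeriv_right (mod_cast le_top)
  norm_le j x := (norm_iteratedFDeriv_iteratedFDeriv f j k x).trans_le (hf.norm_le _ x)

lemma norm_secondDiff_le (hf : HasDerivBounds C f) (x z : E) :
    ‖secondDiff f x z‖ ≤ max (2 * C 0) (C 2) * min 1 (‖z‖ ^ 2) :=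
  norm_secondDiff_le_mul_min (mod_cast contDiff_infty.1 hf.contDiff 2) hf.norm_apply_le
    (hf.norm_le 2) x z

lemma secondDiff (hf : HasDerivBounds C f) (z : E) :
    HasDerivBounds (fun k => max (2 * C k) (C (k + 2)) * min 1 (‖z‖ ^ 2))
      fun x => secondDiff f x z where
  contDiff := by
    have := hf.contDiff
    unfold FracHarmonic.secondDiff
    fun_prop
  norm_le k x := by
    rw [iteratedFDeriv_secondDiff hf.contDiff]
    exact (hf.iteratedFDeriv k).norm_secondDiff_le x z

end HasDerivBounds

end DerivBounds

section DerivBoundsIntegral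

open scoped ContDiff

variable {E F : Type*} [NormedAddCommGroup E] [InnerProductSpace ℝ E] [FiniteDimensional ℝ E]
  [NormedAddCommGroup F] [NormedSpace ℝ F] {C : ℕ → ℝ}

lemma HasDerivBounds.integral {α : Type*} [MeasurableSpace α] {μ : Measure α} {f : α → E → F}
    {B : ℕ → α → ℝ} (hf : ∀ᵐ a ∂μ, HasDerivBounds (fun k => B k a) (f a))
    (hmeas : ∀ x, AEStronglyMeasurable (fun a => f a x) μ) (hB : ∀ k, Integrable (B k) μ) :
    HasDerivBounds (fun k => ∫ a, B k a ∂μ) fun x => ∫ a, f a x ∂μ := by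
  have htaylor := hasFTaylorSeriesUpTo_integral (hf.mono fun a ha => ha.contDiff) hmeas
    fun k _ => ⟨B k, hB k, hf.mono fun a ha x _ => ha.norm_le k x⟩
  refine ⟨htaylor.contDiff, fun k x => ?_⟩
  rw [← htaylor.eq_iteratedFDeriv (mod_cast le_top)]
  exact norm_integral_le_of_norm_le (hB k) (hf.mono fun a ha => ha.norm_le k x)

variable [MeasurableSpace E] [BorelSpace E] {s : ℝ}

lemma HasDerivBounds.symmOp_fracKernel [Nontrivial E] {f : E → ℝ} (hs0 : 0 < s) (hs1 : s < 1)
    (hf : HasDerivBounds C f) :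
    HasDerivBounds (fun k => max (2 * C k) (C (k + 2)) * levyMass E s)
      (symmOp (fracKernel s) f) := by
  have hbound (z : E) : HasDerivBounds
      (fun k => max (2 * C k) (C (k + 2)) * (min 1 (‖z‖ ^ 2) * fracKernel s z))
      fun x => FracHarmonic.secondDiff f x z * fracKernel s z := by
    have := (hf.secondDiff z).const_smul (fracKernel s z)
    simp_rw [smul_eq_mul, mul_comm (fracKernel s z), Real.norm_of_nonneg (fracKernel_nonneg z),
      mul_comm (fracKernel s z), mul_assoc] at this
    exact this
  have hmeas (x : E) : Measurable fun z => FracHarmonic.secondDiff f x z * fracKernel s z := by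
    have := hf.contDiff.continuous.measurable
    have := measurable_fracKernel (E := E) (s := s)
    unfold FracHarmonic.secondDiff
    fun_prop
  have := HasDerivBounds.integral (ae_of_all volume hbound)
    (fun x => (hmeas x).aestronglyMeasurable)
    fun k => (integrable_min_norm_sq_mul_fracKernel hs0 hs1).const_mul _
  simp_rw [integral_const_mul] at this
  exact this

lemma hasDerivBounds_shiftIntegral {κ u : E → ℝ} {r M : ℝ} (hr : finrank ℝ E < r)
    (hκ : ContDiff ℝ ∞ κ) (hC : ∀ k w, ‖iteratedFDeriv ℝ k κ w‖ ≤ C k * (1 + ‖w‖) ^ (-r))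
    (hu : Measurable u) (hM : ∀ x, |u x| ≤ M) :
    HasDerivBounds (fun k => M * C k * ∫ w : E, (1 + ‖w‖) ^ (-r)) (shiftIntegral κ u) := by
  have hr0 : 0 ≤ r := (Nat.cast_nonneg _).trans hr.le
  have hM0 : 0 ≤ M := (abs_nonneg _).trans (hM 0)
  have hC0 (k : ℕ) : 0 ≤ C k := by simpa using (norm_nonneg _).trans (hC k 0)
  have hderiv (k : ℕ) (y x : E) : ‖iteratedFDeriv ℝ k (fun x => u y * κ (y - x)) x‖ ≤
      M * C k * (1 + ‖y - x‖) ^ (-r) := by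
    have hshift : ContDiff ℝ k fun x => κ (y - x) := contDiff_infty.1 (by fun_prop) k
    simp_rw [← smul_eq_mul (u y)]
    rw [iteratedFDeriv_const_smul_apply' hshift.contDiffAt, norm_smul,
      norm_iteratedFDeriv_comp_const_sub, mul_assoc]
    exact mul_le_mul (hM y) (hC k _) (norm_nonneg _) hM0
  have hint := integrable_one_add_norm (μ := (volume : Measure E)) hr
  have htaylor := hasFTaylorSeriesUpTo_integral (μ := (volume : Measure E))
    (f := fun y x => u y * κ (y - x)) (ae_of_all _ fun y => by fun_prop)
    (fun x => Measurable.aestronglyMeasurable (by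
      have := hκ.continuous.measurable
      fun_prop))
    fun k x₀ => ⟨fun y => M * C k * (2 ^ r * (1 + ‖y - x₀‖) ^ (-r)),
      ((hint.comp_sub_right x₀).const_mul _).const_mul _, ae_of_all _ fun y x hx =>
        (hderiv k y x).trans (mul_le_mul_of_nonneg_left (one_add_norm_rpow_neg_le hr0 (by
          rw [sub_sub_sub_cancel_left, ← dist_eq_norm']
          exact (mem_ball.1 hx).le)) (mul_nonneg hM0 (hC0 k)))⟩
  rw [show shiftIntegral κ u = _ from funext shiftIntegral_eq_integral_mul_comp_sub]
  refine ⟨htaylor.contDiff, fun k x => ?_⟩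
  rw [← htaylor.eq_iteratedFDeriv (mod_cast le_top),
    ← integral_sub_right_eq_self (fun w : E => (1 + ‖w‖) ^ (-r)) x, ← integral_const_mul]
  exact norm_integral_le_of_norm_le ((hint.comp_sub_right x).const_mul _)
    (ae_of_all _ fun y => hderiv k y x)

end DerivBoundsIntegral

section GaussianDerivatives

open scoped ContDiff

variable {E : Type*} [NormedAddCommGroup E] [InnerProductSpace ℝ E]

lemma exists_one_add_rpow_mul_exp_neg_sq_le (r : ℝ) :
    ∃ C, ∀ q ≥ 0, (1 + q) ^ r * Real.exp (-q ^ 2) ≤ C := by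
  obtain ⟨N, hN⟩ := exists_nat_ge r
  refine ⟨N.factorial * Real.exp 2, fun q hq => ?_⟩
  have hpow : (1 + q) ^ N ≤ N.factorial * Real.exp (1 + q) :=
    (div_le_iff₀' (by positivity)).1 (Real.pow_div_factorial_le_exp _ (by positivity) N)
  calc (1 + q) ^ r * Real.exp (-q ^ 2) ≤ (1 + q) ^ N * Real.exp (-q ^ 2) := by
        gcongr
        exact (Real.rpow_le_rpow_of_exponent_le (by linarith) hN).trans_eq (Real.rpow_natCast _ N)
    _ ≤ N.factorial * Real.exp (1 + q) * Real.exp (-q ^ 2) := by gcongr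
    _ = N.factorial * Real.exp (1 + q - q ^ 2) := by rw [mul_assoc, ← Real.exp_add, sub_eq_add_neg]
    _ ≤ N.factorial * Real.exp 2 := by gcongr; nlinarith [sq_nonneg (q - 1 / 2)]

lemma exists_norm_iteratedFDeriv_exp_neg_norm_sq_le (k : ℕ) (r : ℝ) : ∃ C, 0 ≤ C ∧ ∀ w : E,
    ‖iteratedFDeriv ℝ k (fun w : E => Real.exp (-‖w‖ ^ 2)) w‖ ≤ C * (1 + ‖w‖) ^ (-r) := by
  obtain ⟨l, A, hA, hnormsq⟩ :=
    (Function.hasTemperateGrowth_norm_sq E).norm_iteratedFDeriv_le_uniform k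
  obtain ⟨B, hB⟩ := exists_one_add_rpow_mul_exp_neg_sq_le (l * k + r)
  have hB0 : 0 ≤ B := (by positivity : (0 : ℝ) ≤ _).trans (hB 0 le_rfl)
  refine ⟨k.factorial * (A + 1) ^ k * B, by positivity, fun w => ?_⟩
  have hone : 1 ≤ (A + 1) * (1 + ‖w‖) ^ l :=
    one_le_mul_of_one_le_of_one_le (by linarith) (one_le_pow₀ (by linarith [norm_nonneg w]))
  have hcomp := norm_iteratedFDeriv_comp_le (n := k) (N := ∞) (g := fun q : ℝ => Real.exp (-1 * q))
    (f := fun w : E => ‖w‖ ^ 2) (by fun_prop) (contDiff_norm_sq ℝ) (mod_cast le_top) w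
    (C := Real.exp (-‖w‖ ^ 2)) (D := (A + 1) * (1 + ‖w‖) ^ l)
    (fun i _ => by
      rw [norm_iteratedFDeriv_eq_norm_iteratedDeriv, iteratedDeriv_exp_const_mul]
      simp)
    (fun i hi hik => calc
      ‖iteratedFDeriv ℝ i (fun w : E => ‖w‖ ^ 2) w‖ ≤ A * (1 + ‖w‖) ^ l := hnormsq i hik w
      _ ≤ (A + 1) * (1 + ‖w‖) ^ l := by gcongr; linarith
      _ ≤ ((A + 1) * (1 + ‖w‖) ^ l) ^ i := le_self_pow₀ hone (by lia))
  simp_rw [Function.comp_def, neg_one_mul] at hcomp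
  have hdecay : (1 + ‖w‖) ^ (l * k) * Real.exp (-‖w‖ ^ 2) ≤ B * (1 + ‖w‖) ^ (-r) := by
    have := hB ‖w‖ (norm_nonneg w)
    rw [Real.rpow_add (by positivity), ← Nat.cast_mul, Real.rpow_natCast] at this
    rw [Real.rpow_neg (by positivity), ← div_eq_mul_inv, le_div_iff₀ (by positivity)]
    linarith
  calc _ ≤ _ := hcomp
    _ = k.factorial * (A + 1) ^ k * ((1 + ‖w‖) ^ (l * k) * Real.exp (-‖w‖ ^ 2)) := by
      rw [mul_pow, ← pow_mul]
      ring
    _ ≤ k.factorial * (A + 1) ^ k * (B * (1 + ‖w‖) ^ (-r)) := by gcongr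
    _ = _ := by ring

lemma contDiff_gauss (t : ℝ) : ContDiff ℝ ∞ (gauss t : E → ℝ) :=
  contDiff_const.mul ((contDiff_norm_sq ℝ).neg.div_const t).exp

lemma exists_norm_iteratedFDeriv_gauss_le (k : ℕ) (r : ℝ) : ∃ C, 0 ≤ C ∧ ∀ t > 0, ∀ w : E,
    ‖iteratedFDeriv ℝ k (gauss t : E → ℝ) w‖ ≤
      C * (√t)⁻¹ ^ (finrank ℝ E + k) * (1 + (√t)⁻¹ * ‖w‖) ^ (-r) := by
  obtain ⟨C, hC0, hC⟩ := exists_norm_iteratedFDeriv_exp_neg_norm_sq_le (E := E) k r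
  refine ⟨Real.pi ^ (-(finrank ℝ E / 2 : ℝ)) * C, by positivity, fun t ht w => ?_⟩
  have hscale : (gauss t : E → ℝ) = fun w => (Real.pi * t) ^ (-(finrank ℝ E / 2 : ℝ)) •
      (fun w : E => Real.exp (-‖w‖ ^ 2)) ((√t)⁻¹ • w) := by
    ext w
    dsimp only
    rw [smul_eq_mul, norm_smul, mul_pow, norm_inv, inv_pow,
      Real.norm_of_nonneg (Real.sqrt_nonneg _), Real.sq_sqrt ht.le, gauss, neg_div, inv_mul_eq_div]
  have hprefactor : (Real.pi * t) ^ (-(finrank ℝ E / 2 : ℝ)) =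
      Real.pi ^ (-(finrank ℝ E / 2 : ℝ)) * (√t)⁻¹ ^ finrank ℝ E := by
    rw [Real.mul_rpow Real.pi_pos.le ht.le, inv_pow, ← Real.rpow_natCast, Real.sqrt_eq_rpow,
      ← Real.rpow_mul ht.le, ← Real.rpow_neg ht.le, one_div_mul_eq_div]
  have hexp : ContDiff ℝ k fun w : E => Real.exp (-‖w‖ ^ 2) :=
    contDiff_infty.1 (contDiff_norm_sq ℝ).neg.exp k
  rw [hscale, norm_iteratedFDeriv_const_smul_comp_const_smul hexp,
    Real.norm_of_nonneg (by positivity), Real.norm_of_nonneg (by positivity), hprefactor]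
  have := hC ((√t)⁻¹ • w)
  rw [norm_smul, Real.norm_of_nonneg (by positivity)] at this
  calc _ ≤ Real.pi ^ (-(finrank ℝ E / 2 : ℝ)) * (√t)⁻¹ ^ finrank ℝ E *
        ((√t)⁻¹ ^ k * (C * (1 + (√t)⁻¹ * ‖w‖) ^ (-r))) := by gcongr
    _ = _ := by rw [pow_add]; ring

lemma exists_norm_iteratedFDeriv_gauss_le_of_fixed (k : ℕ) {r t : ℝ} (hr : 0 ≤ r) (ht : 0 < t) :
    ∃ C, ∀ w : E, ‖iteratedFDeriv ℝ k (gauss t : E → ℝ) w‖ ≤ C * (1 + ‖w‖) ^ (-r) := by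
  obtain ⟨C, hC0, hC⟩ := exists_norm_iteratedFDeriv_gauss_le (E := E) k r
  set a := (√t)⁻¹
  have : 0 < a := by positivity
  refine ⟨C * a ^ (finrank ℝ E + k) * (min 1 a) ^ (-r), fun w => (hC t ht w).trans ?_⟩
  rw [mul_assoc (C * _), ← Real.mul_rpow (by positivity) (by positivity)]
  refine mul_le_mul_of_nonneg_left (Real.rpow_le_rpow_of_nonpos (by positivity) ?_ (by linarith))
    (by positivity)
  rw [mul_add, mul_one]
  gcongr
  · exact min_le_left _ _
  · exact min_le_right _ _

/-- Away from the origin the singularity of `gauss t` as `t → 0` is not seen. -/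
lemma exists_norm_iteratedFDeriv_gauss_le_of_norm_ge (k : ℕ) {r δ : ℝ} (hr : 0 ≤ r) (hδ : 0 < δ) :
    ∃ C, 0 ≤ C ∧ ∀ t ∈ Ioc (0 : ℝ) 1, ∀ w : E, δ ≤ ‖w‖ →
      ‖iteratedFDeriv ℝ k (gauss t : E → ℝ) w‖ ≤ C * (1 + ‖w‖) ^ (-r) := by
  obtain ⟨C, hC0, hC⟩ := exists_norm_iteratedFDeriv_gauss_le (E := E) k ((finrank ℝ E + k : ℕ) + r)
  refine ⟨C * δ⁻¹ ^ (finrank ℝ E + k), by positivity, fun t ht w hw => (hC t ht.1 w).trans ?_⟩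
  have ha : 1 ≤ (√t)⁻¹ := (one_le_inv₀ (Real.sqrt_pos.2 ht.1)).2 (Real.sqrt_le_one.2 ht.2)
  set a := (√t)⁻¹
  have hsing : a * (1 + a * ‖w‖)⁻¹ ≤ δ⁻¹ := by
    rw [← div_eq_mul_inv, div_le_iff₀ (by positivity), inv_mul_eq_div, le_div_iff₀ hδ]
    nlinarith [mul_le_mul_of_nonneg_left hw (zero_le_one.trans ha)]
  have htail : (1 + a * ‖w‖) ^ (-r) ≤ (1 + ‖w‖) ^ (-r) :=
    Real.rpow_le_rpow_of_nonpos (by positivity)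
      (by gcongr; exact le_mul_of_one_le_left (norm_nonneg w) ha) (by linarith)
  rw [neg_add, Real.rpow_add (by positivity), Real.rpow_neg (by positivity), Real.rpow_natCast,
    ← inv_pow, mul_assoc C, ← mul_assoc (a ^ _), ← mul_pow, mul_assoc C]
  gcongr

lemma exists_norm_iteratedFDeriv_mul_gauss_le {A : ℕ → ℝ} {ψ : E → ℝ} {r δ : ℝ} (hr : 0 ≤ r)
    (hδ : 0 < δ) (hψ : HasDerivBounds A ψ) (hψ0 : ∀ w ∈ ball 0 δ, ψ w = 0) (k : ℕ) :
    ∃ C, ∀ t ∈ Ioc (0 : ℝ) 1, ∀ w : E,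
      ‖iteratedFDeriv ℝ k (fun w => ψ w * gauss t w) w‖ ≤ C * (1 + ‖w‖) ^ (-r) := by
  choose C hC0 hC using fun j => exists_norm_iteratedFDeriv_gauss_le_of_norm_ge (E := E) j hr hδ
  have hA0 (i : ℕ) : 0 ≤ A i := (norm_nonneg _).trans (hψ.norm_le i 0)
  refine ⟨∑ i ∈ Finset.range (k + 1), k.choose i * A i * C (k - i), fun t ht w => ?_⟩
  rcases lt_or_ge ‖w‖ δ with hw | hw
  · have hzero : (fun w => ψ w * gauss t w) =ᶠ[𝓝 w] fun _ => 0 := by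
      filter_upwards [isOpen_ball.mem_nhds (mem_ball_zero_iff.2 hw)] with y hy
      rw [hψ0 y hy, zero_mul]
    rw [(hzero.iteratedFDeriv ℝ k).eq_of_nhds, iteratedFDeriv_fun_zero, Pi.zero_apply, norm_zero]
    exact mul_nonneg (Finset.sum_nonneg fun i _ => mul_nonneg (mul_nonneg (by positivity) (hA0 i))
      (hC0 _)) (by positivity)
  · refine (norm_iteratedFDeriv_mul_le hψ.contDiff (contDiff_gauss t) w (mod_cast le_top)).trans ?_
    rw [Finset.sum_mul]
    refine Finset.sum_le_sum fun i _ => ?_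
    rw [mul_assoc _ (C _)]
    exact mul_le_mul (mul_le_mul_of_nonneg_left (hψ.norm_le i w) (by positivity))
      (hC _ t ht w hw) (norm_nonneg _) (mul_nonneg (by positivity) (hA0 i))

end GaussianDerivatives

section HeatBounds

variable {E : Type*} [NormedAddCommGroup E] [InnerProductSpace ℝ E] [FiniteDimensional ℝ E]
  [MeasurableSpace E] [BorelSpace E] {M : ℝ} {u : E → ℝ}

lemma exists_hasDerivBounds_shiftIntegral_gauss {τ : ℝ} (hτ : 0 < τ) (M : ℝ) :
    ∃ C, ∀ u : E → ℝ, Measurable u → (∀ x, |u x| ≤ M) →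
      HasDerivBounds C (shiftIntegral (gauss τ) u) := by
  choose C hC using fun k => exists_norm_iteratedFDeriv_gauss_le_of_fixed (E := E) k
    (r := finrank ℝ E + 1) (by positivity) hτ
  exact ⟨_, fun u hu hM => hasDerivBounds_shiftIntegral (lt_add_one _) (contDiff_gauss τ) hC hu hM⟩

lemma exists_hasDerivBounds_shiftIntegral_gauss_of_ge {τ : ℝ} (hτ : 0 < τ) (hu : Measurable u)
    (hM : ∀ x, |u x| ≤ M) : ∃ C, ∀ t ≥ τ, HasDerivBounds C (shiftIntegral (gauss t) u) := by
  obtain ⟨C, hC⟩ := exists_hasDerivBounds_shiftIntegral_gauss (E := E) hτ M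
  refine ⟨C, fun t ht => ?_⟩
  rcases ht.lt_or_eq with hlt | rfl
  · have hsub : 0 < t - τ := sub_pos.2 hlt
    have hsemigroup := funext (shiftIntegral_gauss_shiftIntegral_gauss hτ hsub hu hM)
    rw [sub_add_cancel] at hsemigroup
    rw [← hsemigroup]
    exact hC _ (continuous_shiftIntegral (integrable_gauss hsub) hu hM).measurable
      (abs_shiftIntegral_gauss_le hsub hM)
  · exact hC u hu hM

lemma exists_hasDerivBounds_shiftIntegral_mul_gauss {A : ℕ → ℝ} {ψ : E → ℝ} {δ : ℝ} (hδ : 0 < δ)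
    (hψ : HasDerivBounds A ψ) (hψ0 : ∀ w ∈ ball 0 δ, ψ w = 0) (hu : Measurable u)
    (hM : ∀ x, |u x| ≤ M) :
    ∃ C, ∀ t ∈ Ioc (0 : ℝ) 1,
      HasDerivBounds C (shiftIntegral (fun w => ψ w * gauss t w) u) := by
  choose C hC using exists_norm_iteratedFDeriv_mul_gauss_le
    (r := finrank ℝ E + 1) (by positivity) hδ hψ hψ0
  exact ⟨_, fun t ht => hasDerivBounds_shiftIntegral (lt_add_one _)
    (hψ.contDiff.mul (contDiff_gauss t)) (fun k => hC k t ht) hu hM⟩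

lemma exists_hasDerivBounds_shiftIntegral_one_sub_mul_gauss (ζ : ContDiffBump (0 : E))
    (hu : Measurable u) (hM : ∀ x, |u x| ≤ M) :
    ∃ C, ∀ t ∈ Ioc (0 : ℝ) 1,
      HasDerivBounds C (shiftIntegral (fun w => (1 - ζ w) * gauss t w) u) := by
  obtain ⟨A, hA⟩ := exists_hasDerivBounds_of_hasCompactSupport ζ.contDiff ζ.hasCompactSupport
  exact exists_hasDerivBounds_shiftIntegral_mul_gauss ζ.rIn_pos ((HasDerivBounds.const 1).sub hA)
    (fun w hw => by rw [ζ.one_of_mem_closedBall (ball_subset_closedBall hw), sub_self]) hu hM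

end HeatBounds

section Measurability

variable {α E : Type*} [MeasurableSpace α] [NormedAddCommGroup E] [InnerProductSpace ℝ E]
  [FiniteDimensional ℝ E] [MeasurableSpace E] [BorelSpace E]

lemma measurable_uncurry_shiftIntegral {κ : α → E → ℝ} {u : E → ℝ}
    (hκ : Measurable (Function.uncurry κ)) (hu : Measurable u) :
    Measurable (Function.uncurry fun a => shiftIntegral (κ a) u) := by
  have hmeas : Measurable fun q : (α × E) × E => u (q.1.2 + q.2) * κ q.1.1 q.2 :=
    (hu.comp (by fun_prop)).mul (hκ.comp (by fun_prop : Measurable fun q : (α × E) × E =>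
      (q.1.1, q.2)))
  exact hmeas.stronglyMeasurable.integral_prod_right.measurable

lemma measurable_symmOp {κ : E → ℝ} {v : α → E → ℝ} (hκ : Measurable κ)
    (hv : Measurable (Function.uncurry v)) (x : E) : Measurable fun a => symmOp κ (v a) x := by
  have hcomp {g : α × E → E} (hg : Measurable g) : Measurable fun q : α × E => v q.1 (g q) :=
    hv.comp (measurable_fst.prodMk hg)
  have hmeas : Measurable fun q : α × E => secondDiff (v q.1) x q.2 * κ q.2 :=
    ((hcomp measurable_const).sub (((hcomp (by fun_prop)).add (hcomp (by fun_prop))).const_smul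
      (1 / 2 : ℝ))).mul (hκ.comp measurable_snd)
  exact hmeas.stronglyMeasurable.integral_prod_right.measurable

end Measurability

section Representation

open scoped ContDiff

variable {E : Type*} [NormedAddCommGroup E] [InnerProductSpace ℝ E] [FiniteDimensional ℝ E]
  [MeasurableSpace E] [BorelSpace E] {s t M : ℝ} {u f g : E → ℝ} {C D : ℕ → ℝ}
  {ζ : ContDiffBump (0 : E)} {Ω : Set E} {x : E}

variable (ζ) in
lemma shiftIntegral_contDiffBump_mul_gauss (ht : 0 < t) (hu : Measurable u)
    (hM : ∀ x, |u x| ≤ M) :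
    shiftIntegral (fun w => ζ w * gauss t w) u = fun x =>
      shiftIntegral (gauss t) u x - shiftIntegral (fun w => (1 - ζ w) * gauss t w) u x := by
  have hgauss := integrable_gauss (E := E) ht
  have hnear : Integrable fun w => ζ w * gauss t w :=
    hgauss.bdd_mul (c := 1) ζ.continuous.aestronglyMeasurable
      (ae_of_all _ fun w => by rw [Real.norm_of_nonneg ζ.nonneg]; exact ζ.le_one)
  have hfar : Integrable fun w => (1 - ζ w) * gauss t w := by
    simpa only [sub_mul, one_mul] using! hgauss.sub hnear
  ext x
  rw [shiftIntegral, shiftIntegral, shiftIntegral,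
    ← integral_sub (integrable_comp_add_mul hgauss hu hM x) (integrable_comp_add_mul hfar hu hM x)]
  congr 1 with z
  ring

lemma measurable_shiftIntegral_gauss_apply (hu : Measurable u) (x : E) :
    Measurable fun t => shiftIntegral (gauss t) u x :=
  (measurable_uncurry_shiftIntegral measurable_uncurry_gauss hu).comp measurable_prodMk_right

lemma measurable_symmOp_shiftIntegral_mul_gauss {ψ : E → ℝ} (hψ : Measurable ψ)
    (hu : Measurable u) (x : E) :
    Measurable fun t =>
      symmOp (fracKernel s) (shiftIntegral (fun w => ψ w * gauss t w) u) x :=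
  measurable_symmOp measurable_fracKernel (measurable_uncurry_shiftIntegral
    ((hψ.comp measurable_snd).mul measurable_uncurry_gauss) hu) x

lemma contDiff_integral_shiftIntegral_gauss (hs0 : 0 < s) (hs1 : s < 1)
    (hu : Measurable u) (hM : ∀ x, |u x| ≤ M) :
    ContDiff ℝ ∞ fun x =>
      ∫ v in Ioi 0, v ^ (-s) / (1 + v) * shiftIntegral (gauss (1 + v)) u x := by
  obtain ⟨C, hC⟩ := exists_hasDerivBounds_shiftIntegral_gauss_of_ge one_pos hu hM
  refine (HasDerivBounds.integral (μ := volume.restrict (Ioi 0))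
    (B := fun k v => ‖v ^ (-s) / (1 + v)‖ * C k)
    ((ae_restrict_iff' measurableSet_Ioi).2 (ae_of_all _ fun v (hv : 0 < v) =>
      (hC (1 + v) (le_add_of_nonneg_right hv.le)).const_smul _))
    (fun x => Measurable.aestronglyMeasurable ?_)
    fun k => (integrableOn_rpow_neg_div_one_add hs0 hs1).norm.mul_const _).contDiff
  have hgauss := measurable_shiftIntegral_gauss_apply hu x
  refine Measurable.fun_smul ?_ (hgauss.comp (measurable_const_add 1))
  fun_prop

variable [Nontrivial E]

lemma HasDerivBounds.symmOp_fracKernel_sub (hs0 : 0 < s) (hs1 : s < 1) (hf : HasDerivBounds C f)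
    (hg : HasDerivBounds D g) (x : E) :
    symmOp (fracKernel s) (fun x => f x - g x) x =
      symmOp (fracKernel s) f x - symmOp (fracKernel s) g x := by
  have hint {C : ℕ → ℝ} {f : E → ℝ} (hf : HasDerivBounds C f) :
      Integrable fun z => FracHarmonic.secondDiff f x z * fracKernel s z :=
    integrable_secondDiff_mul hs0 hs1 measurable_fracKernel
      (fun z => (abs_of_nonneg (fracKernel_nonneg z)).le) hf.contDiff.continuous.measurable
      (hf.norm_secondDiff_le x)
  rw [symmOp, symmOp, symmOp, ← integral_sub (hint hf) (hint hg)]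
  congr 1 with z
  simp only [FracHarmonic.secondDiff, smul_eq_mul]
  ring

/-- The part of the heat kernel near the origin contributes nothing, being an admissible test
function for the equation. -/
lemma symmOp_shiftIntegral_gauss_eq (hs0 : 0 < s) (hs1 : s < 1) (hΩ : IsOpen Ω)
    (hu : Measurable u) (hM : ∀ x, |u x| ≤ M) (hharm : ∀ x ∈ Ω, IsFracHarmonicAt s u x)
    (hx : closedBall x ζ.rOut ⊆ Ω) (ht : t ∈ Ioc (0 : ℝ) 1) :
    symmOp (fracKernel s) (shiftIntegral (gauss t) u) x =
      symmOp (fracKernel s) (shiftIntegral (fun w => (1 - ζ w) * gauss t w) u) x := by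
  obtain ⟨C, hC⟩ := exists_hasDerivBounds_shiftIntegral_gauss_of_ge ht.1 hu hM
  obtain ⟨D, hD⟩ := exists_hasDerivBounds_shiftIntegral_one_sub_mul_gauss ζ hu hM
  have hnear : symmOp (fracKernel s) (shiftIntegral (fun w => ζ w * gauss t w) u) x = 0 := by
    refine symmOp_shiftIntegral_eq_zero hs0 hs1 hΩ hu hM hharm
      (ζ.contDiff.mul (mod_cast contDiff_infty.1 (contDiff_gauss t) 2))
      ζ.hasCompactSupport.mul_right (fun w => mul_nonneg ζ.nonneg (gauss_pos ht.1 w).le)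
      fun y hy => hx ?_
    have := tsupport_mul_subset_left hy
    rw [ζ.tsupport_eq, mem_closedBall_zero_iff] at this
    simpa using this
  rw [shiftIntegral_contDiffBump_mul_gauss ζ ht.1 hu hM,
    (hC t le_rfl).symmOp_fracKernel_sub hs0 hs1 (hD t ht)] at hnear
  exact sub_eq_zero.1 hnear

lemma integrableOn_rpow_sub_one (hs : 0 < s) :
    IntegrableOn (fun t : ℝ => t ^ (s - 1)) (Ioc 0 1) :=
  (intervalIntegrable_iff_integrableOn_Ioc_of_le zero_le_one).1
    (intervalIntegral.intervalIntegrable_rpow' (by linarith))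

variable (ζ) in
lemma contDiff_integral_symmOp_shiftIntegral (hs0 : 0 < s) (hs1 : s < 1)
    (hu : Measurable u) (hM : ∀ x, |u x| ≤ M) :
    ContDiff ℝ ∞ fun x => ∫ t in Ioc 0 1, t ^ (s - 1) *
      symmOp (fracKernel s) (shiftIntegral (fun w => (1 - ζ w) * gauss t w) u) x := by
  obtain ⟨C, hC⟩ := exists_hasDerivBounds_shiftIntegral_one_sub_mul_gauss ζ hu hM
  refine (HasDerivBounds.integral (μ := volume.restrict (Ioc 0 1))
    (B := fun k t => ‖t ^ (s - 1)‖ * (max (2 * C k) (C (k + 2)) * levyMass E s))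
    ((ae_restrict_iff' measurableSet_Ioc).2 (ae_of_all _ fun t ht =>
      ((hC t ht).symmOp_fracKernel hs0 hs1).const_smul _))
    (fun x => Measurable.aestronglyMeasurable ?_)
    fun k => (integrableOn_rpow_sub_one hs0).norm.mul_const _).contDiff
  refine Measurable.fun_smul ?_ (measurable_symmOp_shiftIntegral_mul_gauss
    (measurable_const.sub ζ.continuous.measurable) hu x)
  fun_prop

lemma exists_integrableOn_abs_sub_shiftIntegral_gauss_le (hs0 : 0 < s) (hs1 : s < 1)
    (hu : Measurable u) (hM : ∀ x, |u x| ≤ M) (x : E) {τ : ℝ} (hτ : 0 < τ) :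
    ∃ b : ℝ → ℝ, IntegrableOn (fun r => r ^ (-1 - s) * b r) (Ioi 0) ∧
      ∀ t ≥ τ, ∀ r > 0,
        |shiftIntegral (gauss t) u x - shiftIntegral (gauss (t + r)) u x| ≤ b r := by
  obtain ⟨C, hC⟩ := exists_hasDerivBounds_shiftIntegral_gauss_of_ge hτ hu hM
  refine ⟨fun r => max (2 * C 0) (C 2) * ∫ z : E, min 1 (‖z‖ ^ 2) * gauss r z, ?_,
    fun t ht r hr => abs_sub_shiftIntegral_gauss_le hr (hτ.trans_le ht) hu hM
      ((hC t ht).norm_secondDiff_le x)⟩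
  simp_rw [mul_left_comm _ (max _ _)]
  exact (integrableOn_rpow_mul_integral_min_norm_sq_mul_gauss hs0 hs1).const_mul _

lemma marchaud_shiftIntegral_gauss_eq (hs0 : 0 < s) (hs1 : s < 1) (hΩ : IsOpen Ω)
    (hu : Measurable u) (hM : ∀ x, |u x| ≤ M) (hharm : ∀ x ∈ Ω, IsFracHarmonicAt s u x)
    (hx : closedBall x ζ.rOut ⊆ Ω) (ht : t ∈ Ioc (0 : ℝ) 1) :
    marchaud s (fun t => shiftIntegral (gauss t) u x) t = mixtureConst E s *
      symmOp (fracKernel s) (shiftIntegral (fun w => (1 - ζ w) * gauss t w) u) x := by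
  obtain ⟨C, hC⟩ := exists_hasDerivBounds_shiftIntegral_gauss_of_ge ht.1 hu hM
  rw [← mixtureConst_mul_symmOp_shiftIntegral_gauss hs0 hs1 ht.1 hu hM
    ((hC t le_rfl).norm_secondDiff_le x),
    symmOp_shiftIntegral_gauss_eq hs0 hs1 hΩ hu hM hharm hx ht]

lemma integrableOn_rpow_mul_symmOp_shiftIntegral (hs0 : 0 < s) (hs1 : s < 1) (hu : Measurable u)
    (hM : ∀ x, |u x| ≤ M) (ζ : ContDiffBump (0 : E)) (x : E) :
    IntegrableOn (fun t => t ^ (s - 1) *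
      symmOp (fracKernel s) (shiftIntegral (fun w => (1 - ζ w) * gauss t w) u) x) (Ioc 0 1) := by
  obtain ⟨C, hC⟩ := exists_hasDerivBounds_shiftIntegral_one_sub_mul_gauss ζ hu hM
  exact (integrableOn_rpow_sub_one hs0).mul_bdd
    (measurable_symmOp_shiftIntegral_mul_gauss (measurable_const.sub ζ.continuous.measurable)
      hu x).aestronglyMeasurable
    ((ae_restrict_iff' measurableSet_Ioc).2 (ae_of_all _ fun t ht =>
      ((hC t ht).symmOp_fracKernel hs0 hs1).norm_apply_le x))

lemma mul_eq_integral_add_integral_of_isFracHarmonicAt (hs0 : 0 < s) (hs1 : s < 1) (hΩ : IsOpen Ω)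
    (hu : Measurable u) (hM : ∀ x, |u x| ≤ M) (hharm : ∀ x ∈ Ω, IsFracHarmonicAt s u x)
    (hx : closedBall x ζ.rOut ⊆ Ω) :
    (∫ v in Ioi 0, v ^ (-s) / (1 + v)) * u x =
      (∫ v in Ioi 0, v ^ (-s) / (1 + v) * shiftIntegral (gauss (1 + v)) u x) +
        s * mixtureConst E s * ∫ t in Ioc 0 1, t ^ (s - 1) *
          symmOp (fracKernel s) (shiftIntegral (fun w => (1 - ζ w) * gauss t w) u) x := by
  have hmarchaud : EqOn
      (fun t => t ^ (s - 1) * marchaud s (fun t => shiftIntegral (gauss t) u x) t)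
      (fun t => mixtureConst E s * (t ^ (s - 1) *
        symmOp (fracKernel s) (shiftIntegral (fun w => (1 - ζ w) * gauss t w) u) x))
      (Ioc 0 1) := fun t ht => by
    dsimp only
    rw [marchaud_shiftIntegral_gauss_eq hs0 hs1 hΩ hu hM hharm hx ht, mul_left_comm]
  have hcont : ContinuousAt u x :=
    (continuousOn_of_isFracHarmonicAt hs0 hs1 hu hM hΩ hharm).continuousAt
      (hΩ.mem_nhds (hx (mem_closedBall_self ζ.rOut_pos.le)))
  rw [mul_integral_eq_add_integral_marchaud hs0 hs1 (measurable_shiftIntegral_gauss_apply hu x)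
    (fun t ht => abs_shiftIntegral_gauss_le ht hM x) (tendsto_shiftIntegral_gauss hu hM hcont)
    (IntegrableOn.congr_fun ((integrableOn_rpow_mul_symmOp_shiftIntegral hs0 hs1 hu hM ζ
      x).const_mul _) hmarchaud.symm measurableSet_Ioc)
    fun τ hτ => ?_, setIntegral_congr_fun measurableSet_Ioc hmarchaud, integral_const_mul,
    mul_assoc s]
  obtain ⟨b, hb, hle⟩ := exists_integrableOn_abs_sub_shiftIntegral_gauss_le hs0 hs1 hu hM x hτ
  exact ⟨b, hb, fun t ht => hle t ht.1.le⟩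

theorem contDiffOn_of_isFracHarmonicAt (hs0 : 0 < s) (hs1 : s < 1) (hΩ : IsOpen Ω)
    (hu : Measurable u) (hM : ∀ x, |u x| ≤ M) (hharm : ∀ x ∈ Ω, IsFracHarmonicAt s u x) :
    ContDiffOn ℝ ∞ u Ω := by
  intro x₀ hx₀
  obtain ⟨ρ, hρ, hball⟩ := nhds_basis_closedBall.mem_iff.1 (hΩ.mem_nhds hx₀)
  let ζ : ContDiffBump (0 : E) := ⟨ρ / 4, ρ / 2, by positivity, by linarith⟩
  have hsub : ∀ x ∈ ball x₀ (ρ / 2), closedBall x ζ.rOut ⊆ Ω := fun x hx =>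
    (closedBall_subset_closedBall' (by
      linarith [mem_ball.1 hx, show ζ.rOut = ρ / 2 from rfl])).trans hball
  have hκ := (integral_rpow_neg_div_one_add_pos hs0 hs1).ne'
  have hsmooth := (contDiff_const (c := (∫ v in Ioi (0 : ℝ), v ^ (-s) / (1 + v))⁻¹)).mul
    ((contDiff_integral_shiftIntegral_gauss hs0 hs1 hu hM).add
      ((contDiff_const (c := s * mixtureConst E s)).mul
        (contDiff_integral_symmOp_shiftIntegral ζ hs0 hs1 hu hM)))
  refine (hsmooth.contDiffAt.congr_of_eventuallyEq ?_).contDiffWithinAt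
  filter_upwards [ball_mem_nhds x₀ (half_pos hρ)] with x hx
  rw [← mul_eq_integral_add_integral_of_isFracHarmonicAt hs0 hs1 hΩ hu hM hharm (hsub x hx),
    inv_mul_cancel_left₀ hκ]

end Representation

section Euclidean

variable {n : ℕ} {s : ℝ} {u : EuclideanSpace ℝ (Fin n) → ℝ} {x : EuclideanSpace ℝ (Fin n)}

lemma setIntegral_eq_jumpOp_truncKernel (s ε : ℝ) (u : EuclideanSpace ℝ (Fin n) → ℝ)
    (x : EuclideanSpace ℝ (Fin n)) :
    ∫ y in {y | ε < dist y x}, (u x - u y) / dist x y ^ ((n : ℝ) + 2 * s) =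
      jumpOp (truncKernel s ε) u x := by
  have hmeas : MeasurableSet {y | ε < dist y x} := measurableSet_lt (by fun_prop) (by fun_prop)
  rw [← integral_indicator hmeas, ← integral_add_left_eq_self _ x, jumpOp]
  congr 1 with z
  have hkernel : fracKernel s z = (‖z‖ ^ ((n : ℝ) + 2 * s))⁻¹ := by
    rw [fracKernel, finrank_euclideanSpace_fin, Real.rpow_neg (norm_nonneg z)]
  by_cases hz : ε < ‖z‖ <;> simp [truncKernel, hz, hkernel, div_eq_mul_inv]

lemma isFracHarmonicAt_of_fracLapEq_zero (hs0 : 0 < s) (hs1 : s < 1) (h : fracLapEq n s u x 0) :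
    IsFracHarmonicAt s u x := by
  have : 0 < Real.Gamma (s + n / 2) := Real.Gamma_pos_of_pos (by positivity)
  have : 0 < Real.Gamma (1 - s) := Real.Gamma_pos_of_pos (sub_pos.2 hs1)
  have hconst : 2 ^ (2 * s) * s * Real.Gamma (s + n / 2) /
      (Real.pi ^ ((n : ℝ) / 2) * Real.Gamma (1 - s)) ≠ 0 := by positivity
  simp_rw [fracLapEq, setIntegral_eq_jumpOp_truncKernel] at h
  simpa only [IsFracHarmonicAt, mul_zero, inv_mul_cancel_left₀ hconst] using h.const_mul
    (2 ^ (2 * s) * s * Real.Gamma (s + n / 2) /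
      (Real.pi ^ ((n : ℝ) / 2) * Real.Gamma (1 - s)))⁻¹

end Euclidean

end FracHarmonic

theorem balayage_general
    (n : ℕ) (hn : 0 < n) (s : ℝ) (hs : s ∈ Set.Ioo (0 : ℝ) 1)
    (u : EuclideanSpace ℝ (Fin n) → ℝ)
    (hbdd : ∃ M, ∀ x, |u x| ≤ M) (hmeas : Measurable u)
    (Ω : Set (EuclideanSpace ℝ (Fin n))) (hΩ : IsOpen Ω)
    (hharm : ∀ x ∈ Ω, fracLapEq n s u x 0) :
    ContDiffOn ℝ (⊤ : ℕ∞) u Ω := by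
  obtain ⟨M, hM⟩ := hbdd
  have : Nonempty (Fin n) := ⟨⟨0, hn⟩⟩
  exact FracHarmonic.contDiffOn_of_isFracHarmonicAt hs.1 hs.2 hΩ hmeas hM fun x hx =>
    FracHarmonic.isFracHarmonicAt_of_fracLapEq_zero hs.1 hs.2 (hharm x hx)

/-- **Balayage (interior smoothness of s-harmonic functions).** If `u` is bounded and
measurable and `(−Δ)^s u = 0` on the ball `B_R(x_c)`, then `u` is `C^∞` on
`B_{R/2}(x_c)`. -/
theorem balayage
    (n : ℕ) (hn : 0 < n) (s : ℝ) (hs : s ∈ Set.Ioo (0 : ℝ) 1)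
    (u : EuclideanSpace ℝ (Fin n) → ℝ)
    (hbdd : ∃ M, ∀ x, |u x| ≤ M) (hmeas : Measurable u)
    (xc : EuclideanSpace ℝ (Fin n)) (R : ℝ) (hR : 0 < R)
    (hharm : ∀ x ∈ Metric.ball xc R, fracLapEq n s u x 0) :
    ContDiffOn ℝ (⊤ : ℕ∞) u (Metric.ball xc (R / 2)) := by
  exact (balayage_general n hn s hs u hbdd hmeas _ isOpen_ball hharm).mono
    (ball_subset_ball (half_le_self hR.le))
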